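/- For the exponential random graph model with parameter β in the subcritical region, there exists a constant C > 0, depending only on β₁,…,β_k and H₁,…,H_k, such that for all n ≥ 2 the normalized number of edges W_n satisfies d_Kol(W_n, Z) = sup_{x∈ℝ} |P(W_n ≤ x) − P(Z ≤ x)| ≤ C n^{−1/4}, where Z is a standard normal random variable. -/

import Mathlib

open MeasureTheory ProbabilityTheory Real Finset

noncomputable section

/-- The index set `I = {(i,j) : 1 ≤ i < j ≤ n}` of potential edges on `n` labeled vertices. -/
def EdgeIdx (n : ℕ) : Type := {p : Fin n × Fin n // p.1 < p.2}

instance (n : ℕ) : Fintype (EdgeIdx n) := by unfold EdgeIdx; infer_instance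
instance (n : ℕ) : DecidableEq (EdgeIdx n) := by unfold EdgeIdx; infer_instance

/-- Adjacency of the graph `G_y` encoded by the edge-indicator vector `y`. -/
def yAdj {n : ℕ} (y : EdgeIdx n → Bool) (a b : Fin n) : Bool :=
  if h : a < b then y ⟨(a, b), h⟩ else if h' : b < a then y ⟨(b, a), h'⟩ else false

/-- The number of edges of a graph `H`. -/
def eCount {V : Type} [Fintype V] (H : SimpleGraph V) : ℕ :=
  Nat.card H.edgeSet

/-- `|Hom(H, G_y)|`: the number of injective maps from the vertex set of `H` to `Fin n`
mapping every edge of `H` to an edge of `G_y`. -/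
def homCount {V : Type} [Fintype V] {n : ℕ} (H : SimpleGraph V) (y : EdgeIdx n → Bool) : ℕ :=
  Nat.card {φ : V → Fin n //
    Function.Injective φ ∧ ∀ a b, H.Adj a b → yAdj y (φ a) (φ b) = true}

/-- `|Hom(H, G_y, s)|`: the number of pairs `(φ, (u, v))` where `φ` is injective, `(u, v)` is
an ordered pair of adjacent vertices of `H` with `{φ u, φ v} = s`, and every edge of `H` other
than `{u, v}` is mapped by `φ` to an edge of `G_y` (regardless of whether the edge `s` is
present in `G_y`). -/
def homCountAt {V : Type} [Fintype V] {n : ℕ} (H : SimpleGraph V) (y : EdgeIdx n → Bool)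
    (s : EdgeIdx n) : ℕ :=
  Nat.card {t : (V → Fin n) × V × V //
    Function.Injective t.1 ∧ H.Adj t.2.1 t.2.2 ∧
    Sym2.mk (t.1 t.2.1, t.1 t.2.2) = Sym2.mk (s.1.1, s.1.2) ∧
    ∀ a b, H.Adj a b → Sym2.mk (a, b) ≠ Sym2.mk (t.2.1, t.2.2) →
      yAdj y (t.1 a) (t.1 b) = true}

section ERGM

variable {k : ℕ} (β : Fin (k + 1) → ℝ) (v : Fin (k + 1) → ℕ)
  (H : ∀ j : Fin (k + 1), SimpleGraph (Fin (v j)))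

/-- The (unnormalized) ERGM weight `exp (Σ_j β_j n^{2−v_j} |Hom(H_j, G_y)|)`. -/
def ergmWeight (n : ℕ) (y : EdgeIdx n → Bool) : ℝ :=
  Real.exp (∑ j, β j * (n : ℝ) ^ ((2 : ℤ) - (v j : ℤ)) * (homCount (H j) y : ℝ))

/-- The ERGM normalizing constant. -/
def ergmZ (n : ℕ) : ℝ := ∑ y : EdgeIdx n → Bool, ergmWeight β v H n y

/-- The ERGM probability of the configuration `y`. -/
def ergmProb (n : ℕ) (y : EdgeIdx n → Bool) : ℝ := ergmWeight β v H n y / ergmZ β v H n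

/-- Expectation of `G(Y)` under the ERGM. -/
def ergmExp (n : ℕ) (G : (EdgeIdx n → Bool) → ℝ) : ℝ :=
  ∑ y : EdgeIdx n → Bool, ergmProb β v H n y * G y

/-- Variance of `G(Y)` under the ERGM. -/
def ergmVar (n : ℕ) (G : (EdgeIdx n → Bool) → ℝ) : ℝ :=
  ergmExp β v H n (fun y => (G y - ergmExp β v H n G) ^ 2)

/-- The total number of edges of `G_y`. -/
def edgeSum {n : ℕ} (y : EdgeIdx n → Bool) : ℝ :=
  ∑ s : EdgeIdx n, (if y s then (1 : ℝ) else 0)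

/-- `Φ_β(a) = Σ_j β_j e_j a^{e_j − 1}`. -/
def PhiFn : ℝ → ℝ := fun a =>
  ∑ j, β j * (eCount (H j) : ℝ) * a ^ (eCount (H j) - 1)

/-- `φ_β(a) = e^{2Φ_β(a)} / (e^{2Φ_β(a)} + 1)`. -/
def phiFn : ℝ → ℝ := fun a =>
  Real.exp (2 * PhiFn β v H a) / (Real.exp (2 * PhiFn β v H a) + 1)

/-- `σ_n² = N p (1−p) / (1 − 2 p (1−p) Φ_β'(p))` with `N = n(n−1)/2`. -/
def sigmaSq (p : ℝ) (n : ℕ) : ℝ :=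
  ((n : ℝ) * ((n : ℝ) - 1) / 2) * p * (1 - p) /
    (1 - 2 * p * (1 - p) * deriv (PhiFn β v H) p)

/-- `μ_n = E Σ_{s ∈ I} Y_s`. -/
def muN (n : ℕ) : ℝ := ergmExp β v H n (edgeSum)

/-- The standardized number of edges `W_n`. -/
def Wn (p : ℝ) (n : ℕ) (y : EdgeIdx n → Bool) : ℝ :=
  (edgeSum y - muN β v H n) / Real.sqrt (sigmaSq β v H p n)

end ERGM

/-!
The ERGM is the Gibbs measure of a polynomial Hamiltonian on the Boolean cube. Since the
coefficients of the nonlinear monomials are nonnegative, the measure satisfies the FKG lattice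
condition, and the local fields (the log-odds of an edge given all others) are monotone. Under the
Bernoulli product measure with density `q` a local field has mean `2 Φ_β(q) + O(1/n)`.

The local fields concentrate by a bootstrap. On the down-set where all conditional edge
probabilities are at most `q`, the Gibbs measure has an antitone density with respect to the
Bernoulli measure with density `q`, so a local field exceeds `2 Φ_β(q) + O(1/n)` by `d`
only with probability `exp(-c d² n)`; elsewhere on that set the conditional probabilities are at
most `φ_β(q) + O(d + 1/n)`. As `φ_β` contracts towards `p`, `O(n)` rounds from above and from
below bring all conditional probabilities and local fields within `O(ε)` of their mean-field
values, outside an up-set and a down-set of superpolynomially small mass, where `ε = n^{-1/4}`.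

Outside these sets the gradient of `Σ_s E[Y_s | Y_t, t ≠ s]` along each edge of the cube is
`θ + O(ε)` with `θ = 2 p (1 - p) Φ_β'(p) < 1`. Under an FKG measure a pointwise bound on the
gradients bounds the variance, so the remainder of the linearization with slope `θ` has standard
deviation `O(ε n)`. With `S` the number of edges, integration by parts turns this into Stein's
identity `(1 - θ) E[(S - E S) f(S)] ≈ p (1 - p) Σ_s E[f(S^{s,1}) - f(S^{s,0})]`, where `S^{s,b}` is
computed with `Y_s` set to `b`; with the solution `f` of Stein's equation for a half-line it gives
a bound of order `ε` on the Kolmogorov distance. The jump of `f'` costs the probability that `S` is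
within `O(1)` of the endpoint, which the same identity bounds when `f` is a truncated linear
function.
-/

/-! # Finite probability spaces -/

namespace FiniteProb

variable {Ω : Type*} [Fintype Ω] {μ : Ω → ℝ}

/-- The mean of `F` under the weights `μ`; these form a probability mass function when
`μ ∈ stdSimplex ℝ Ω`. -/
def mean (μ F : Ω → ℝ) : ℝ := ∑ x, μ x * F x

/-- The variance of `F` under the weights `μ`. -/
def var (μ F : Ω → ℝ) : ℝ := mean μ fun x => (F x - mean μ F) ^ 2

/-- The total weight of `B` under the weights `μ`. -/
def mass (μ : Ω → ℝ) (B : Set Ω) : ℝ := mean μ (B.indicator 1)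

theorem mean_add (F G : Ω → ℝ) : mean μ (fun x => F x + G x) = mean μ F + mean μ G := by
  simp [mean, mul_add, Finset.sum_add_distrib]

theorem mean_sub (F G : Ω → ℝ) : mean μ (fun x => F x - G x) = mean μ F - mean μ G := by
  simp [mean, mul_sub, Finset.sum_sub_distrib]

theorem mean_const_mul (c : ℝ) (F : Ω → ℝ) : mean μ (fun x => c * F x) = c * mean μ F := by
  simp only [mean, Finset.mul_sum, mul_left_comm]

theorem mean_sum {κ : Type*} (T : Finset κ) (F : κ → Ω → ℝ) :
    mean μ (fun x => ∑ i ∈ T, F i x) = ∑ i ∈ T, mean μ (F i) := by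
  simp only [mean, Finset.mul_sum]
  exact Finset.sum_comm

theorem mean_const (hμ : ∑ x, μ x = 1) (c : ℝ) : mean μ (fun _ => c) = c := by
  simp [mean, ← Finset.sum_mul, hμ]

theorem mean_comp_equiv {Ω' : Type*} [Fintype Ω'] (e : Ω' ≃ Ω) (F : Ω → ℝ) :
    mean (μ ∘ e) (F ∘ e) = mean μ F :=
  e.sum_comp fun x => μ x * F x

theorem mass_comp_equiv {Ω' : Type*} [Fintype Ω'] (e : Ω' ≃ Ω) (B : Set Ω) :
    mass (μ ∘ e) (e ⁻¹' B) = mass μ B :=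
  mean_comp_equiv e (B.indicator 1)

theorem sum_indicator_eq_mass (μ : Ω → ℝ) (B : Set Ω) : ∑ x, B.indicator μ x = mass μ B := by
  classical simp [mass, mean, Set.indicator_apply]

section Nonneg

variable (hμ : ∀ x, 0 ≤ μ x)
include hμ

theorem mean_mono {F G : Ω → ℝ} (h : ∀ x, F x ≤ G x) : mean μ F ≤ mean μ G :=
  Finset.sum_le_sum fun x _ => mul_le_mul_of_nonneg_left (h x) (hμ x)

theorem mean_nonneg {F : Ω → ℝ} (h : ∀ x, 0 ≤ F x) : 0 ≤ mean μ F :=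
  Finset.sum_nonneg fun x _ => mul_nonneg (hμ x) (h x)

theorem abs_mean_le (F : Ω → ℝ) : |mean μ F| ≤ mean μ fun x => |F x| := by
  refine (Finset.abs_sum_le_sum_abs _ _).trans_eq (Finset.sum_congr rfl fun x _ => ?_)
  rw [abs_mul, abs_of_nonneg (hμ x)]

theorem mean_mul_sq_le (F G : Ω → ℝ) :
    mean μ (fun x => F x * G x) ^ 2 ≤ mean μ (fun x => F x ^ 2) * mean μ (fun x => G x ^ 2) :=
  Finset.sum_sq_le_sum_mul_sum_of_sq_le_mul _
    (fun x _ => mul_nonneg (hμ x) (sq_nonneg _)) (fun x _ => mul_nonneg (hμ x) (sq_nonneg _))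
    fun x _ => by ring_nf; exact le_rfl

theorem var_nonneg (F : Ω → ℝ) : 0 ≤ var μ F :=
  mean_nonneg hμ fun _ => sq_nonneg _

theorem var_add_le (F G : Ω → ℝ) : var μ (fun x => F x + G x) ≤ 2 * var μ F + 2 * var μ G := by
  calc var μ (fun x => F x + G x)
      ≤ mean μ fun x => 2 * (F x - mean μ F) ^ 2 + 2 * (G x - mean μ G) ^ 2 :=
        mean_mono hμ fun x => by
          rw [mean_add]
          nlinarith only [sq_nonneg ((F x - mean μ F) - (G x - mean μ G))]
    _ = 2 * var μ F + 2 * var μ G := by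
        rw [mean_add, mean_const_mul, mean_const_mul, var, var]

theorem mass_nonneg (B : Set Ω) : 0 ≤ mass μ B :=
  mean_nonneg hμ fun _ => Set.indicator_nonneg (by simp) _

theorem mass_mono {B C : Set Ω} (h : B ⊆ C) : mass μ B ≤ mass μ C :=
  mean_mono hμ fun _ => Set.indicator_le_indicator_of_subset h (by simp) _

theorem mass_union_le (B C : Set Ω) : mass μ (B ∪ C) ≤ mass μ B + mass μ C := by
  rw [mass, mass, mass, ← mean_add]
  refine mean_mono hμ fun x => ?_
  by_cases hB : x ∈ B <;> by_cases hC : x ∈ C <;> simp [hB, hC]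

theorem mass_iUnion_le {κ : Type*} [Fintype κ] (B : κ → Set Ω) :
    mass μ (⋃ i, B i) ≤ ∑ i, mass μ (B i) := by
  simp only [mass]
  rw [← mean_sum]
  refine mean_mono hμ fun x => ?_
  have hnonneg (i : κ) : 0 ≤ (B i).indicator (1 : Ω → ℝ) x := Set.indicator_nonneg (by simp) _
  by_cases hx : x ∈ ⋃ i, B i
  · obtain ⟨i, hi⟩ := Set.mem_iUnion.1 hx
    calc (⋃ i, B i).indicator (1 : Ω → ℝ) x = (B i).indicator 1 x := by simp [hx, hi]
      _ ≤ _ := Finset.single_le_sum (fun i _ => hnonneg i) (Finset.mem_univ i)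
  · rw [Set.indicator_of_notMem hx]
    exact Finset.sum_nonneg fun i _ => hnonneg i

end Nonneg

section Simplex

variable (hμ : μ ∈ stdSimplex ℝ Ω)
include hμ

theorem mean_abs_le_sqrt (F : Ω → ℝ) : mean μ (fun x => |F x|) ≤ √(mean μ fun x => F x ^ 2) := by
  refine Real.le_sqrt_of_sq_le ?_
  simpa [mean_const hμ.2] using mean_mul_sq_le hμ.1 (fun x => |F x|) fun _ => 1

theorem var_eq (F : Ω → ℝ) : var μ F = mean μ (fun x => F x ^ 2) - mean μ F ^ 2 := by
  have hsq : (fun x => (F x - mean μ F) ^ 2) =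
      fun x => (F x ^ 2 - (2 * mean μ F) * F x) + mean μ F ^ 2 := by
    funext x; ring
  rw [var, hsq, mean_add, mean_sub, mean_const_mul, mean_const hμ.2]
  ring

theorem var_le_mean_sq (F : Ω → ℝ) : var μ F ≤ mean μ fun x => F x ^ 2 := by
  rw [var_eq hμ]
  exact sub_le_self _ (sq_nonneg _)

theorem mass_le_one (B : Set Ω) : mass μ B ≤ 1 := by
  rw [← mean_const hμ.2 1]
  exact mean_mono hμ.1 fun x => by by_cases hx : x ∈ B <;> simp [hx]

end Simplex

theorem var_const_mul (c : ℝ) (F : Ω → ℝ) : var μ (fun x => c * F x) = c ^ 2 * var μ F := by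
  simp only [var, mean_const_mul, ← mul_sub, mul_pow]

theorem mass_inter_le_exp (hμ : ∀ x, 0 ≤ μ x) {A : Set Ω} {F : Ω → ℝ} {m V d : ℝ} (hV : 0 < V)
    (hd : 0 ≤ d)
    (hmgf : ∀ l, 0 ≤ l → mean μ (A.indicator fun x => Real.exp (l * F x)) ≤
      Real.exp (l * m + l ^ 2 * V)) :
    mass μ (A ∩ {x | m + d ≤ F x}) ≤ Real.exp (-(d ^ 2 / (4 * V))) := by
  set l := d / (2 * V) with hl
  have hl0 : 0 ≤ l := by positivity
  have hpt (x : Ω) : (A ∩ {x | m + d ≤ F x}).indicator (1 : Ω → ℝ) x ≤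
      Real.exp (-(l * (m + d))) * A.indicator (fun x => Real.exp (l * F x)) x := by
    by_cases hx : x ∈ A ∩ {x | m + d ≤ F x}
    · rw [Set.indicator_of_mem hx, Set.indicator_of_mem hx.1, ← Real.exp_add, Pi.one_apply,
        Real.one_le_exp_iff]
      linarith only [mul_le_mul_of_nonneg_left hx.2 hl0]
    · rw [Set.indicator_of_notMem hx]
      exact mul_nonneg (Real.exp_pos _).le
        (Set.indicator_nonneg (fun x _ => (Real.exp_pos _).le) _)
  calc mass μ (A ∩ {x | m + d ≤ F x})
      ≤ Real.exp (-(l * (m + d))) * mean μ (A.indicator fun x => Real.exp (l * F x)) := by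
        rw [← mean_const_mul]
        exact mean_mono hμ hpt
    _ ≤ Real.exp (-(l * (m + d))) * Real.exp (l * m + l ^ 2 * V) :=
        mul_le_mul_of_nonneg_left (hmgf l hl0) (Real.exp_pos _).le
    _ = Real.exp (-(d ^ 2 / (4 * V))) := by
        rw [← Real.exp_add, hl]
        congr 1
        field_simp
        ring

/-- A probability mass function on a finite lattice satisfying the FKG lattice condition. -/
structure IsFKG {α : Type*} [Fintype α] [Lattice α] (μ : α → ℝ) : Prop where
  mem_stdSimplex : μ ∈ stdSimplex ℝ α
  mul_le_inf_mul_sup : ∀ x y, μ x * μ y ≤ μ (x ⊓ y) * μ (x ⊔ y)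

namespace IsFKG

variable {α : Type*} [Fintype α] [DistribLattice α] {μ F G : α → ℝ} (hμ : IsFKG μ)
include hμ

theorem mean_mul_mean_le (hF : Monotone F) (hG : Monotone G) :
    mean μ F * mean μ G ≤ mean μ fun x => F x * G x := by
  -- Mathlib's FKG inequality is for nonnegative functions, so both are shifted by a constant.
  have exists_shift (F : α → ℝ) : ∃ c, ∀ x, 0 ≤ F x - c :=
    ⟨-∑ y, |F y|, fun x => by
      linarith [neg_abs_le (F x),
        Finset.single_le_sum (fun y _ => abs_nonneg (F y)) (Finset.mem_univ x)]⟩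
  obtain ⟨a, ha⟩ := exists_shift F
  obtain ⟨b, hb⟩ := exists_shift G
  have h : mean μ (fun x => F x - a) * mean μ (fun x => G x - b) ≤
      mean μ fun x => (F x - a) * (G x - b) := by
    simpa only [mean, hμ.mem_stdSimplex.2, one_mul] using
      fkg (fun x => F x - a) (fun x => G x - b) μ hμ.mem_stdSimplex.1 ha hb
        (fun x y h => sub_le_sub_right (hF h) _) (fun x y h => sub_le_sub_right (hG h) _)
        hμ.mul_le_inf_mul_sup
  have hmul : (fun x => (F x - a) * (G x - b)) =
      fun x => ((F x * G x - b * F x) - a * G x) + a * b := by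
    funext x; ring
  simp only [hmul, mean_sub, mean_add, mean_const_mul, mean_const hμ.mem_stdSimplex.2] at h
  linarith

theorem mean_mul_le_mean_mul_mean (hF : Antitone F) (hG : Monotone G) :
    mean μ (fun x => F x * G x) ≤ mean μ F * mean μ G := by
  have h := hμ.mean_mul_mean_le (F := fun x => -1 * F x) (fun x y h => by simpa using hF h) hG
  simp only [mul_assoc, mean_const_mul] at h
  linarith

end IsFKG

end FiniteProb

/-! # Functions on the Boolean cube -/

namespace BoolCube

open FiniteProb Function

variable {ι : Type*}

section DiscDeriv

variable [DecidableEq ι]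

/-- The discrete derivative of `F` in the coordinate `s`. -/
def discDeriv (F : (ι → Bool) → ℝ) (s : ι) (x : ι → Bool) : ℝ :=
  F (update x s true) - F (update x s false)

theorem discDeriv_add (F G : (ι → Bool) → ℝ) (s : ι) (x : ι → Bool) :
    discDeriv (fun x => F x + G x) s x = discDeriv F s x + discDeriv G s x := by
  simp only [discDeriv]; ring

theorem discDeriv_sub (F G : (ι → Bool) → ℝ) (s : ι) (x : ι → Bool) :
    discDeriv (fun x => F x - G x) s x = discDeriv F s x - discDeriv G s x := by
  simp only [discDeriv]; ring

theorem discDeriv_const_mul (c : ℝ) (F : (ι → Bool) → ℝ) (s : ι) (x : ι → Bool) :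
    discDeriv (fun x => c * F x) s x = c * discDeriv F s x :=
  (mul_sub _ _ _).symm

theorem discDeriv_sum {κ : Type*} (T : Finset κ) (F : κ → (ι → Bool) → ℝ) (s : ι)
    (x : ι → Bool) : discDeriv (fun x => ∑ i ∈ T, F i x) s x = ∑ i ∈ T, discDeriv (F i) s x :=
  (Finset.sum_sub_distrib _ _).symm

theorem discDeriv_update (F : (ι → Bool) → ℝ) (s : ι) (x : ι → Bool) (b : Bool) :
    discDeriv F s (update x s b) = discDeriv F s x := by
  simp [discDeriv]

theorem discDeriv_comm (F : (ι → Bool) → ℝ) (s t : ι) (x : ι → Bool) :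
    discDeriv (discDeriv F s) t x = discDeriv (discDeriv F t) s x := by
  rcases eq_or_ne s t with rfl | h
  · rfl
  · simp only [discDeriv, update_comm h]
    ring

theorem update_false_le_update_true (x : ι → Bool) (s : ι) : update x s false ≤ update x s true :=
  update_le_update_iff.2 ⟨bot_le, fun _ _ => le_rfl⟩

theorem discDeriv_nonneg {F : (ι → Bool) → ℝ} (hF : Monotone F) (s : ι) (x : ι → Bool) :
    0 ≤ discDeriv F s x :=
  sub_nonneg.2 (hF (update_false_le_update_true x s))

theorem monotone_of_discDeriv_nonneg [Finite ι] {F : (ι → Bool) → ℝ}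
    (hF : ∀ s x, 0 ≤ discDeriv F s x) : Monotone F := by
  classical
  have := Fintype.ofFinite ι
  let _ : LocallyFiniteOrder (ι → Bool) := Fintype.toLocallyFiniteOrder
  refine (monotone_iff_forall_covBy F).2 fun x y hxy => ?_
  obtain ⟨s, hs, hne⟩ := Pi.covBy_iff.1 hxy
  obtain ⟨hxs, hys⟩ : x s = false ∧ y s = true := Bool.lt_iff.1 hs.lt
  have hx : update x s false = x := by rw [← hxs, update_eq_self]
  have hy : update x s true = y := by
    rw [update_eq_iff]
    exact ⟨hys.symm, hne⟩
  have := hF s x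
  rwa [discDeriv, hx, hy, sub_nonneg] at this

theorem antitone_of_discDeriv_nonpos [Finite ι] {F : (ι → Bool) → ℝ}
    (hF : ∀ s x, discDeriv F s x ≤ 0) : Antitone F := by
  have hneg : Monotone fun x => -1 * F x := monotone_of_discDeriv_nonneg fun s x => by
    rw [discDeriv_const_mul]
    linarith [hF s x]
  exact fun x y h => by simpa using hneg h

theorem update_true_eq_or_update_false_eq (x : ι → Bool) (s : ι) :
    (update x s true = x ∧ update x s false = update x s (!x s)) ∨
      (update x s false = x ∧ update x s true = update x s (!x s)) := by
  rcases hx : x s with _ | _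
  · exact .inr ⟨by rw [← hx, update_eq_self], rfl⟩
  · exact .inl ⟨by rw [← hx, update_eq_self], rfl⟩

theorem compl_update (x : ι → Bool) (s : ι) (b : Bool) : (update x s b)ᶜ = update xᶜ s (!b) := by
  ext t
  rcases eq_or_ne t s with rfl | h <;> simp [*]

theorem sum_update_true_add_update_false [Fintype ι] (G : (ι → Bool) → ℝ) (s : ι) :
    ∑ x, (G (update x s true) + G (update x s false)) = 2 * ∑ x, G x := by
  have hflip : Involutive fun x : ι → Bool => update x s (!x s) := fun x => by simp
  calc ∑ x, (G (update x s true) + G (update x s false))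
      = ∑ x, (G x + G (update x s (!x s))) := Finset.sum_congr rfl fun x _ => by
        rcases update_true_eq_or_update_false_eq x s with ⟨h, h'⟩ | ⟨h, h'⟩
        · rw [h, h']
        · rw [h, h', add_comm]
    _ = ∑ x, G x + ∑ x, G x := by
        rw [Finset.sum_add_distrib]
        exact congrArg _ (Equiv.sum_comp hflip.toPerm G)
    _ = 2 * ∑ x, G x := (two_mul _).symm

theorem var_le_var_of_abs_discDeriv_le [Fintype ι] {μ F G : (ι → Bool) → ℝ} (hμ : IsFKG μ)
    (h : ∀ s x, |discDeriv F s x| ≤ discDeriv G s x) : var μ F ≤ var μ G := by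
  have hadd : Monotone fun x => G x + F x := monotone_of_discDeriv_nonneg fun s x => by
    rw [discDeriv_add]
    linarith [(abs_le.1 (h s x)).1]
  have hsub : Monotone fun x => G x - F x := monotone_of_discDeriv_nonneg fun s x => by
    rw [discDeriv_sub]
    linarith [(abs_le.1 (h s x)).2]
  have hmul : (fun x => (G x + F x) * (G x - F x)) = fun x => G x ^ 2 - F x ^ 2 := by
    funext x; ring
  have hcov := hμ.mean_mul_mean_le hadd hsub
  rw [hmul, mean_sub, mean_add, mean_sub] at hcov
  rw [var_eq hμ.mem_stdSimplex, var_eq hμ.mem_stdSimplex]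
  linarith

end DiscDeriv

section Monomial

/-- The monomial `∏ t ∈ T, x t`, i.e. the indicator that all coordinates in `T` are on. -/
def monomial (T : Finset ι) (x : ι → Bool) : ℝ := ∏ t ∈ T, if x t then 1 else 0

theorem monomial_eq_ite (T : Finset ι) (x : ι → Bool) :
    monomial T x = if ∀ t ∈ T, x t = true then 1 else 0 := by
  simp [monomial, Finset.prod_ite_zero]

theorem monomial_nonneg (T : Finset ι) (x : ι → Bool) : 0 ≤ monomial T x := by
  rw [monomial_eq_ite]; split_ifs <;> norm_num

theorem monomial_le_one (T : Finset ι) (x : ι → Bool) : monomial T x ≤ 1 := by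
  rw [monomial_eq_ite]; split_ifs <;> norm_num

theorem monomial_top (T : Finset ι) : monomial T ⊤ = 1 := by
  simp [monomial]

theorem monotone_monomial (T : Finset ι) : Monotone (monomial T) := fun x y hxy =>
  Finset.prod_le_prod (fun t _ => by split_ifs <;> norm_num) fun t _ => by
    have := hxy t
    cases hx : x t <;> cases hy : y t <;> simp_all [Bool.le_iff_imp]

theorem monomial_add_monomial_le (T : Finset ι) (x y : ι → Bool) :
    monomial T x + monomial T y ≤ monomial T (x ⊓ y) + monomial T (x ⊔ y) := by
  have hy := monotone_monomial T (le_sup_right : y ≤ x ⊔ y)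
  by_cases hx : ∀ t ∈ T, x t = true
  · have hx1 : monomial T x = 1 := by rw [monomial_eq_ite, if_pos hx]
    have hsup : monomial T (x ⊔ y) = 1 :=
      (monomial_le_one T _).antisymm (hx1 ▸ monotone_monomial T le_sup_left)
    have hinf : monomial T (x ⊓ y) = monomial T y :=
      Finset.prod_congr rfl fun t ht => by simp [hx t ht]
    linarith
  · have hx0 : monomial T x = 0 := by rw [monomial_eq_ite, if_neg hx]
    linarith [monomial_nonneg T (x ⊓ y)]

theorem monomial_inf_add_monomial_sup_of_card_le_one {T : Finset ι} (hT : T.card ≤ 1)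
    (x y : ι → Bool) :
    monomial T (x ⊓ y) + monomial T (x ⊔ y) = monomial T x + monomial T y := by
  rcases Nat.le_one_iff_eq_zero_or_eq_one.1 hT with h | h
  · simp [Finset.card_eq_zero.1 h, monomial]
  · obtain ⟨t, rfl⟩ := Finset.card_eq_one.1 h
    cases hx : x t <;> cases hy : y t <;> simp [monomial, hx, hy]

theorem discDeriv_monomial [DecidableEq ι] (T : Finset ι) (s : ι) (x : ι → Bool) :
    discDeriv (monomial T) s x = if s ∈ T then monomial (T.erase s) x else 0 := by
  have hof_notMem {T : Finset ι} (h : s ∉ T) (b : Bool) :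
      monomial T (update x s b) = monomial T x :=
    Finset.prod_congr rfl fun t ht => by rw [update_of_ne (ne_of_mem_of_not_mem ht h)]
  have hof_mem (h : s ∈ T) (b : Bool) :
      monomial T (update x s b) = (if b then 1 else 0) * monomial (T.erase s) x := by
    rw [monomial, ← Finset.mul_prod_erase _ _ h, update_self, ← monomial,
      hof_notMem (Finset.notMem_erase s T)]
  split_ifs with h
  · simp [discDeriv, hof_mem h]
  · simp [discDeriv, hof_notMem h]

/-- The indicator that the coordinate `s` is on. -/
def coord (s : ι) (x : ι → Bool) : ℝ := if x s then 1 else 0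

theorem coord_nonneg (s : ι) (x : ι → Bool) : 0 ≤ coord s x := by
  rw [coord]; split_ifs <;> norm_num

theorem coord_le_one (s : ι) (x : ι → Bool) : coord s x ≤ 1 := by
  rw [coord]; split_ifs <;> norm_num

theorem discDeriv_coord [DecidableEq ι] (s t : ι) (x : ι → Bool) :
    discDeriv (coord s) t x = if s = t then 1 else 0 := by
  by_cases h : s = t
  · subst h; simp [discDeriv, coord]
  · simp [discDeriv, coord, h]

/-- The number of coordinates that are on. -/
def size [Fintype ι] (x : ι → Bool) : ℝ := ∑ s, coord s x

theorem size_nonneg [Fintype ι] (x : ι → Bool) : 0 ≤ size x :=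
  Finset.sum_nonneg fun s _ => coord_nonneg s x

theorem size_le_card [Fintype ι] (x : ι → Bool) : size x ≤ Fintype.card ι := by
  simpa [size] using Finset.sum_le_card_nsmul Finset.univ _ 1 fun s _ => coord_le_one s x

theorem discDeriv_size [Fintype ι] [DecidableEq ι] (s : ι) (x : ι → Bool) :
    discDeriv size s x = 1 :=
  (discDeriv_sum _ _ s x).trans (by simp [discDeriv_coord])

end Monomial

end BoolCube

/-! # Bernoulli product measures -/

theorem exp_le_add_exp_sq (x : ℝ) : Real.exp x ≤ x + Real.exp (x ^ 2) := by
  have hsq := Real.add_one_le_exp (x ^ 2)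
  rcases le_or_gt |x| 1 with h | h
  · linarith [(abs_le.1 (Real.abs_exp_sub_one_sub_id_le h)).2]
  · rcases lt_abs.1 h with h | h
    · have : Real.exp x ≤ Real.exp (x ^ 2) := Real.exp_le_exp.2 (by nlinarith)
      linarith
    · have : Real.exp x ≤ 1 := Real.exp_le_one_iff.2 (by linarith)
      nlinarith

theorem bernoulli_exp_le {q : ℝ} (hq : q ∈ Set.Icc (0 : ℝ) 1) (u w : ℝ) :
    q * Real.exp u + (1 - q) * Real.exp w ≤
      Real.exp (q * u + (1 - q) * w) * Real.exp ((u - w) ^ 2) := by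
  have hexp {a : ℝ} (ha : a ^ 2 ≤ 1) :
      Real.exp (a * (u - w)) ≤ a * (u - w) + Real.exp ((u - w) ^ 2) := by
    refine (exp_le_add_exp_sq _).trans (add_le_add_right (Real.exp_le_exp.2 ?_) _)
    rw [mul_pow]
    exact mul_le_of_le_one_left (sq_nonneg _) ha
  have hu := mul_le_mul_of_nonneg_left
    (hexp (a := 1 - q) (by nlinarith only [hq.1, hq.2])) hq.1
  have hw := mul_le_mul_of_nonneg_left
    (hexp (a := -q) (by nlinarith only [hq.1, hq.2])) (sub_nonneg.2 hq.2)
  calc q * Real.exp u + (1 - q) * Real.exp w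
      = Real.exp (q * u + (1 - q) * w) *
          (q * Real.exp ((1 - q) * (u - w)) + (1 - q) * Real.exp (-q * (u - w))) := by
        rw [mul_add, mul_left_comm, mul_left_comm _ (1 - q), ← Real.exp_add, ← Real.exp_add]
        ring_nf
    _ ≤ Real.exp (q * u + (1 - q) * w) * Real.exp ((u - w) ^ 2) := by
        refine mul_le_mul_of_nonneg_left ?_ (Real.exp_pos _).le
        linarith only [hu, hw]

namespace BoolCube

open FiniteProb Function

variable {ι : Type*} [Fintype ι]

/-- The mass function of the product of Bernoulli measures with parameter `q`. -/
def prodBernoulli (q : ℝ) (x : ι → Bool) : ℝ := ∏ s, if x s then q else 1 - q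

theorem prodBernoulli_pos {q : ℝ} (hq : q ∈ Set.Ioo (0 : ℝ) 1) (x : ι → Bool) :
    0 < prodBernoulli q x :=
  Finset.prod_pos fun s _ => by split_ifs <;> linarith [hq.1, hq.2]

theorem prodBernoulli_compl (q : ℝ) (x : ι → Bool) :
    prodBernoulli q xᶜ = prodBernoulli (1 - q) x :=
  Finset.prod_congr rfl fun s _ => by cases h : x s <;> simp [h]

variable [DecidableEq ι]

theorem mean_prodBernoulli_compl (q : ℝ) (F : (ι → Bool) → ℝ) :
    mean (prodBernoulli (1 - q)) (fun x => F xᶜ) = mean (prodBernoulli q) F := by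
  rw [← mean_comp_equiv (compl_involutive (α := ι → Bool)).toPerm F]
  congr 1
  exact funext fun x => (prodBernoulli_compl q x).symm

theorem mean_prodBernoulli_one (F : (ι → Bool) → ℝ) : mean (prodBernoulli 1) F = F ⊤ := by
  have hind (x : ι → Bool) : prodBernoulli 1 x = if x = ⊤ then 1 else 0 := by
    simp [prodBernoulli, Finset.prod_ite_zero, funext_iff]
  simp [mean, hind]

theorem mean_prodBernoulli_zero (F : (ι → Bool) → ℝ) : mean (prodBernoulli 0) F = F ⊥ := by
  simpa [mean_prodBernoulli_one] using mean_prodBernoulli_compl 1 fun x => F xᶜ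

theorem mean_prodBernoulli_monomial (q : ℝ) (T : Finset ι) :
    mean (prodBernoulli q) (monomial T) = q ^ T.card := by
  calc ∑ x, prodBernoulli q x * monomial T x
      = ∑ x : ι → Bool,
          ∏ s, (if x s then q else 1 - q) * (if s ∈ T then if x s then 1 else 0 else 1) := by
        simp only [Finset.prod_mul_distrib, prodBernoulli, monomial, Finset.prod_ite_mem,
          Finset.univ_inter]
    _ = ∏ s : ι, ∑ b : Bool,
          (if b then q else 1 - q) * (if s ∈ T then if b then 1 else 0 else 1) := by
        rw [Finset.prod_univ_sum, Fintype.piFinset_univ]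
    _ = ∏ s : ι, if s ∈ T then q else 1 :=
        Finset.prod_congr rfl fun s _ => by by_cases hs : s ∈ T <;> simp [hs]
    _ = q ^ T.card := by simp [Finset.prod_ite_mem]

theorem sum_prodBernoulli (q : ℝ) : ∑ x : ι → Bool, prodBernoulli q x = 1 := by
  simpa [mean, monomial] using mean_prodBernoulli_monomial (ι := ι) q ∅

theorem isFKG_prodBernoulli {q : ℝ} (hq : q ∈ Set.Ioo (0 : ℝ) 1) :
    IsFKG (prodBernoulli (ι := ι) q) where
  mem_stdSimplex := ⟨fun x => (prodBernoulli_pos hq x).le, sum_prodBernoulli q⟩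
  mul_le_inf_mul_sup x y := by
    simp only [prodBernoulli, ← Finset.prod_mul_distrib]
    refine (Finset.prod_congr rfl fun s _ => ?_).le
    cases hx : x s <;> cases hy : y s <;> simp [hx, hy, mul_comm]

section BoundedDifferences

theorem prodBernoulli_update (q : ℝ) (s : ι) (x : ι → Bool) :
    (1 - q) * prodBernoulli q (update x s true) = q * prodBernoulli q (update x s false) := by
  have hprod (b : Bool) : prodBernoulli q (update x s b) =
      (if b then q else 1 - q) * ∏ t ∈ Finset.univ.erase s, if x t then q else 1 - q := by
    rw [prodBernoulli, ← Finset.mul_prod_erase _ _ (Finset.mem_univ s), update_self]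
    exact congrArg _ (Finset.prod_congr rfl fun t ht => by
      rw [update_of_ne (Finset.ne_of_mem_erase ht)])
  simp only [hprod, if_true, Bool.false_eq_true, if_false]
  ring

omit [Fintype ι] in
/-- The function obtained from `F` by averaging out the coordinate `s` over a Bernoulli
distribution with parameter `q`. -/
def averageOut (q : ℝ) (s : ι) (F : (ι → Bool) → ℝ) (x : ι → Bool) : ℝ :=
  q * F (update x s true) + (1 - q) * F (update x s false)

theorem mean_averageOut (q : ℝ) (s : ι) (F : (ι → Bool) → ℝ) :
    mean (prodBernoulli q) (averageOut q s F) = mean (prodBernoulli q) F := by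
  have hF := sum_update_true_add_update_false (fun x => prodBernoulli q x * F x) s
  have havg := sum_update_true_add_update_false
    (fun x => prodBernoulli q x * averageOut q s F x) s
  have hpair (x : ι → Bool) :
      prodBernoulli q (update x s true) * averageOut q s F (update x s true) +
        prodBernoulli q (update x s false) * averageOut q s F (update x s false) =
      prodBernoulli q (update x s true) * F (update x s true) +
        prodBernoulli q (update x s false) * F (update x s false) := by
    simp only [averageOut, update_idem]
    linear_combination (F (update x s false) - F (update x s true)) * prodBernoulli_update q s x
  simp only [hpair] at havg
  rw [mean, mean]
  linarith

omit [Fintype ι] in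
theorem dependsOn_averageOut {q : ℝ} {s : ι} {T : Finset ι} {F : (ι → Bool) → ℝ}
    (hF : DependsOn F (insert s T : Finset ι)) : DependsOn (averageOut q s F) (T : Set ι) := by
  intro x y hxy
  have hupdate (b : Bool) : F (update x s b) = F (update y s b) := hF fun t ht => by
    rcases eq_or_ne t s with rfl | h
    · simp
    · simpa [h] using hxy t (Finset.mem_of_mem_insert_of_ne ht h)
  simp only [averageOut, hupdate]

omit [Fintype ι] in
theorem abs_discDeriv_averageOut_le {q : ℝ} (hq : q ∈ Set.Icc (0 : ℝ) 1) {F : (ι → Bool) → ℝ}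
    {t : ι} {c : ℝ} (hF : ∀ x, |discDeriv F t x| ≤ c) (s : ι) (x : ι → Bool) :
    |discDeriv (averageOut q s F) t x| ≤ c := by
  rcases eq_or_ne t s with rfl | h
  · have hzero : discDeriv (averageOut q t F) t x = 0 := by simp [discDeriv, averageOut]
    rw [hzero, abs_zero]
    exact (abs_nonneg _).trans (hF x)
  · have hmix : discDeriv (averageOut q s F) t x = q * discDeriv F t (update x s true) +
        (1 - q) * discDeriv F t (update x s false) := by
      simp only [discDeriv, averageOut, update_comm h]
      ring
    have htrue := abs_le.1 (hF (update x s true))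
    have hfalse := abs_le.1 (hF (update x s false))
    rw [hmix, abs_le]
    constructor <;> nlinarith [hq.1, hq.2]

omit [Fintype ι] in
theorem averageOut_exp_le {q : ℝ} (hq : q ∈ Set.Icc (0 : ℝ) 1) {F : (ι → Bool) → ℝ}
    {s : ι} {c : ℝ} (hF : ∀ x, |discDeriv F s x| ≤ c) (l : ℝ) (x : ι → Bool) :
    averageOut q s (fun x => Real.exp (l * F x)) x ≤
      Real.exp (l ^ 2 * c ^ 2) * Real.exp (l * averageOut q s F x) := by
  refine (bernoulli_exp_le hq (l * F (update x s true)) (l * F (update x s false))).trans ?_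
  rw [mul_comm (Real.exp (l ^ 2 * c ^ 2)), averageOut, ← mul_sub, mul_pow]
  refine mul_le_mul (le_of_eq (by ring_nf)) (Real.exp_le_exp.2 ?_) (Real.exp_pos _).le
    (Real.exp_pos _).le
  exact mul_le_mul_of_nonneg_left (sq_le_sq.2 ((hF x).trans (le_abs_self c))) (sq_nonneg l)

theorem mean_prodBernoulli_exp_le_of_dependsOn {q : ℝ} (hq : q ∈ Set.Ioo (0 : ℝ) 1) {c : ι → ℝ}
    {T : Finset ι} {F : (ι → Bool) → ℝ} (hT : DependsOn F (T : Set ι))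
    (hc : ∀ s x, |discDeriv F s x| ≤ c s) (l : ℝ) :
    mean (prodBernoulli q) (fun x => Real.exp (l * F x)) ≤
      Real.exp (l * mean (prodBernoulli q) F + l ^ 2 * ∑ s ∈ T, c s ^ 2) := by
  have hq' := Set.Ioo_subset_Icc_self hq
  induction T using Finset.induction_on generalizing F with
  | empty =>
    have hconst : F = fun _ => F ⊥ := funext fun x => hT fun t ht => by simp at ht
    rw [hconst, mean_const (sum_prodBernoulli q), mean_const (sum_prodBernoulli q)]
    simp
  | insert s T hs ih =>
    calc mean (prodBernoulli q) (fun x => Real.exp (l * F x))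
        = mean (prodBernoulli q) (averageOut q s fun x => Real.exp (l * F x)) :=
          (mean_averageOut q s _).symm
      _ ≤ mean (prodBernoulli q) fun x =>
            Real.exp (l ^ 2 * c s ^ 2) * Real.exp (l * averageOut q s F x) :=
          mean_mono (fun x => (prodBernoulli_pos hq x).le) (averageOut_exp_le hq' (hc s) l)
      _ ≤ Real.exp (l ^ 2 * c s ^ 2) *
            Real.exp (l * mean (prodBernoulli q) (averageOut q s F) +
              l ^ 2 * ∑ s ∈ T, c s ^ 2) := by
          rw [mean_const_mul]
          exact mul_le_mul_of_nonneg_left (ih (dependsOn_averageOut hT)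
            fun t => abs_discDeriv_averageOut_le hq' (hc t) s) (Real.exp_pos _).le
      _ = Real.exp (l * mean (prodBernoulli q) F + l ^ 2 * ∑ s ∈ insert s T, c s ^ 2) := by
          rw [mean_averageOut, ← Real.exp_add, Finset.sum_insert hs]
          ring_nf

theorem mean_prodBernoulli_exp_le {q : ℝ} (hq : q ∈ Set.Ioo (0 : ℝ) 1) {c : ι → ℝ}
    {F : (ι → Bool) → ℝ} (hc : ∀ s x, |discDeriv F s x| ≤ c s) (l : ℝ) :
    mean (prodBernoulli q) (fun x => Real.exp (l * F x)) ≤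
      Real.exp (l * mean (prodBernoulli q) F + l ^ 2 * ∑ s, c s ^ 2) :=
  mean_prodBernoulli_exp_le_of_dependsOn hq
    (fun _ _ h => congrArg F (funext fun t => h t (by simp))) hc l

end BoundedDifferences

section Domination

/-- The density of the restriction of `μ` to `A` with respect to the Bernoulli product measure
with parameter `q`. -/
def density (μ : (ι → Bool) → ℝ) (A : Set (ι → Bool)) (q : ℝ) (x : ι → Bool) : ℝ :=
  A.indicator μ x / prodBernoulli q x

variable {μ : (ι → Bool) → ℝ} {q : ℝ} {A : Set (ι → Bool)}

omit [DecidableEq ι] in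
theorem density_nonneg (hμ : ∀ x, 0 ≤ μ x) (hq : q ∈ Set.Ioo (0 : ℝ) 1) (x : ι → Bool) :
    0 ≤ density μ A q x :=
  div_nonneg (Set.indicator_nonneg (fun x _ => hμ x) _) (prodBernoulli_pos hq x).le

theorem mean_prodBernoulli_density_mul (hq : q ∈ Set.Ioo (0 : ℝ) 1) (F : (ι → Bool) → ℝ) :
    mean (prodBernoulli q) (fun x => density μ A q x * F x) = mean μ (A.indicator F) := by
  refine Finset.sum_congr rfl fun x _ => ?_
  have := (prodBernoulli_pos hq x).ne'
  by_cases h : x ∈ A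
  · simp only [density, Set.indicator_of_mem h]
    field_simp
  · simp [density, Set.indicator_of_notMem h]

theorem antitone_density (hμ : ∀ x, 0 ≤ μ x) (hq : q ∈ Set.Ioo (0 : ℝ) 1) (hA : IsLowerSet A)
    (hdom : ∀ s x, update x s true ∈ A →
      (1 - q) * μ (update x s true) ≤ q * μ (update x s false)) :
    Antitone (density μ A q) := by
  refine antitone_of_discDeriv_nonpos fun s x => sub_nonpos.2 ?_
  by_cases h : update x s true ∈ A
  · have htrue := prodBernoulli_pos hq (update x s true)
    have hfalse := prodBernoulli_pos hq (update x s false)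
    rw [density, density, Set.indicator_of_mem h,
      Set.indicator_of_mem (hA (update_false_le_update_true x s) h), div_le_div_iff₀ htrue hfalse]
    refine le_of_mul_le_mul_left ?_ (mul_pos hq.1 (sub_pos.2 hq.2))
    calc q * (1 - q) * (μ (update x s true) * prodBernoulli q (update x s false))
        = ((1 - q) * μ (update x s true)) * (q * prodBernoulli q (update x s false)) := by ring
      _ ≤ (q * μ (update x s false)) * (q * prodBernoulli q (update x s false)) :=
          mul_le_mul_of_nonneg_right (hdom s x h) (mul_pos hq.1 hfalse).le
      _ = q * (1 - q) * (μ (update x s false) * prodBernoulli q (update x s true)) := by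
          rw [← prodBernoulli_update q s x]; ring
  · rw [density, Set.indicator_of_notMem h, zero_div]
    exact density_nonneg hμ hq _

/-- On `A` the density of `μ` is antitone, so it is negatively correlated with monotone functions
under the product measure. -/
theorem mean_indicator_exp_le (hμ : μ ∈ stdSimplex ℝ (ι → Bool)) (hq : q ∈ Set.Ioo (0 : ℝ) 1)
    (hA : IsLowerSet A)
    (hdom : ∀ s x, update x s true ∈ A →
      (1 - q) * μ (update x s true) ≤ q * μ (update x s false))
    {F : (ι → Bool) → ℝ} (hF : Monotone F) {c : ι → ℝ} (hc : ∀ s x, |discDeriv F s x| ≤ c s)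
    {l : ℝ} (hl : 0 ≤ l) :
    mean μ (A.indicator fun x => Real.exp (l * F x)) ≤
      Real.exp (l * mean (prodBernoulli q) F + l ^ 2 * ∑ s, c s ^ 2) := by
  have hexp : Monotone fun x => Real.exp (l * F x) := fun x y hxy =>
    Real.exp_le_exp.2 (mul_le_mul_of_nonneg_left (hF hxy) hl)
  have hdensity : mean (prodBernoulli q) (density μ A q) ≤ 1 := by
    have h := mean_prodBernoulli_density_mul (μ := μ) (A := A) hq 1
    simp only [Pi.one_apply, mul_one] at h
    exact h.trans_le (mass_le_one hμ A)
  calc mean μ (A.indicator fun x => Real.exp (l * F x))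
      = mean (prodBernoulli q) fun x => density μ A q x * Real.exp (l * F x) :=
        (mean_prodBernoulli_density_mul hq _).symm
    _ ≤ mean (prodBernoulli q) (density μ A q) *
          mean (prodBernoulli q) fun x => Real.exp (l * F x) :=
        (isFKG_prodBernoulli hq).mean_mul_le_mean_mul_mean (antitone_density hμ.1 hq hA hdom) hexp
    _ ≤ mean (prodBernoulli q) fun x => Real.exp (l * F x) :=
        mul_le_of_le_one_left (mean_nonneg (fun x => (prodBernoulli_pos hq x).le)
          fun x => (Real.exp_pos _).le) hdensity
    _ ≤ _ := mean_prodBernoulli_exp_le hq hc l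

theorem mass_upper_tail_le (hμ : μ ∈ stdSimplex ℝ (ι → Bool)) (hq : q ∈ Set.Ioo (0 : ℝ) 1)
    (hA : IsLowerSet A)
    (hdom : ∀ s x, update x s true ∈ A →
      (1 - q) * μ (update x s true) ≤ q * μ (update x s false))
    {F : (ι → Bool) → ℝ} (hF : Monotone F) {c : ι → ℝ} (hc : ∀ s x, |discDeriv F s x| ≤ c s)
    {V d : ℝ} (hV : 0 < V) (hcV : ∑ s, c s ^ 2 ≤ V) (hd : 0 ≤ d) :
    mass μ (A ∩ {x | mean (prodBernoulli q) F + d ≤ F x}) ≤ Real.exp (-(d ^ 2 / (4 * V))) :=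
  mass_inter_le_exp hμ.1 hV hd fun l hl =>
    (mean_indicator_exp_le hμ hq hA hdom hF hc hl).trans (Real.exp_le_exp.2
      (add_le_add_right (mul_le_mul_of_nonneg_left hcV (sq_nonneg l)) _))

theorem mass_lower_tail_le (hμ : μ ∈ stdSimplex ℝ (ι → Bool)) (hq : q ∈ Set.Ioo (0 : ℝ) 1)
    (hA : IsUpperSet A)
    (hdom : ∀ s x, update x s false ∈ A →
      q * μ (update x s false) ≤ (1 - q) * μ (update x s true))
    {F : (ι → Bool) → ℝ} (hF : Monotone F) {c : ι → ℝ} (hc : ∀ s x, |discDeriv F s x| ≤ c s)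
    {V d : ℝ} (hV : 0 < V) (hcV : ∑ s, c s ^ 2 ≤ V) (hd : 0 ≤ d) :
    mass μ (A ∩ {x | F x ≤ mean (prodBernoulli q) F - d}) ≤ Real.exp (-(d ^ 2 / (4 * V))) := by
  -- This is the upper tail bound for the image of `μ` under complementation.
  let e : (ι → Bool) ≃ (ι → Bool) := compl_involutive.toPerm
  have hμe : μ ∘ e ∈ stdSimplex ℝ (ι → Bool) := ⟨fun x => hμ.1 _, (e.sum_comp μ).trans hμ.2⟩
  have hmean : mean (prodBernoulli (1 - q)) (fun x => -1 * F xᶜ) = -mean (prodBernoulli q) F := by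
    rw [mean_const_mul, mean_prodBernoulli_compl, neg_one_mul]
  have h := mass_upper_tail_le (μ := μ ∘ e) (q := 1 - q) (A := e ⁻¹' A)
    (F := fun x => -1 * F xᶜ) hμe
    ⟨by linarith [hq.2], by linarith [hq.1]⟩ (fun x y hxy hx => hA (compl_le_compl hxy) hx)
    (fun s x hx => by
      have hx' : (update x s true)ᶜ ∈ A := hx
      change (1 - (1 - q)) * μ (update x s true)ᶜ ≤ (1 - q) * μ (update x s false)ᶜ
      rw [compl_update] at hx'
      simpa [compl_update] using hdom s xᶜ hx')
    (fun x y hxy => by linarith [hF (compl_le_compl hxy)])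
    (fun s x => by
      have hflip : discDeriv (fun x => -1 * F xᶜ) s x = discDeriv F s xᶜ := by
        simp only [discDeriv, compl_update, Bool.not_true, Bool.not_false]
        ring
      exact hflip ▸ hc s xᶜ)
    hV hcV hd
  rw [hmean] at h
  refine Eq.trans_le ?_ h
  rw [← mass_comp_equiv e, Set.preimage_inter]
  congr 2
  ext x
  change F xᶜ ≤ mean (prodBernoulli q) F - d ↔ -mean (prodBernoulli q) F + d ≤ -1 * F xᶜ
  constructor <;> intro <;> linarith

end Domination

end BoolCube

/-! # The logistic sigmoid -/

section Sigmoid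

theorem exists_sigmoid_sub_eq (a b : ℝ) : ∃ c ∈ Set.uIcc a b,
    Real.sigmoid b - Real.sigmoid a = Real.sigmoid c * (1 - Real.sigmoid c) * (b - a) := by
  have hlt {a b : ℝ} (h : a < b) : ∃ c ∈ Set.Icc a b,
      Real.sigmoid b - Real.sigmoid a = Real.sigmoid c * (1 - Real.sigmoid c) * (b - a) := by
    obtain ⟨c, hc, hslope⟩ := exists_hasDerivAt_eq_slope Real.sigmoid _ h
      continuous_sigmoid.continuousOn fun x _ => Real.hasDerivAt_sigmoid x
    refine ⟨c, Set.Ioo_subset_Icc_self hc, ?_⟩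
    rw [hslope, div_mul_cancel₀ _ (sub_pos.2 h).ne']
  rcases lt_trichotomy a b with h | h | h
  · rw [Set.uIcc_of_le h.le]
    exact hlt h
  · exact ⟨a, Set.left_mem_uIcc, by rw [h]; ring⟩
  · obtain ⟨c, hc, hslope⟩ := hlt h
    exact ⟨c, by rwa [Set.uIcc_of_ge h.le], by linear_combination -hslope⟩

theorem abs_sigmoid_sub_le (a b : ℝ) : |Real.sigmoid b - Real.sigmoid a| ≤ |b - a| := by
  obtain ⟨c, -, hslope⟩ := exists_sigmoid_sub_eq a b
  have hpos := Real.sigmoid_pos c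
  have hlt := Real.sigmoid_lt_one c
  rw [hslope, abs_mul, abs_of_nonneg (by nlinarith)]
  exact mul_le_of_le_one_left (abs_nonneg _) (by nlinarith)

theorem abs_sigmoid_sub_sub_le {l a b ε : ℝ} (ha : |a - l| ≤ ε) (hb : |b - l| ≤ ε) :
    |Real.sigmoid b - Real.sigmoid a - Real.sigmoid l * (1 - Real.sigmoid l) * (b - a)| ≤
      ε * |b - a| := by
  obtain ⟨c, hc, hslope⟩ := exists_sigmoid_sub_eq a b
  have hcl : |c - l| ≤ ε := by
    rw [Set.mem_uIcc] at hc
    rw [abs_le] at *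
    rcases hc with hc | hc <;> constructor <;> linarith
  have hsum : |1 - Real.sigmoid c - Real.sigmoid l| ≤ 1 := by
    rw [abs_le]
    constructor <;> linarith [Real.sigmoid_pos c, Real.sigmoid_lt_one c, Real.sigmoid_pos l,
      Real.sigmoid_lt_one l]
  have hfactor :
      Real.sigmoid b - Real.sigmoid a - Real.sigmoid l * (1 - Real.sigmoid l) * (b - a) =
        (Real.sigmoid c - Real.sigmoid l) * (1 - Real.sigmoid c - Real.sigmoid l) * (b - a) := by
    rw [hslope]; ring
  rw [hfactor, abs_mul, abs_mul]
  exact mul_le_mul_of_nonneg_right ((mul_le_of_le_one_right (abs_nonneg _) hsum).trans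
    ((abs_sigmoid_sub_le l c).trans hcl)) (abs_nonneg _)

end Sigmoid

/-! # Polynomial Hamiltonians and their Gibbs measures -/

namespace BoolCube

open FiniteProb Function

/-- The data of a polynomial Hamiltonian on the cube: the sum over `a : A` of `coef a` times the
monomial with support `supp a`. -/
structure PolyHam (ι A : Type*) where
  /-- The coefficients of the monomials. -/
  coef : A → ℝ
  /-- The supports of the monomials. -/
  supp : A → Finset ι

namespace PolyHam

variable {ι A : Type*} [Fintype A] (P : PolyHam ι A)

/-- The Hamiltonian, as a function on the cube. -/
def ham (x : ι → Bool) : ℝ := ∑ a, P.coef a * monomial (P.supp a) x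

omit [Fintype A] in
/-- The Hamiltonian is ferromagnetic: all interaction coefficients are nonnegative. Terms with
at most one coordinate are external fields, which may have either sign. -/
def IsFerromagnetic : Prop := ∀ a, 2 ≤ (P.supp a).card → 0 ≤ P.coef a

variable [DecidableEq ι]

/-- The terms of the Hamiltonian that involve the coordinate `s`. -/
def terms (s : ι) : Finset A := Finset.univ.filter fun a => s ∈ P.supp a

@[simp] theorem mem_terms {s : ι} {a : A} : a ∈ P.terms s ↔ s ∈ P.supp a := by simp [terms]

section LocalField

/-- The local field at `s`: the log-odds of the coordinate `s` given the others. -/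
def locField (s : ι) : (ι → Bool) → ℝ := discDeriv P.ham s

theorem locField_eq (s : ι) : P.locField s =
    fun x => ∑ a ∈ P.terms s, P.coef a * monomial ((P.supp a).erase s) x := by
  funext x
  refine (discDeriv_sum _ _ s x).trans ?_
  simp only [discDeriv_const_mul, discDeriv_monomial, mul_ite, mul_zero, terms,
    Finset.sum_filter]

theorem locField_update (s : ι) (x : ι → Bool) (b : Bool) :
    P.locField s (update x s b) = P.locField s x :=
  discDeriv_update _ s x b

theorem discDeriv_locField (s t : ι) : discDeriv (P.locField s) t = fun x => ∑ a ∈ P.terms s,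
    if t ∈ (P.supp a).erase s then P.coef a * monomial (((P.supp a).erase s).erase t) x else 0 := by
  funext x
  rw [locField_eq]
  refine (discDeriv_sum _ _ t x).trans ?_
  simp only [discDeriv_const_mul, discDeriv_monomial, mul_ite, mul_zero]

theorem discDeriv_locField_comm (s t : ι) (x : ι → Bool) :
    discDeriv (P.locField s) t x = discDeriv (P.locField t) s x :=
  discDeriv_comm _ s t x

/-- The conditional probability, given the other coordinates, that the coordinate `s` is on. -/
def condProb (s : ι) (x : ι → Bool) : ℝ := Real.sigmoid (P.locField s x)

/-- The conditional variance of the coordinate `s` given the other coordinates. -/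
def condVar (s : ι) (x : ι → Bool) : ℝ := P.condProb s x * (1 - P.condProb s x)

theorem condProb_pos (s : ι) (x : ι → Bool) : 0 < P.condProb s x := Real.sigmoid_pos _

theorem condProb_lt_one (s : ι) (x : ι → Bool) : P.condProb s x < 1 := Real.sigmoid_lt_one _

theorem condProb_update (s : ι) (x : ι → Bool) (b : Bool) :
    P.condProb s (update x s b) = P.condProb s x := by
  rw [condProb, locField_update, condProb]

variable [Fintype ι]

/-- The local slope at `s`: the sum of the discrete derivatives of the local field at `s`. -/
def locSlope (s : ι) (x : ι → Bool) : ℝ := ∑ t, discDeriv (P.locField s) t x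

theorem locSlope_update (s : ι) (x : ι → Bool) (b : Bool) :
    P.locSlope s (update x s b) = P.locSlope s x :=
  Finset.sum_congr rfl fun t _ => by
    rw [discDeriv_locField_comm, discDeriv_update, discDeriv_locField_comm]

theorem locSlope_eq (s : ι) : P.locSlope s = fun x => ∑ a ∈ P.terms s,
    P.coef a * ∑ u ∈ (P.supp a).erase s, monomial (((P.supp a).erase s).erase u) x := by
  funext x
  simp only [locSlope, discDeriv_locField]
  rw [Finset.sum_comm]
  refine Finset.sum_congr rfl fun a _ => ?_
  rw [Finset.mul_sum, Finset.sum_ite_mem, Finset.univ_inter]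

theorem discDeriv_locSlope (s t : ι) (x : ι → Bool) :
    discDeriv (P.locSlope s) t x = ∑ a ∈ P.terms s, P.coef a * ∑ u ∈ (P.supp a).erase s,
      discDeriv (monomial (((P.supp a).erase s).erase u)) t x := by
  rw [locSlope_eq]
  refine (discDeriv_sum _ _ t x).trans (Finset.sum_congr rfl fun a _ => ?_)
  rw [discDeriv_const_mul, discDeriv_sum]

theorem mean_prodBernoulli_locField (q : ℝ) (s : ι) :
    mean (prodBernoulli q) (P.locField s) =
      ∑ a ∈ P.terms s, P.coef a * q ^ ((P.supp a).card - 1) := by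
  rw [locField_eq, mean_sum]
  refine Finset.sum_congr rfl fun a ha => ?_
  rw [mean_const_mul, mean_prodBernoulli_monomial, Finset.card_erase_of_mem (P.mem_terms.1 ha)]

theorem mean_prodBernoulli_locSlope (q : ℝ) (s : ι) :
    mean (prodBernoulli q) (P.locSlope s) = ∑ a ∈ P.terms s,
      P.coef a * (((P.supp a).card - 1 : ℕ) * q ^ ((P.supp a).card - 2)) := by
  rw [locSlope_eq, mean_sum]
  refine Finset.sum_congr rfl fun a ha => ?_
  have hcard := Finset.card_erase_of_mem (P.mem_terms.1 ha)
  rw [mean_const_mul, mean_sum, Finset.sum_congr rfl fun u hu => by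
    rw [mean_prodBernoulli_monomial, Finset.card_erase_of_mem hu, hcard, Nat.sub_sub]]
  rw [Finset.sum_const, hcard, nsmul_eq_mul]

end LocalField

section Ferromagnetic

variable {P} (hP : P.IsFerromagnetic)
include hP

omit [Fintype A] in
theorem IsFerromagnetic.coef_nonneg {s t : ι} {a : A} (hs : s ∈ P.supp a)
    (ht : t ∈ (P.supp a).erase s) : 0 ≤ P.coef a :=
  hP a (Finset.one_lt_card.2
    ⟨t, Finset.mem_of_mem_erase ht, s, hs, Finset.ne_of_mem_erase ht⟩)

theorem IsFerromagnetic.monotone_locField (s : ι) : Monotone (P.locField s) := by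
  rw [locField_eq]
  refine fun x y hxy => Finset.sum_le_sum fun a ha => ?_
  rcases ((P.supp a).erase s).eq_empty_or_nonempty with h | ⟨t, ht⟩
  · simp [h, monomial]
  · exact mul_le_mul_of_nonneg_left (monotone_monomial _ hxy)
      (hP.coef_nonneg (P.mem_terms.1 ha) ht)

theorem IsFerromagnetic.monotone_discDeriv_locField (s t : ι) :
    Monotone (discDeriv (P.locField s) t) := by
  rw [discDeriv_locField]
  refine fun x y hxy => Finset.sum_le_sum fun a ha => ?_
  split_ifs with ht
  · exact mul_le_mul_of_nonneg_left (monotone_monomial _ hxy)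
      (hP.coef_nonneg (P.mem_terms.1 ha) ht)
  · exact le_rfl

theorem IsFerromagnetic.monotone_locSlope [Fintype ι] (s : ι) : Monotone (P.locSlope s) :=
  fun _ _ hxy => Finset.sum_le_sum fun t _ => hP.monotone_discDeriv_locField s t hxy

theorem IsFerromagnetic.monotone_condProb (s : ι) : Monotone (P.condProb s) :=
  Real.sigmoid_monotone.comp (hP.monotone_locField s)

end Ferromagnetic

section Gibbs

variable [Fintype ι]

/-- The mass function of the Gibbs measure, with weights proportional to `exp (P.ham x)`. -/
def gibbs (x : ι → Bool) : ℝ := Real.exp (P.ham x) / ∑ y, Real.exp (P.ham y)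

theorem sum_exp_ham_pos : 0 < ∑ y, Real.exp (P.ham y) :=
  Finset.sum_pos (fun _ _ => Real.exp_pos _) Finset.univ_nonempty

theorem gibbs_pos (x : ι → Bool) : 0 < P.gibbs x := div_pos (Real.exp_pos _) P.sum_exp_ham_pos

theorem gibbs_mem_stdSimplex : P.gibbs ∈ stdSimplex ℝ (ι → Bool) := by
  refine ⟨fun x => (P.gibbs_pos x).le, ?_⟩
  simp only [gibbs, ← Finset.sum_div]
  exact div_self P.sum_exp_ham_pos.ne'

theorem IsFerromagnetic.isFKG_gibbs {P : PolyHam ι A} (hP : P.IsFerromagnetic) :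
    IsFKG P.gibbs where
  mem_stdSimplex := P.gibbs_mem_stdSimplex
  mul_le_inf_mul_sup x y := by
    have hham : P.ham x + P.ham y ≤ P.ham (x ⊓ y) + P.ham (x ⊔ y) := by
      simp only [ham, ← Finset.sum_add_distrib, ← mul_add]
      refine Finset.sum_le_sum fun a _ => ?_
      rcases Nat.lt_or_ge (P.supp a).card 2 with h | h
      · rw [monomial_inf_add_monomial_sup_of_card_le_one (Nat.lt_succ_iff.1 h)]
      · exact mul_le_mul_of_nonneg_left (monomial_add_monomial_le _ x y) (hP a h)
    simp only [gibbs, div_mul_div_comm, ← Real.exp_add]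
    exact div_le_div_of_nonneg_right (Real.exp_le_exp.2 hham)
      (mul_pos P.sum_exp_ham_pos P.sum_exp_ham_pos).le

theorem gibbs_update (s : ι) (x : ι → Bool) :
    (1 - P.condProb s x) * P.gibbs (update x s true) =
      P.condProb s x * P.gibbs (update x s false) := by
  have hham : P.ham (update x s true) = P.locField s x + P.ham (update x s false) :=
    (sub_add_cancel _ _).symm
  have hodds : (1 - P.condProb s x) * Real.exp (P.locField s x) = P.condProb s x := by
    rw [condProb, Real.sigmoid_def, Real.exp_neg]
    have := Real.exp_pos (P.locField s x)
    field_simp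
    ring
  rw [gibbs, hham, Real.exp_add, gibbs]
  linear_combination (Real.exp (P.ham (update x s false)) / ∑ y, Real.exp (P.ham y)) * hodds

theorem gibbs_update_le {q : ℝ} {s : ι} {x : ι → Bool} (h : P.condProb s x ≤ q) :
    (1 - q) * P.gibbs (update x s true) ≤ q * P.gibbs (update x s false) := by
  nlinarith [P.gibbs_update s x, P.gibbs_pos (update x s true), P.gibbs_pos (update x s false)]

theorem le_gibbs_update {q : ℝ} {s : ι} {x : ι → Bool} (h : q ≤ P.condProb s x) :
    q * P.gibbs (update x s false) ≤ (1 - q) * P.gibbs (update x s true) := by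
  nlinarith [P.gibbs_update s x, P.gibbs_pos (update x s true), P.gibbs_pos (update x s false)]

theorem mean_coord_sub_condProb_mul (s : ι) (F : (ι → Bool) → ℝ) :
    mean P.gibbs (fun x => (coord s x - P.condProb s x) * F x) =
      mean P.gibbs (fun x => P.condVar s x * discDeriv F s x) := by
  rw [mean, mean]
  refine mul_left_cancel₀ (two_ne_zero (α := ℝ)) ?_
  rw [← sum_update_true_add_update_false _ s, ← sum_update_true_add_update_false _ s]
  refine Finset.sum_congr rfl fun x _ => ?_
  simp only [condVar, condProb_update, discDeriv_update, coord, update_self, if_true,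
    Bool.false_eq_true, if_false]
  rw [discDeriv]
  linear_combination (F (update x s true) -
    P.condProb s x * (F (update x s true) - F (update x s false))) * P.gibbs_update s x

end Gibbs

end PolyHam

end BoolCube

/-! # Bootstrapped concentration of the local fields -/

/-- The mean-field equation `p = sigmoid (Ψ p)`, whose iteration contracts towards `p` at rate
`ρ`. The function `Ψ` is the mean field, `Ψ'` its slope, and `K` bounds both of them together with
their Lipschitz constants. -/
structure IsMeanField (Ψ Ψ' : ℝ → ℝ) (p ρ K : ℝ) : Prop where
  one_le : 1 ≤ K
  mem_Ioo : p ∈ Set.Ioo 0 1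
  rate_nonneg : 0 ≤ ρ
  rate_lt_one : ρ < 1
  fixed : Real.sigmoid (Ψ p) = p
  contract : ∀ q ∈ Set.Icc (0 : ℝ) 1, |Real.sigmoid (Ψ q) - p| ≤ ρ * |q - p|
  abs_field_le : ∀ q ∈ Set.Icc (0 : ℝ) 1, |Ψ q| ≤ K
  lipschitz : ∀ q ∈ Set.Icc (0 : ℝ) 1, ∀ r ∈ Set.Icc (0 : ℝ) 1, |Ψ q - Ψ r| ≤ K * |q - r|
  slope_nonneg : 0 ≤ Ψ' p
  abs_slope_le : ∀ q ∈ Set.Icc (0 : ℝ) 1, |Ψ' q| ≤ K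
  slope_lipschitz : ∀ q ∈ Set.Icc (0 : ℝ) 1, ∀ r ∈ Set.Icc (0 : ℝ) 1,
    |Ψ' q - Ψ' r| ≤ K * |q - r|
  subcritical : p * (1 - p) * Ψ' p < 1

theorem IsMeanField.nonneg {Ψ Ψ' : ℝ → ℝ} {p ρ K : ℝ} (hm : IsMeanField Ψ Ψ' p ρ K) : 0 ≤ K :=
  zero_le_one.trans hm.one_le

namespace BoolCube.PolyHam

open FiniteProb Function

variable {ι A : Type*} [Fintype ι] [DecidableEq ι] [Fintype A]

/-- The maximal influence of the coordinate `t` on the local field at `s`. -/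
def influence (P : PolyHam ι A) (s t : ι) : ℝ := discDeriv (P.locField s) t ⊤

/-- A ferromagnetic Hamiltonian of size `n` with bounded degree and weak pair interactions, whose
local fields and slopes have Bernoulli means within `K / n` of the mean field `Ψ` and of its
slope `Ψ'`. -/
structure IsNear (P : PolyHam ι A) (Ψ Ψ' : ℝ → ℝ) (K : ℝ) (n : ℕ) : Prop where
  two_le : 2 ≤ n
  isFerromagnetic : P.IsFerromagnetic
  field_near : ∀ s, ∀ q ∈ Set.Icc (0 : ℝ) 1,
    |mean (prodBernoulli q) (P.locField s) - Ψ q| ≤ K / n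
  slope_near : ∀ s, ∀ q ∈ Set.Icc (0 : ℝ) 1,
    |mean (prodBernoulli q) (P.locSlope s) - Ψ' q| ≤ K / n
  pair_le : ∀ s t, s ≠ t → ∑ a ∈ P.terms s with t ∈ P.supp a, P.coef a ≤ K / n
  card_supp_le : ∀ a, ((P.supp a).card : ℝ) ≤ K
  card_le : (Fintype.card ι : ℝ) ≤ (n : ℝ) ^ 2
  le_card : (n : ℝ) ^ 2 ≤ 4 * Fintype.card ι

section Influence

variable {P : PolyHam ι A}

section Ferromagnetic

variable (hP : P.IsFerromagnetic)
include hP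

omit [Fintype ι] in
theorem IsFerromagnetic.discDeriv_locField_nonneg (s t : ι) (x : ι → Bool) :
    0 ≤ discDeriv (P.locField s) t x :=
  discDeriv_nonneg (hP.monotone_locField s) t x

omit [Fintype ι] in
theorem IsFerromagnetic.influence_nonneg (s t : ι) : 0 ≤ P.influence s t :=
  hP.discDeriv_locField_nonneg s t ⊤

omit [Fintype ι] in
theorem IsFerromagnetic.abs_discDeriv_locField_le (s t : ι) (x : ι → Bool) :
    |discDeriv (P.locField s) t x| ≤ P.influence s t := by
  rw [abs_of_nonneg (hP.discDeriv_locField_nonneg s t x)]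
  exact hP.monotone_discDeriv_locField s t le_top

end Ferromagnetic

variable {Ψ Ψ' : ℝ → ℝ} {p ρ K : ℝ} {n : ℕ}

namespace IsNear

variable (h : P.IsNear Ψ Ψ' K n)
include h

theorem n_pos : (0 : ℝ) < n := by
  have := h.two_le
  positivity

theorem abs_discDeriv_locSlope_le (s t : ι) (x : ι → Bool) :
    |discDeriv (P.locSlope s) t x| ≤ K * P.influence s t := by
  rw [abs_of_nonneg (discDeriv_nonneg (h.isFerromagnetic.monotone_locSlope s) t x),
    discDeriv_locSlope, influence, discDeriv_locField, Finset.mul_sum]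
  refine Finset.sum_le_sum fun a ha => ?_
  by_cases ht : t ∈ (P.supp a).erase s
  · have hsum : ∑ u ∈ (P.supp a).erase s,
        discDeriv (monomial (((P.supp a).erase s).erase u)) t x ≤ K := by
      refine (Finset.sum_le_card_nsmul _ _ 1 fun u _ => ?_).trans ?_
      · rw [discDeriv_monomial]
        split_ifs
        exacts [monomial_le_one _ _, zero_le_one]
      · rw [nsmul_one]
        exact le_trans (mod_cast Finset.card_le_card (Finset.erase_subset _ _)) (h.card_supp_le a)
    rw [if_pos ht, monomial_top, mul_one, mul_comm K]
    exact mul_le_mul_of_nonneg_left hsum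
      (h.isFerromagnetic.coef_nonneg (P.mem_terms.1 ha) ht)
  · rw [if_neg ht, mul_zero]
    refine le_of_eq (mul_eq_zero_of_right _ (Finset.sum_eq_zero fun u _ => ?_))
    rw [discDeriv_monomial, if_neg fun ht' => ht (Finset.mem_of_mem_erase ht')]

theorem influence_le (hK : 0 ≤ K) (s t : ι) : P.influence s t ≤ K / n := by
  rw [influence, discDeriv_locField]
  rcases eq_or_ne s t with rfl | hst
  · simp only [Finset.notMem_erase, if_false, Finset.sum_const_zero]
    positivity
  · refine le_of_eq_of_le ?_ (h.pair_le s t hst)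
    rw [Finset.sum_filter]
    exact Finset.sum_congr rfl fun a _ => by simp [monomial_top, hst.symm]

theorem sum_influence_le (hm : IsMeanField Ψ Ψ' p ρ K) (s : ι) :
    ∑ t, P.influence s t ≤ 2 * K := by
  have hnear := abs_le.1 (h.slope_near s 1 (by simp))
  have hslope := abs_le.1 (hm.abs_slope_le 1 (by simp))
  have hdiv : K / n ≤ K :=
    div_le_self hm.nonneg (mod_cast one_le_two.trans h.two_le)
  rw [mean_prodBernoulli_one, locSlope] at hnear
  simp only [influence]
  linarith

theorem sum_influence_sq_le (hm : IsMeanField Ψ Ψ' p ρ K) (s : ι) :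
    ∑ t, (K * P.influence s t) ^ 2 ≤ 2 * K ^ 4 / n :=
  have hK := hm.nonneg
  calc ∑ t, (K * P.influence s t) ^ 2 ≤ ∑ t, K ^ 2 * (K / n) * P.influence s t :=
        Finset.sum_le_sum fun t _ => by
          rw [mul_pow, pow_two (P.influence s t), mul_assoc]
          exact mul_le_mul_of_nonneg_left (mul_le_mul_of_nonneg_right (h.influence_le hK s t)
            (h.isFerromagnetic.influence_nonneg s t)) (sq_nonneg _)
    _ ≤ K ^ 2 * (K / n) * (2 * K) := by
        rw [← Finset.mul_sum]
        exact mul_le_mul_of_nonneg_left (h.sum_influence_le hm s) (by positivity)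
    _ = 2 * K ^ 4 / n := by ring

theorem locField_le (s : ι) (x : ι → Bool) : P.locField s x ≤ Ψ 1 + K / n := by
  have hnear := abs_le.1 (h.field_near s 1 (by simp))
  have hmono := h.isFerromagnetic.monotone_locField s (le_top : x ≤ ⊤)
  rw [mean_prodBernoulli_one] at hnear
  linarith

theorem le_locField (s : ι) (x : ι → Bool) : Ψ 0 - K / n ≤ P.locField s x := by
  have hnear := abs_le.1 (h.field_near s 0 (by simp))
  have hmono := h.isFerromagnetic.monotone_locField s (bot_le : ⊥ ≤ x)
  rw [mean_prodBernoulli_zero] at hnear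
  linarith

end IsNear

end Influence

section Deviant

/-- The configurations at which some `F s` lies beyond `m` by more than `e`, above it for `σ = 1`
and below it for `σ = -1`. -/
def deviant (F : ι → (ι → Bool) → ℝ) (σ m e : ℝ) : Set (ι → Bool) :=
  {x | ∃ s, e < σ * (F s x - m)}

variable {F : ι → (ι → Bool) → ℝ} {σ m e e' : ℝ}

omit [Fintype ι] [DecidableEq ι] in
theorem notMem_deviant {x : ι → Bool} : x ∉ deviant F σ m e ↔ ∀ s, σ * (F s x - m) ≤ e := by
  simp [deviant]

omit [Fintype ι] [DecidableEq ι] in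
theorem deviant_anti (he : e ≤ e') : deviant F σ m e' ⊆ deviant F σ m e :=
  fun _ ⟨s, hs⟩ => ⟨s, he.trans_lt hs⟩

omit [Fintype ι] [DecidableEq ι] in
theorem isUpperSet_deviant (hF : ∀ s, Monotone (F s)) (m e : ℝ) :
    IsUpperSet (deviant F 1 m e) := by
  rintro x y hxy ⟨s, hs⟩
  exact ⟨s, hs.trans_le (by linarith [hF s hxy])⟩

omit [Fintype ι] [DecidableEq ι] in
theorem isLowerSet_deviant (hF : ∀ s, Monotone (F s)) (m e : ℝ) :
    IsLowerSet (deviant F (-1) m e) := by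
  rintro x y hxy ⟨s, hs⟩
  exact ⟨s, hs.trans_le (by linarith [hF s hxy])⟩

end Deviant

/-- The tail bound `exp (-(d ^ 2 / (4 * V)))` for a deviation `d` of a local field or slope, where
`V = 2 * K ^ 4 / n`. -/
def tailBound (K d : ℝ) (n : ℕ) : ℝ := Real.exp (-(d ^ 2 * n / (8 * K ^ 4)))

section OneSided

variable {P : PolyHam ι A} {σ : ℝ} (hσ : σ = 1 ∨ σ = -1)
include hσ

/-- Where the conditional probabilities stay on one side of `q = p + σ * e`, the Gibbs measure is
comparable to the Bernoulli product measure with parameter `q`. -/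
theorem IsFerromagnetic.mass_compl_deviant_inter_le (hP : P.IsFerromagnetic) {p e : ℝ}
    (hq : p + σ * e ∈ Set.Ioo 0 1) {G : (ι → Bool) → ℝ} (hG : Monotone G) {c : ι → ℝ}
    (hc : ∀ t x, |discDeriv G t x| ≤ c t) {V d : ℝ} (hV : 0 < V) (hcV : ∑ t, c t ^ 2 ≤ V)
    (hd : 0 ≤ d) :
    mass P.gibbs ((deviant P.condProb σ p e)ᶜ ∩
      {x | d ≤ σ * (G x - mean (prodBernoulli (p + σ * e)) G)}) ≤
        Real.exp (-(d ^ 2 / (4 * V))) := by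
  have hcond {s : ι} {x : ι → Bool} {b : Bool}
      (hx : update x s b ∈ (deviant P.condProb σ p e)ᶜ) : σ * (P.condProb s x - p) ≤ e := by
    simpa only [condProb_update] using notMem_deviant.1 hx s
  rcases hσ with rfl | rfl
  · refine le_of_eq_of_le ?_ (mass_upper_tail_le P.gibbs_mem_stdSimplex hq
      (isUpperSet_deviant hP.monotone_condProb p e).compl
      (fun s x hx => P.gibbs_update_le (by linarith [hcond hx])) hG hc hV hcV hd)
    simp only [one_mul, le_sub_iff_add_le']
  · refine le_of_eq_of_le ?_ (mass_lower_tail_le P.gibbs_mem_stdSimplex hq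
      (isLowerSet_deviant hP.monotone_condProb p e).compl
      (fun s x hx => P.le_gibbs_update (by linarith [hcond hx])) hG hc hV hcV hd)
    simp only [neg_one_mul, neg_sub, le_sub_comm]

variable {Ψ Ψ' : ℝ → ℝ} {p ρ K : ℝ} {n : ℕ} (h : P.IsNear Ψ Ψ' K n)
  (hm : IsMeanField Ψ Ψ' p ρ K)
include h hm

theorem IsNear.mass_compl_deviant_inter_deviant_le {e d m : ℝ} (hq : p + σ * e ∈ Set.Ioo 0 1)
    (hd : 0 ≤ d) {F : ι → (ι → Bool) → ℝ} (hF : ∀ s, Monotone (F s))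
    (hinfl : ∀ s t x, |discDeriv (F s) t x| ≤ K * P.influence s t)
    (hmean : ∀ s, |mean (prodBernoulli (p + σ * e)) (F s) - m| ≤ K / n) :
    mass P.gibbs ((deviant P.condProb σ p e)ᶜ ∩ deviant F σ m (K / n + d)) ≤
      Fintype.card ι * tailBound K d n := by
  have hμ : ∀ x, 0 ≤ P.gibbs x := P.gibbs_mem_stdSimplex.1
  have hn := h.n_pos
  have hK := hm.one_le
  have hsub : (deviant P.condProb σ p e)ᶜ ∩ deviant F σ m (K / n + d) ⊆
      ⋃ s, ((deviant P.condProb σ p e)ᶜ ∩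
        {x | d ≤ σ * (F s x - mean (prodBernoulli (p + σ * e)) (F s))}) := by
    rintro x ⟨hx, s, hs⟩
    refine Set.mem_iUnion.2 ⟨s, hx, ?_⟩
    have hmean := abs_le.1 (hmean s)
    simp only [Set.mem_ofPred_eq]
    rcases hσ with rfl | rfl <;> linarith
  have hexp : tailBound K d n = Real.exp (-(d ^ 2 / (4 * (2 * K ^ 4 / n)))) := by
    rw [tailBound]
    congr 2
    field_simp
    ring
  refine (mass_mono hμ hsub).trans ((mass_iUnion_le hμ _).trans ?_)
  refine (Finset.sum_le_card_nsmul _ _ (tailBound K d n) fun s _ => ?_).trans ?_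
  · rw [hexp]
    exact h.isFerromagnetic.mass_compl_deviant_inter_le hσ hq (hF s) (hinfl s) (by positivity)
      (h.sum_influence_sq_le hm s) hd
  · rw [nsmul_eq_mul, Finset.card_univ]

theorem IsNear.mass_compl_deviant_inter_deviant_locField_le {e d : ℝ}
    (hq : p + σ * e ∈ Set.Ioo 0 1) (hd : 0 ≤ d) :
    mass P.gibbs ((deviant P.condProb σ p e)ᶜ ∩
      deviant P.locField σ (Ψ (p + σ * e)) (K / n + d)) ≤ Fintype.card ι * tailBound K d n :=
  h.mass_compl_deviant_inter_deviant_le hσ hm hq hd h.isFerromagnetic.monotone_locField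
    (fun s t x => (h.isFerromagnetic.abs_discDeriv_locField_le s t x).trans
      (le_mul_of_one_le_left (h.isFerromagnetic.influence_nonneg s t) hm.one_le))
    fun s => h.field_near s _ (Set.Ioo_subset_Icc_self hq)

theorem IsNear.mass_compl_deviant_inter_deviant_locSlope_le {e d : ℝ}
    (hq : p + σ * e ∈ Set.Ioo 0 1) (hd : 0 ≤ d) :
    mass P.gibbs ((deviant P.condProb σ p e)ᶜ ∩
      deviant P.locSlope σ (Ψ' (p + σ * e)) (K / n + d)) ≤ Fintype.card ι * tailBound K d n :=
  h.mass_compl_deviant_inter_deviant_le hσ hm hq hd h.isFerromagnetic.monotone_locSlope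
    h.abs_discDeriv_locSlope_le fun s => h.slope_near s _ (Set.Ioo_subset_Icc_self hq)

end OneSided

end BoolCube.PolyHam

section Radius

/-- The distance from `p` to the endpoint of the unit interval above it (for `σ = 1`) or below it
(for `σ = -1`). -/
def distToEnd (σ p : ℝ) : ℝ := (1 + σ) / 2 - σ * p

theorem distToEnd_one (p : ℝ) : distToEnd 1 p = 1 - p := by
  rw [distToEnd]; ring

theorem distToEnd_neg_one (p : ℝ) : distToEnd (-1) p = p := by
  rw [distToEnd]; ring

/-- The radius reached from `r` after `i + 1` rounds of the recursion `e ↦ ρ * e + D`, up to the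
limiting error of the recursion. -/
def radius (ρ D r : ℝ) (i : ℕ) : ℝ := ρ ^ (i + 1) * r + D / (1 - ρ)

theorem radius_succ {ρ : ℝ} (hρ : ρ < 1) (D r : ℝ) (i : ℕ) :
    radius ρ D r (i + 1) = ρ * radius ρ D r i + D := by
  have : 1 - ρ ≠ 0 := (sub_pos.2 hρ).ne'
  simp only [radius]
  field_simp
  ring

theorem pow_le_one_div_div_one_sub {ρ : ℝ} (hρ0 : 0 ≤ ρ) (hρ1 : ρ < 1) {n : ℕ} (hn : 0 < n) :
    ρ ^ n ≤ 1 / n / (1 - ρ) := by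
  have hgeom : (n : ℝ) * ρ ^ n ≤ ∑ i ∈ Finset.range n, ρ ^ i := by
    simpa using Finset.card_nsmul_le_sum (Finset.range n) (ρ ^ ·) (ρ ^ n) fun i hi =>
      pow_le_pow_of_le_one hρ0 hρ1.le (Finset.mem_range.1 hi).le
  rw [div_div, le_div_iff₀ (mul_pos (Nat.cast_pos.2 hn) (sub_pos.2 hρ1))]
  nlinarith [mul_neg_geom_sum ρ n, pow_nonneg hρ0 n]

theorem radius_le {ρ K d r : ℝ} {n : ℕ} (hρ0 : 0 ≤ ρ) (hρ1 : ρ < 1) (hn : 0 < n) (hK : 0 ≤ K)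
    (hd : 1 / n ≤ d) (hr : r ≤ 1) :
    radius ρ (K / n + d) r n ≤ (K + 2) / (1 - ρ) * d := by
  have hρ := sub_pos.2 hρ1
  have hpow : ρ ^ (n + 1) * r ≤ d / (1 - ρ) :=
    calc ρ ^ (n + 1) * r ≤ ρ ^ (n + 1) := mul_le_of_le_one_right (pow_nonneg hρ0 _) hr
      _ ≤ ρ ^ n := pow_le_pow_of_le_one hρ0 hρ1.le n.le_succ
      _ ≤ 1 / n / (1 - ρ) := pow_le_one_div_div_one_sub hρ0 hρ1 hn
      _ ≤ d / (1 - ρ) := div_le_div_of_nonneg_right hd hρ.le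
  have hKn : K / n ≤ K * d := by
    rw [div_eq_mul_one_div]
    exact mul_le_mul_of_nonneg_left hd hK
  calc radius ρ (K / n + d) r n ≤ d / (1 - ρ) + (K * d + d) / (1 - ρ) :=
        add_le_add hpow (div_le_div_of_nonneg_right (by linarith) hρ.le)
    _ = (K + 2) / (1 - ρ) * d := by ring

variable {σ : ℝ} (hσ : σ = 1 ∨ σ = -1)
include hσ

theorem distToEnd_pos {p : ℝ} (hp : p ∈ Set.Ioo 0 1) : 0 < distToEnd σ p := by
  rcases hσ with rfl | rfl
  · rw [distToEnd_one]; exact sub_pos.2 hp.2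
  · rw [distToEnd_neg_one]; exact hp.1

theorem distToEnd_le_one {p : ℝ} (hp : p ∈ Set.Ioo 0 1) : distToEnd σ p ≤ 1 := by
  rcases hσ with rfl | rfl
  · rw [distToEnd_one]; linarith [hp.1]
  · rw [distToEnd_neg_one]; exact hp.2.le

theorem add_mul_mem_Ioo {p e : ℝ} (hp : p ∈ Set.Ioo 0 1) (he : 0 ≤ e) (he' : e < distToEnd σ p) :
    p + σ * e ∈ Set.Ioo 0 1 := by
  obtain ⟨hp0, hp1⟩ := hp
  rcases hσ with rfl | rfl
  · rw [distToEnd_one] at he'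
    constructor <;> linarith
  · rw [distToEnd_neg_one] at he'
    constructor <;> linarith

theorem mul_sigmoid_sub_le {a b D : ℝ} (hD : 0 ≤ D) (h : σ * (a - b) ≤ D) :
    σ * (Real.sigmoid a - Real.sigmoid b) ≤ D := by
  rcases hσ with rfl | rfl
  · have hmono : Real.sigmoid a ≤ Real.sigmoid (b + D) := Real.sigmoid_monotone (by linarith)
    have hlip := abs_le.1 (abs_sigmoid_sub_le b (b + D))
    rw [add_sub_cancel_left, abs_of_nonneg hD] at hlip
    linarith
  · have hmono : Real.sigmoid (b - D) ≤ Real.sigmoid a := Real.sigmoid_monotone (by linarith)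
    have hlip := abs_le.1 (abs_sigmoid_sub_le (b - D) b)
    rw [sub_sub_cancel, abs_of_nonneg hD] at hlip
    linarith

theorem IsMeanField.mul_sigmoid_sub_le {Ψ Ψ' : ℝ → ℝ} {p ρ K : ℝ} (hm : IsMeanField Ψ Ψ' p ρ K)
    {a e D : ℝ} (he : 0 ≤ e) (hq : p + σ * e ∈ Set.Icc 0 1) (hD : 0 ≤ D)
    (h : σ * (a - Ψ (p + σ * e)) ≤ D) : σ * (Real.sigmoid a - p) ≤ ρ * e + D := by
  have hcontract := abs_le.1 (hm.contract _ hq)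
  have habs : |p + σ * e - p| = e := by
    rcases hσ with rfl | rfl <;> simp [abs_of_nonneg he]
  have hsig := _root_.mul_sigmoid_sub_le hσ hD h
  rw [habs] at hcontract
  rcases hσ with rfl | rfl <;> linarith

end Radius

namespace BoolCube.PolyHam

open FiniteProb

variable {ι A : Type*} [Fintype ι] [DecidableEq ι] [Fintype A]

/-- The configurations at which, on the side `σ`, some conditional probability is further than `e`
from `p`, or some local field or slope is further than `D` from its mean-field value at the
density `p + σ * e`. -/
def badSet (P : PolyHam ι A) (Ψ Ψ' : ℝ → ℝ) (σ p e D : ℝ) : Set (ι → Bool) :=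
  deviant P.condProb σ p e ∪
    (deviant P.locField σ (Ψ (p + σ * e)) D ∪ deviant P.locSlope σ (Ψ' (p + σ * e)) D)

variable {P : PolyHam ι A} {Ψ Ψ' : ℝ → ℝ} {p ρ K : ℝ} {n : ℕ}

theorem IsFerromagnetic.isUpperSet_badSet (hP : P.IsFerromagnetic) (Ψ Ψ' : ℝ → ℝ) (p e D : ℝ) :
    IsUpperSet (P.badSet Ψ Ψ' 1 p e D) :=
  (isUpperSet_deviant hP.monotone_condProb _ _).union
    ((isUpperSet_deviant hP.monotone_locField _ _).union
      (isUpperSet_deviant hP.monotone_locSlope _ _))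

theorem IsFerromagnetic.isLowerSet_badSet (hP : P.IsFerromagnetic) (Ψ Ψ' : ℝ → ℝ) (p e D : ℝ) :
    IsLowerSet (P.badSet Ψ Ψ' (-1) p e D) :=
  (isLowerSet_deviant hP.monotone_condProb _ _).union
    ((isLowerSet_deviant hP.monotone_locField _ _).union
      (isLowerSet_deviant hP.monotone_locSlope _ _))

theorem le_of_notMem_badSet {σ : ℝ} (hσ : σ = 1 ∨ σ = -1) (hm : IsMeanField Ψ Ψ' p ρ K)
    {e D : ℝ} (he : 0 ≤ e) (hq : p + σ * e ∈ Set.Ioo 0 1)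
    {x : ι → Bool} (hx : x ∉ P.badSet Ψ Ψ' σ p e D) (s : ι) :
    σ * (P.condProb s x - p) ≤ e ∧ σ * (P.locField s x - Ψ p) ≤ K * e + D ∧
      σ * (P.locSlope s x - Ψ' p) ≤ K * e + D := by
  simp only [badSet, Set.mem_union, not_or, notMem_deviant] at hx
  obtain ⟨hcond, hfield, hslope⟩ := hx
  have hqI := Set.Ioo_subset_Icc_self hq
  have hpI := Set.Ioo_subset_Icc_self hm.mem_Ioo
  have hlip := abs_le.1 (hm.lipschitz _ hqI p hpI)
  have hlip' := abs_le.1 (hm.slope_lipschitz _ hqI p hpI)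
  have habs : |p + σ * e - p| = e := by
    rcases hσ with rfl | rfl <;> simp [abs_of_nonneg he]
  rw [habs] at hlip hlip'
  have hfield := hfield s
  have hslope := hslope s
  refine ⟨hcond s, ?_, ?_⟩ <;> rcases hσ with rfl | rfl <;> linarith

namespace IsNear

variable {σ : ℝ} (hσ : σ = 1 ∨ σ = -1) (h : P.IsNear Ψ Ψ' K n) (hm : IsMeanField Ψ Ψ' p ρ K)
include hσ h hm

/-- One round of bootstrapping: a bound on the conditional probabilities bounds the local fields,
and hence, by contraction, gives a better bound on the conditional probabilities. -/
theorem mass_deviant_contract_le {e d : ℝ} (he : 0 ≤ e) (hq : p + σ * e ∈ Set.Ioo 0 1)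
    (hd : 0 ≤ d) :
    mass P.gibbs (deviant P.condProb σ p (ρ * e + (K / n + d))) ≤
      mass P.gibbs (deviant P.condProb σ p e) + Fintype.card ι * tailBound K d n := by
  have hμ : ∀ x, 0 ≤ P.gibbs x := P.gibbs_mem_stdSimplex.1
  have hD : 0 ≤ K / n + d := add_nonneg (div_nonneg hm.nonneg n.cast_nonneg) hd
  have hsub : deviant P.condProb σ p (ρ * e + (K / n + d)) ⊆ deviant P.condProb σ p e ∪
      ((deviant P.condProb σ p e)ᶜ ∩ deviant P.locField σ (Ψ (p + σ * e)) (K / n + d)) := by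
    rintro x ⟨s, hs⟩
    refine or_iff_not_imp_left.2 fun hx => ⟨hx, s, ?_⟩
    contrapose! hs
    exact hm.mul_sigmoid_sub_le hσ he (Set.Ioo_subset_Icc_self hq) hD hs
  exact (mass_mono hμ hsub).trans ((mass_union_le hμ _ _).trans
    (add_le_add_right (h.mass_compl_deviant_inter_deviant_locField_le hσ hm hq hd) _))

theorem deviant_radius_zero_eq_empty {d : ℝ} (hd : 0 ≤ d) :
    deviant P.condProb σ p (radius ρ (K / n + d) (distToEnd σ p) 0) = ∅ := by
  have hD : 0 ≤ K / n := div_nonneg hm.nonneg n.cast_nonneg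
  have hle : K / n ≤ (K / n + d) / (1 - ρ) := by
    rw [le_div_iff₀ (sub_pos.2 hm.rate_lt_one)]
    nlinarith [mul_nonneg hD hm.rate_nonneg]
  refine Set.eq_empty_of_forall_notMem fun x => notMem_deviant.2 fun s => ?_
  rw [radius, zero_add, pow_one]
  refine le_trans ?_ (add_le_add_right hle _)
  have hend : p + σ * distToEnd σ p ∈ Set.Icc (0 : ℝ) 1 ∧
      σ * (P.locField s x - Ψ (p + σ * distToEnd σ p)) ≤ K / n := by
    rcases hσ with rfl | rfl
    · rw [distToEnd_one, one_mul, add_sub_cancel]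
      exact ⟨by simp, by linarith [h.locField_le s x]⟩
    · rw [distToEnd_neg_one, neg_one_mul, add_neg_cancel]
      exact ⟨by simp, by linarith [h.le_locField s x]⟩
  exact hm.mul_sigmoid_sub_le hσ (distToEnd_pos hσ hm.mem_Ioo).le hend.1 hD hend.2

theorem mass_deviant_radius_le {d : ℝ} (hd : 0 ≤ d)
    (hsmall : (K / n + d) / (1 - ρ) < (1 - ρ) * distToEnd σ p) (i : ℕ) :
    mass P.gibbs (deviant P.condProb σ p (radius ρ (K / n + d) (distToEnd σ p) i)) ≤
      i * (Fintype.card ι * tailBound K d n) := by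
  have hD : 0 ≤ K / n + d := add_nonneg (div_nonneg hm.nonneg n.cast_nonneg) hd
  have hr := distToEnd_pos hσ hm.mem_Ioo
  induction i with
  | zero =>
    rw [h.deviant_radius_zero_eq_empty hσ hm hd]
    simp [mass, mean]
  | succ i ih =>
    have he : 0 ≤ radius ρ (K / n + d) (distToEnd σ p) i :=
      add_nonneg (mul_nonneg (pow_nonneg hm.rate_nonneg _) hr.le)
        (div_nonneg hD (sub_pos.2 hm.rate_lt_one).le)
    have hlt : radius ρ (K / n + d) (distToEnd σ p) i < distToEnd σ p := by
      have : ρ ^ (i + 1) ≤ ρ :=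
        pow_le_of_le_one hm.rate_nonneg hm.rate_lt_one.le (Nat.succ_ne_zero i)
      rw [radius]
      nlinarith
    rw [radius_succ hm.rate_lt_one]
    refine (h.mass_deviant_contract_le hσ hm he
      (add_mul_mem_Ioo hσ hm.mem_Ioo he hlt) hd).trans ?_
    push_cast
    linarith

theorem mass_badSet_le {e d : ℝ} (hd : 1 / n ≤ d) (he : (K + 2) / (1 - ρ) * d ≤ e)
    (hsmall : e < (1 - ρ) * distToEnd σ p) :
    mass P.gibbs (P.badSet Ψ Ψ' σ p e (K / n + d)) ≤
      (n + 2) * (Fintype.card ι * tailBound K d n) := by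
  have hμ : ∀ x, 0 ≤ P.gibbs x := P.gibbs_mem_stdSimplex.1
  have hd0 : 0 ≤ d := le_trans (by positivity) hd
  have hρ := sub_pos.2 hm.rate_lt_one
  have hr0 := distToEnd_pos hσ hm.mem_Ioo
  have he0 : 0 ≤ e := le_trans (mul_nonneg (div_nonneg (by linarith [hm.nonneg]) hρ.le) hd0) he
  have hrad := (radius_le hm.rate_nonneg hm.rate_lt_one (zero_lt_two.trans_le h.two_le) hm.nonneg hd
    (distToEnd_le_one hσ hm.mem_Ioo)).trans he
  have hlimit : (K / n + d) / (1 - ρ) < (1 - ρ) * distToEnd σ p := by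
    refine lt_of_le_of_lt (le_trans ?_ hrad) hsmall
    exact le_add_of_nonneg_left (mul_nonneg (pow_nonneg hm.rate_nonneg _) hr0.le)
  have hq : p + σ * e ∈ Set.Ioo 0 1 :=
    add_mul_mem_Ioo hσ hm.mem_Ioo he0 (hsmall.trans_le (by nlinarith [hm.rate_nonneg]))
  have hdev := (mass_mono hμ (deviant_anti hrad)).trans
    (h.mass_deviant_radius_le hσ hm hd0 hlimit n)
  have hfield := h.mass_compl_deviant_inter_deviant_locField_le hσ hm hq hd0
  have hslope := h.mass_compl_deviant_inter_deviant_locSlope_le hσ hm hq hd0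
  rw [badSet, ← Set.union_sdiff_self, Set.sdiff_eq, Set.inter_comm, Set.inter_union_distrib_left]
  refine (mass_union_le hμ _ _).trans ?_
  linarith [mass_union_le hμ
    ((deviant P.condProb σ p e)ᶜ ∩ deviant P.locField σ (Ψ (p + σ * e)) (K / n + d))
    ((deviant P.condProb σ p e)ᶜ ∩ deviant P.locSlope σ (Ψ' (p + σ * e)) (K / n + d))]

end IsNear

end BoolCube.PolyHam

/-! # Linearization of the conditional expectation of the size -/

namespace BoolCube

open FiniteProb Function

section Plateau

variable {ι : Type*} [Fintype ι]

/-- A function that grows at least as fast as `size` along every edge of the cube that ends in `U`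
or starts in `D`, but vanishes outside `U ∪ D`; here `U` is an up-set and `D` is a down-set. -/
def plateau (U D : Set (ι → Bool)) (x : ι → Bool) : ℝ :=
  U.indicator size x - D.indicator (fun x => Fintype.card ι - size x) x

theorem plateau_sq_le (U D : Set (ι → Bool)) (x : ι → Bool) :
    plateau U D x ^ 2 ≤
      (Fintype.card ι : ℝ) ^ 2 * (U.indicator 1 x + D.indicator 1 x) := by
  have hsize := size_nonneg x
  have hcard := size_le_card x
  by_cases hU : x ∈ U <;> by_cases hD : x ∈ D <;> simp only [plateau, hU, hD,
    Set.indicator_of_mem, Set.indicator_of_notMem, not_false_eq_true, Pi.one_apply] <;>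
    nlinarith [sq_nonneg (Fintype.card ι : ℝ)]

variable [DecidableEq ι] {U D : Set (ι → Bool)}

theorem indicator_le_discDeriv_indicator_size (hU : IsUpperSet U) (s : ι) (x : ι → Bool) :
    U.indicator 1 (update x s true) ≤ discDeriv (U.indicator size) s x := by
  have hsize : size (update x s true) - size (update x s false) = 1 := discDeriv_size s x
  have hnonneg := size_nonneg (update x s false)
  rw [discDeriv]
  by_cases htrue : update x s true ∈ U
  · by_cases hfalse : update x s false ∈ U <;> simp [htrue, hfalse] <;> linarith
  · have hfalse : update x s false ∉ U := fun h =>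
      htrue (hU (update_false_le_update_true x s) h)
    simp [htrue, hfalse]

theorem indicator_le_discDeriv_plateau (hU : IsUpperSet U) (hD : IsLowerSet D) (s : ι)
    (x : ι → Bool) :
    U.indicator 1 (update x s true) + D.indicator 1 (update x s false) ≤
      discDeriv (plateau U D) s x := by
  have hsize : size (update x s true) - size (update x s false) = 1 := discDeriv_size s x
  have hcard := size_le_card (update x s true)
  have hupper := indicator_le_discDeriv_indicator_size hU s x
  have hlower : D.indicator 1 (update x s false) ≤
      -discDeriv (D.indicator fun x => Fintype.card ι - size x) s x := by
    rw [discDeriv]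
    by_cases hfalse : update x s false ∈ D
    · by_cases htrue : update x s true ∈ D <;> simp [htrue, hfalse] <;> linarith
    · have htrue : update x s true ∉ D := fun h =>
        hfalse (hD (update_false_le_update_true x s) h)
      simp [htrue, hfalse]
  have hsub : discDeriv (plateau U D) s x = _ := discDeriv_sub _ _ s x
  linarith

theorem var_plateau_le {μ : (ι → Bool) → ℝ} (hμ : μ ∈ stdSimplex ℝ (ι → Bool)) :
    var μ (plateau U D) ≤ (Fintype.card ι : ℝ) ^ 2 * (mass μ U + mass μ D) := by
  refine (var_le_mean_sq hμ _).trans ((mean_mono hμ.1 (plateau_sq_le U D)).trans_eq ?_)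
  rw [mean_const_mul, mean_add, mass, mass]

end Plateau

namespace PolyHam

variable {ι A : Type*} [Fintype ι] [DecidableEq ι] [Fintype A] (P : PolyHam ι A)

/-- An up-set `U` and a down-set `D`, of small mass, outside of which the conditional
probabilities, the local fields and the local slopes are within `ε` of their mean-field values. -/
structure ExceptionalSets (Ψ Ψ' : ℝ → ℝ) (p ε : ℝ) (n : ℕ) (U D : Set (ι → Bool)) : Prop where
  nonneg : 0 ≤ ε
  upper : IsUpperSet U
  lower : IsLowerSet D
  mass_le : (n : ℝ) ^ 4 * (mass P.gibbs U + mass P.gibbs D) ≤ 1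
  condProb_near : ∀ x ∉ U, x ∉ D → ∀ s, |P.condProb s x - p| ≤ ε
  locField_near : ∀ x ∉ U, x ∉ D → ∀ s, |P.locField s x - Ψ p| ≤ ε
  locSlope_near : ∀ x ∉ U, x ∉ D → ∀ s, |P.locSlope s x - Ψ' p| ≤ ε

/-- The remainder in the linearization of the sum of the conditional probabilities. -/
def remainder (θ : ℝ) (x : ι → Bool) : ℝ := θ * size x - ∑ s, P.condProb s x

/-- The sum of the conditionally centred coordinates. -/
def centred (x : ι → Bool) : ℝ := ∑ s, (coord s x - P.condProb s x)

theorem discDeriv_remainder (θ : ℝ) (s : ι) (x : ι → Bool) :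
    discDeriv (P.remainder θ) s x = θ - ∑ u, discDeriv (P.condProb u) s x := by
  unfold remainder
  rw [discDeriv_sub, discDeriv_const_mul, discDeriv_size, discDeriv_sum, mul_one]

theorem centred_eq (θ : ℝ) (x : ι → Bool) :
    P.centred x = (1 - θ) * size x + P.remainder θ x := by
  rw [centred, Finset.sum_sub_distrib, remainder, size]
  ring

theorem discDeriv_centred (s : ι) (x : ι → Bool) :
    discDeriv P.centred s x = 1 - ∑ u, discDeriv (P.condProb u) s x := by
  rw [funext (P.centred_eq 0), discDeriv_add, discDeriv_const_mul, discDeriv_size,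
    discDeriv_remainder]
  ring

theorem mean_centred_mul (F : (ι → Bool) → ℝ) :
    mean P.gibbs (fun x => P.centred x * F x) =
      ∑ s, mean P.gibbs (fun x => P.condVar s x * discDeriv F s x) := by
  simp only [centred, Finset.sum_mul]
  rw [mean_sum]
  exact Finset.sum_congr rfl fun s _ => P.mean_coord_sub_condProb_mul s F

theorem mean_centred : mean P.gibbs P.centred = 0 := by
  simpa [discDeriv, mean] using P.mean_centred_mul 1

theorem centred_eq_sub_mean (θ : ℝ) (x : ι → Bool) :
    P.centred x = (1 - θ) * (size x - mean P.gibbs size) +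
      (P.remainder θ x - mean P.gibbs (P.remainder θ)) := by
  have hmean := P.mean_centred
  rw [funext (P.centred_eq θ), mean_add, mean_const_mul] at hmean
  rw [P.centred_eq θ]
  linarith

section CondVar

omit [Fintype ι]

theorem condVar_nonneg (s : ι) (x : ι → Bool) : 0 ≤ P.condVar s x :=
  mul_nonneg (P.condProb_pos s x).le (sub_nonneg.2 (P.condProb_lt_one s x).le)

theorem condVar_le_one (s : ι) (x : ι → Bool) : P.condVar s x ≤ 1 :=
  mul_le_one₀ (P.condProb_lt_one s x).le (sub_nonneg.2 (P.condProb_lt_one s x).le)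
    (sub_le_self _ (P.condProb_pos s x).le)

theorem abs_condVar_sub_le {p : ℝ} (hp : p ∈ Set.Ioo 0 1) (s : ι) (x : ι → Bool) :
    |P.condVar s x - p * (1 - p)| ≤ |P.condProb s x - p| := by
  have hfactor : P.condVar s x - p * (1 - p) =
      (P.condProb s x - p) * (1 - P.condProb s x - p) := by
    rw [condVar]; ring
  rw [hfactor, abs_mul]
  refine mul_le_of_le_one_right (abs_nonneg _) (abs_le.2 ?_)
  constructor <;> linarith [P.condProb_pos s x, P.condProb_lt_one s x, hp.1, hp.2]

end CondVar

theorem mean_centred_mul_le_card {F : (ι → Bool) → ℝ} (hF : ∀ s x, discDeriv F s x ≤ 1) :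
    mean P.gibbs (fun x => P.centred x * F x) ≤ Fintype.card ι := by
  rw [mean_centred_mul]
  refine (Finset.sum_le_card_nsmul _ _ 1 fun s _ => ?_).trans (by simp)
  rw [← mean_const P.gibbs_mem_stdSimplex.2 1]
  refine mean_mono P.gibbs_mem_stdSimplex.1 fun x => ?_
  exact (mul_le_of_le_one_right (P.condVar_nonneg s x) (hF s x)).trans (P.condVar_le_one s x)

theorem mul_var_size_sub_le_mean_centred_mul {θ : ℝ} (hθ : θ < 1) :
    3 * (1 - θ) / 4 * var P.gibbs size - 1 / (1 - θ) * var P.gibbs (P.remainder θ) ≤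
      mean P.gibbs (fun x => P.centred x * (size x - mean P.gibbs size)) := by
  rw [var, var, ← mean_const_mul, ← mean_const_mul, ← mean_sub]
  refine mean_mono P.gibbs_mem_stdSimplex.1 fun x => ?_
  rw [P.centred_eq_sub_mean θ]
  set a := size x - mean P.gibbs size
  set b := P.remainder θ x - mean P.gibbs (P.remainder θ)
  have hτ : 0 < 1 - θ := sub_pos.2 hθ
  have hsq : 0 ≤ (1 - θ) * (a / 2 + b / (1 - θ)) ^ 2 := mul_nonneg hτ.le (sq_nonneg _)
  have hexpand : (1 - θ) * (a / 2 + b / (1 - θ)) ^ 2 =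
      (1 - θ) / 4 * a ^ 2 + b * a + 1 / (1 - θ) * b ^ 2 := by
    field_simp
    ring
  linarith

variable {P} {Ψ Ψ' : ℝ → ℝ} {p ρ K ε : ℝ} {n : ℕ} {U D : Set (ι → Bool)}

namespace IsNear

variable (h : P.IsNear Ψ Ψ' K n)
include h

theorem div_le_self (hK : 0 ≤ K) : K / n ≤ K :=
  _root_.div_le_self hK (mod_cast one_le_two.trans h.two_le)

theorem sum_discDeriv_condProb_nonneg (s : ι) (x : ι → Bool) :
    0 ≤ ∑ u, discDeriv (P.condProb u) s x :=
  Finset.sum_nonneg fun u _ => discDeriv_nonneg (h.isFerromagnetic.monotone_condProb u) s x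

theorem locSlope_le (hm : IsMeanField Ψ Ψ' p ρ K) (s : ι) (x : ι → Bool) :
    P.locSlope s x ≤ 2 * K :=
  (Finset.sum_le_sum fun t _ => (le_abs_self _).trans
    (h.isFerromagnetic.abs_discDeriv_locField_le s t x)).trans (h.sum_influence_le hm s)

theorem mean_centred_sq_le : mean P.gibbs (fun x => P.centred x ^ 2) ≤ (n : ℝ) ^ 2 := by
  simp only [pow_two (P.centred _)]
  refine (P.mean_centred_mul_le_card fun s x => ?_).trans h.card_le
  rw [discDeriv_centred]
  exact sub_le_self _ (h.sum_discDeriv_condProb_nonneg s x)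

theorem abs_discDeriv_remainder_le (hm : IsMeanField Ψ Ψ' p ρ K) (s : ι) (x : ι → Bool) :
    |discDeriv (P.remainder (p * (1 - p) * Ψ' p)) s x| ≤ 3 * K := by
  have hnonneg := h.sum_discDeriv_condProb_nonneg s x
  have hle : ∑ u, discDeriv (P.condProb u) s x ≤ P.locSlope s x :=
    Finset.sum_le_sum fun u _ => by
      rw [P.discDeriv_locField_comm s u,
        ← abs_of_nonneg (h.isFerromagnetic.discDeriv_locField_nonneg u s x)]
      exact (le_abs_self _).trans (abs_sigmoid_sub_le _ _)
  have hθ : 0 ≤ p * (1 - p) * Ψ' p :=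
    mul_nonneg (mul_nonneg hm.mem_Ioo.1.le (sub_pos.2 hm.mem_Ioo.2).le) hm.slope_nonneg
  rw [discDeriv_remainder, abs_le]
  constructor <;> linarith [h.locSlope_le hm s x, hm.subcritical, hm.one_le]

theorem abs_discDeriv_remainder_le_of_notMem (hm : IsMeanField Ψ Ψ' p ρ K)
    (hUD : P.ExceptionalSets Ψ Ψ' p ε n U D) {s : ι} {x : ι → Bool}
    (htrue : update x s true ∉ U) (hfalse : update x s false ∉ D) :
    |discDeriv (P.remainder (p * (1 - p) * Ψ' p)) s x| ≤ (2 * K + 1) * ε := by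
  have hfalse' : update x s false ∉ U := fun h =>
    htrue (hUD.upper (update_false_le_update_true x s) h)
  have htrue' : update x s true ∉ D := fun h =>
    hfalse (hUD.lower (update_false_le_update_true x s) h)
  have hcond (u : ι) : |discDeriv (P.condProb u) s x - p * (1 - p) * discDeriv (P.locField s) u x|
      ≤ ε * discDeriv (P.locField s) u x := by
    have hsig := abs_sigmoid_sub_sub_le (hUD.locField_near _ hfalse' hfalse u)
      (hUD.locField_near _ htrue htrue' u)
    rw [hm.fixed] at hsig
    rw [P.discDeriv_locField_comm s u]
    refine hsig.trans_eq ?_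
    rw [← abs_of_nonneg (h.isFerromagnetic.discDeriv_locField_nonneg u s x), discDeriv]
  have hsum : |∑ u, discDeriv (P.condProb u) s x - p * (1 - p) * P.locSlope s x| ≤
      ε * P.locSlope s x := by
    rw [locSlope, Finset.mul_sum, Finset.mul_sum, ← Finset.sum_sub_distrib]
    exact (Finset.abs_sum_le_sum_abs _ _).trans (Finset.sum_le_sum fun u _ => hcond u)
  have hslope := hUD.locSlope_near _ htrue htrue' s
  simp only [locSlope_update] at hslope
  obtain ⟨hp0, hp1⟩ := hm.mem_Ioo
  have hw : |p * (1 - p)| ≤ 1 := by rw [abs_le]; constructor <;> nlinarith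
  calc |discDeriv (P.remainder (p * (1 - p) * Ψ' p)) s x|
      = |-(∑ u, discDeriv (P.condProb u) s x - p * (1 - p) * P.locSlope s x) -
          p * (1 - p) * (P.locSlope s x - Ψ' p)| := by
        rw [discDeriv_remainder]
        congr 1
        ring
    _ ≤ ε * P.locSlope s x + 1 * ε := by
        refine (abs_sub _ _).trans (add_le_add ((abs_neg _).trans_le hsum) ?_)
        rw [abs_mul]
        exact mul_le_mul hw hslope (abs_nonneg _) zero_le_one
    _ ≤ (2 * K + 1) * ε := by nlinarith [h.locSlope_le hm s x, hUD.nonneg]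

theorem abs_discDeriv_remainder_le_discDeriv (hm : IsMeanField Ψ Ψ' p ρ K)
    (hUD : P.ExceptionalSets Ψ Ψ' p ε n U D) (s : ι) (x : ι → Bool) :
    |discDeriv (P.remainder (p * (1 - p) * Ψ' p)) s x| ≤
      discDeriv (fun x => (2 * K + 1) * ε * size x + 3 * K * plateau U D x) s x := by
  have hK := hm.nonneg
  have hplateau := indicator_le_discDeriv_plateau hUD.upper hUD.lower s x
  have hε : 0 ≤ (2 * K + 1) * ε := mul_nonneg (by linarith) hUD.nonneg
  have hU0 : 0 ≤ U.indicator (1 : (ι → Bool) → ℝ) (update x s true) :=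
    Set.indicator_nonneg (by simp) _
  have hD0 : 0 ≤ D.indicator (1 : (ι → Bool) → ℝ) (update x s false) :=
    Set.indicator_nonneg (by simp) _
  rw [discDeriv_add, discDeriv_const_mul, discDeriv_const_mul, discDeriv_size]
  by_cases hgood : update x s true ∉ U ∧ update x s false ∉ D
  · have := h.abs_discDeriv_remainder_le_of_notMem hm hUD hgood.1 hgood.2
    nlinarith
  · have hone : 1 ≤ discDeriv (plateau U D) s x := by
      rw [not_and_or, not_not, not_not] at hgood
      rcases hgood with hU | hD
      · rw [Set.indicator_of_mem hU, Pi.one_apply] at hplateau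
        linarith
      · rw [Set.indicator_of_mem hD, Pi.one_apply] at hplateau
        linarith
    have := h.abs_discDeriv_remainder_le hm s x
    nlinarith

theorem var_remainder_le (hm : IsMeanField Ψ Ψ' p ρ K)
    (hUD : P.ExceptionalSets Ψ Ψ' p ε n U D) :
    var P.gibbs (P.remainder (p * (1 - p) * Ψ' p)) ≤
      2 * ((2 * K + 1) * ε) ^ 2 * var P.gibbs size + 18 * K ^ 2 := by
  have hμ : ∀ x, 0 ≤ P.gibbs x := P.gibbs_mem_stdSimplex.1
  have hplateau : var P.gibbs (plateau U D) ≤ 1 := by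
    refine (var_plateau_le P.gibbs_mem_stdSimplex).trans (le_trans ?_ hUD.mass_le)
    refine mul_le_mul_of_nonneg_right ?_ (add_nonneg (mass_nonneg hμ U) (mass_nonneg hμ D))
    calc (Fintype.card ι : ℝ) ^ 2 ≤ ((n : ℝ) ^ 2) ^ 2 :=
          pow_le_pow_left₀ (Nat.cast_nonneg _) h.card_le 2
      _ = (n : ℝ) ^ 4 := by ring
  refine (var_le_var_of_abs_discDeriv_le h.isFerromagnetic.isFKG_gibbs
    (h.abs_discDeriv_remainder_le_discDeriv hm hUD)).trans ((var_add_le hμ _ _).trans ?_)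
  rw [var_const_mul, var_const_mul]
  nlinarith [mul_le_mul_of_nonneg_left hplateau (sq_nonneg (3 * K))]

theorem var_size_le (hm : IsMeanField Ψ Ψ' p ρ K) (hUD : P.ExceptionalSets Ψ Ψ' p ε n U D)
    (hε : 8 * ((2 * K + 1) * ε) ^ 2 ≤ (1 - p * (1 - p) * Ψ' p) ^ 2) :
    var P.gibbs size ≤ 2 / (1 - p * (1 - p) * Ψ' p) *
      (n ^ 2 + 18 * K ^ 2 / (1 - p * (1 - p) * Ψ' p)) := by
  have hlower := P.mul_var_size_sub_le_mean_centred_mul hm.subcritical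
  have hvar := h.var_remainder_le hm hUD
  have hτ0 := sub_pos.2 hm.subcritical
  set θ := p * (1 - p) * Ψ' p
  set τ := 1 - θ
  have hsize := var_nonneg P.gibbs_mem_stdSimplex.1 (size (ι := ι))
  have hupper : mean P.gibbs (fun x => P.centred x * (size x - mean P.gibbs size)) ≤
      (n : ℝ) ^ 2 := by
    refine (P.mean_centred_mul_le_card fun s x => ?_).trans h.card_le
    rw [discDeriv_sub, discDeriv_size]
    simp [discDeriv]
  have hremainder : 1 / τ * var P.gibbs (P.remainder θ) ≤
      τ / 4 * var P.gibbs size + 18 * K ^ 2 / τ :=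
    calc 1 / τ * var P.gibbs (P.remainder θ)
        ≤ 1 / τ * (τ ^ 2 / 4 * var P.gibbs size + 18 * K ^ 2) := by
          gcongr
          exact hvar.trans (add_le_add_left
            (mul_le_mul_of_nonneg_right (by linarith) hsize) _)
      _ = τ / 4 * var P.gibbs size + 18 * K ^ 2 / τ := by field_simp
  calc var P.gibbs size = 2 / τ * (τ / 2 * var P.gibbs size) := by field_simp
    _ ≤ 2 / τ * (n ^ 2 + 18 * K ^ 2 / τ) := by
      gcongr
      linarith

theorem mean_abs_condVar_sub_le (hm : IsMeanField Ψ Ψ' p ρ K)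
    (hUD : P.ExceptionalSets Ψ Ψ' p ε n U D) (s : ι) :
    mean P.gibbs (fun x => |P.condVar s x - p * (1 - p)|) ≤ ε + 1 / n := by
  have hμ : ∀ x, 0 ≤ P.gibbs x := P.gibbs_mem_stdSimplex.1
  have hn : (1 : ℝ) ≤ n := mod_cast one_le_two.trans h.two_le
  have hpoint (x : ι → Bool) : |P.condVar s x - p * (1 - p)| ≤
      ε + (U.indicator 1 x + D.indicator 1 x) := by
    refine (P.abs_condVar_sub_le hm.mem_Ioo s x).trans ?_
    have hle_one : |P.condProb s x - p| ≤ 1 := by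
      rw [abs_le]
      constructor <;>
        linarith [P.condProb_pos s x, P.condProb_lt_one s x, hm.mem_Ioo.1, hm.mem_Ioo.2]
    have hε := hUD.nonneg
    by_cases hU : x ∈ U <;> by_cases hD : x ∈ D <;> simp only [hU, hD,
      Set.indicator_of_mem, Set.indicator_of_notMem, not_false_eq_true, Pi.one_apply]
    · linarith
    · linarith
    · linarith
    · linarith [hUD.condProb_near x hU hD s]
  have hmass : mass P.gibbs U + mass P.gibbs D ≤ 1 / n := by
    rw [le_div_iff₀ (by positivity), mul_comm]
    exact (mul_le_mul_of_nonneg_right (le_self_pow₀ hn (by norm_num))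
      (add_nonneg (mass_nonneg hμ U) (mass_nonneg hμ D))).trans hUD.mass_le
  refine (mean_mono hμ hpoint).trans ?_
  rw [mean_add, mean_const P.gibbs_mem_stdSimplex.2, mean_add]
  exact add_le_add_right hmass _

theorem le_condVar (hm : IsMeanField Ψ Ψ' p ρ K) (s : ι) (x : ι → Bool) :
    Real.sigmoid (-(2 * K)) ^ 2 ≤ P.condVar s x := by
  have hdiv := h.div_le_self hm.nonneg
  have hone := abs_le.1 (hm.abs_field_le 1 (by simp))
  have hzero := abs_le.1 (hm.abs_field_le 0 (by simp))
  have hon : Real.sigmoid (-(2 * K)) ≤ P.condProb s x :=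
    Real.sigmoid_monotone (by linarith [h.le_locField s x])
  have hoff : Real.sigmoid (-(2 * K)) ≤ 1 - P.condProb s x := by
    rw [condProb, ← Real.sigmoid_neg]
    exact Real.sigmoid_monotone (by linarith [h.locField_le s x])
  rw [condVar, pow_two]
  exact mul_le_mul hon hoff (Real.sigmoid_pos _).le (P.condProb_pos s x).le

end IsNear

end PolyHam

end BoolCube

/-! # Existence of exceptional sets -/

section QuarterPower

open Filter Topology BoolCube.PolyHam

theorem tendsto_natCast_rpow_neg_quarter :
    Tendsto (fun n : ℕ => (n : ℝ) ^ (-(1 / 4) : ℝ)) atTop (𝓝 0) :=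
  (tendsto_rpow_neg_atTop (by norm_num)).comp tendsto_natCast_atTop_atTop

theorem one_div_le_rpow_neg_quarter {n : ℕ} (hn : 1 ≤ n) :
    1 / (n : ℝ) ≤ (n : ℝ) ^ (-(1 / 4) : ℝ) := by
  rw [one_div, ← Real.rpow_neg_one]
  exact Real.rpow_le_rpow_of_exponent_le (mod_cast hn) (by norm_num)

theorem rpow_neg_quarter_sq_mul {n : ℕ} (hn : 1 ≤ n) :
    ((n : ℝ) ^ (-(1 / 4) : ℝ)) ^ 2 * n = (n : ℝ) ^ (1 / 2 : ℝ) := by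
  have hn0 : (0 : ℝ) < n := mod_cast hn
  rw [← Real.rpow_natCast, ← Real.rpow_mul hn0.le]
  nth_rewrite 2 [← Real.rpow_one (n : ℝ)]
  rw [← Real.rpow_add hn0]
  norm_num

theorem eventually_pow_mul_tailBound_le {K : ℝ} (hK : 1 ≤ K) : ∀ᶠ n : ℕ in atTop,
    (n : ℝ) ^ 4 * (2 * ((n + 2) * ((n : ℝ) ^ 2 *
      tailBound K ((n : ℝ) ^ (-(1 / 4) : ℝ)) n))) ≤ 1 := by
  have hlim := (tendsto_rpow_mul_exp_neg_mul_atTop_nhds_zero 14 (1 / (8 * K ^ 4))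
    (by positivity)).comp
      ((tendsto_rpow_atTop (y := 1 / 2) (by norm_num)).comp tendsto_natCast_atTop_atTop)
  filter_upwards [hlim.eventually (ge_mem_nhds (show (0 : ℝ) < 1 / 4 by norm_num)),
    eventually_ge_atTop 2] with n hsmall hn
  have hn2 : (2 : ℝ) ≤ n := mod_cast hn
  have htail : tailBound K ((n : ℝ) ^ (-(1 / 4) : ℝ)) n =
      Real.exp (-(1 / (8 * K ^ 4)) * (n : ℝ) ^ (1 / 2 : ℝ)) := by
    rw [tailBound, rpow_neg_quarter_sq_mul (by omega)]
    congr 1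
    ring
  simp only [Function.comp_apply, ← htail] at hsmall
  rw [← Real.rpow_mul (by positivity), show (1 / 2 : ℝ) * 14 = (7 : ℕ) by norm_num,
    Real.rpow_natCast] at hsmall
  set E := tailBound K ((n : ℝ) ^ (-(1 / 4) : ℝ)) n
  have hE : 0 ≤ (n : ℝ) ^ 6 * E := mul_nonneg (by positivity) (Real.exp_pos _).le
  nlinarith

end QuarterPower

namespace BoolCube.PolyHam.IsNear

open FiniteProb

variable {ι A : Type*} [Fintype ι] [DecidableEq ι] [Fintype A] {P : PolyHam ι A}
variable {Ψ Ψ' : ℝ → ℝ} {p ρ K : ℝ} {n : ℕ}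

theorem exists_exceptionalSets (h : P.IsNear Ψ Ψ' K n) (hm : IsMeanField Ψ Ψ' p ρ K) {d : ℝ}
    (hd : 1 / n ≤ d) (hzero : (K + 2) / (1 - ρ) * d < (1 - ρ) * p)
    (hone : (K + 2) / (1 - ρ) * d < (1 - ρ) * (1 - p))
    (hn : (n : ℝ) ^ 4 * (2 * ((n + 2) * ((n : ℝ) ^ 2 * tailBound K d n))) ≤ 1) :
    ∃ U D, P.ExceptionalSets Ψ Ψ' p ((K * ((K + 2) / (1 - ρ)) + K + 1) * d) n U D := by
  have hK := hm.one_le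
  have hρ := sub_pos.2 hm.rate_lt_one
  have hd0 : 0 ≤ d := le_trans (by positivity) hd
  have hKn : K / n ≤ K * d := by
    rw [div_eq_mul_one_div]
    exact mul_le_mul_of_nonneg_left hd hm.nonneg
  set e := (K + 2) / (1 - ρ) * d with he
  have he0 : 0 ≤ e := by positivity
  have hside {σ : ℝ} (hσ : σ = 1 ∨ σ = -1) : e < (1 - ρ) * distToEnd σ p := by
    rcases hσ with rfl | rfl
    · rwa [distToEnd_one]
    · rwa [distToEnd_neg_one]
  have hmass {σ : ℝ} (hσ : σ = 1 ∨ σ = -1) : mass P.gibbs (P.badSet Ψ Ψ' σ p e (K / n + d)) ≤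
      (n + 2) * ((n : ℝ) ^ 2 * tailBound K d n) :=
    (h.mass_badSet_le hσ hm hd le_rfl (hside hσ)).trans (by
      gcongr
      exacts [(Real.exp_pos _).le, h.card_le])
  have hnear {σ : ℝ} (hσ : σ = 1 ∨ σ = -1) {x : ι → Bool}
      (hx : x ∉ P.badSet Ψ Ψ' σ p e (K / n + d)) :=
    le_of_notMem_badSet hσ hm he0 (add_mul_mem_Ioo hσ hm.mem_Ioo he0
      ((hside hσ).trans_le (by nlinarith [hm.rate_nonneg, distToEnd_pos hσ hm.mem_Ioo]))) hx
  have hpos : (1 : ℝ) = 1 ∨ (1 : ℝ) = -1 := .inl rfl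
  have hneg : (-1 : ℝ) = 1 ∨ (-1 : ℝ) = -1 := .inr rfl
  have hε : (K * ((K + 2) / (1 - ρ)) + K + 1) * d = K * e + K * d + d := by rw [he]; ring
  rw [hε]
  refine ⟨P.badSet Ψ Ψ' 1 p e (K / n + d), P.badSet Ψ Ψ' (-1) p e (K / n + d), by positivity,
    h.isFerromagnetic.isUpperSet_badSet _ _ _ _ _, h.isFerromagnetic.isLowerSet_badSet _ _ _ _ _,
    (mul_le_mul_of_nonneg_left ?_ (by positivity)).trans hn, ?_, ?_, ?_⟩
  · linarith [hmass hpos, hmass hneg]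
  all_goals
    intro x hU hD s
    obtain ⟨hcond, hfield, hslope⟩ := hnear hpos hU s
    obtain ⟨hcond', hfield', hslope'⟩ := hnear hneg hD s
    rw [abs_le]
    constructor <;> nlinarith

end BoolCube.PolyHam.IsNear

open Filter in
theorem IsMeanField.exists_exceptionalSets {Ψ Ψ' : ℝ → ℝ} {p ρ K : ℝ}
    (hm : IsMeanField Ψ Ψ' p ρ K) :
    ∃ C : ℝ, ∃ n₀ : ℕ, 0 < C ∧ ∀ n : ℕ, n₀ ≤ n →
      8 * ((2 * K + 1) * (C * (n : ℝ) ^ (-(1 / 4) : ℝ))) ^ 2 ≤ (1 - p * (1 - p) * Ψ' p) ^ 2 ∧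
      ∀ {ι A : Type} [Fintype ι] [DecidableEq ι] [Fintype A] (P : BoolCube.PolyHam ι A),
        P.IsNear Ψ Ψ' K n →
          ∃ U D, P.ExceptionalSets Ψ Ψ' p (C * (n : ℝ) ^ (-(1 / 4) : ℝ)) n U D := by
  have hK := hm.one_le
  have hρ := sub_pos.2 hm.rate_lt_one
  have hp0 := hm.mem_Ioo.1
  have hp1 := sub_pos.2 hm.mem_Ioo.2
  have hτ := sub_pos.2 hm.subcritical
  set C := K * ((K + 2) / (1 - ρ)) + K + 1
  have hlim := tendsto_natCast_rpow_neg_quarter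
  have hlt {b : ℝ} (hb : 0 < b) :
      ∀ᶠ n : ℕ in atTop, (K + 2) / (1 - ρ) * (n : ℝ) ^ (-(1 / 4) : ℝ) < b :=
    (hlim.const_mul _).eventually (gt_mem_nhds (by rwa [mul_zero]))
  have hsq : ∀ᶠ n : ℕ in atTop, 8 * ((2 * K + 1) * (C * (n : ℝ) ^ (-(1 / 4) : ℝ))) ^ 2 ≤
      (1 - p * (1 - p) * Ψ' p) ^ 2 :=
    ((((hlim.const_mul C).const_mul (2 * K + 1)).pow 2).const_mul 8).eventually
      (ge_mem_nhds (by simpa using pow_pos hτ 2))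
  obtain ⟨n₀, hn₀⟩ := eventually_atTop.1 ((hlt (mul_pos hρ hp0)).and
    ((hlt (mul_pos hρ hp1)).and (hsq.and (eventually_pow_mul_tailBound_le hK))))
  refine ⟨C, n₀, by positivity, fun n hn => ?_⟩
  obtain ⟨hzero, hone, hsq, htail⟩ := hn₀ n hn
  exact ⟨hsq, fun P h => h.exists_exceptionalSets hm
    (one_div_le_rpow_neg_quarter (one_le_two.trans h.two_le)) hzero hone htail⟩
/-! # Stein's equation for the standard normal law -/

/-- The standard normal distribution function. -/
def gaussCdf (z : ℝ) : ℝ := cdf (gaussianReal 0 1) z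

/-- The standard normal density. -/
def gaussPdf (z : ℝ) : ℝ := gaussianPDFReal 0 1 z

theorem gaussPdf_pos (z : ℝ) : 0 < gaussPdf z := gaussianPDFReal_pos 0 1 z one_ne_zero

theorem gaussPdf_eq (z : ℝ) : gaussPdf z = (√(2 * π))⁻¹ * exp (-(1 / 2) * z ^ 2) := by
  rw [gaussPdf, gaussianPDFReal_def]
  simp only [NNReal.coe_one, mul_one, sub_zero]
  ring_nf

theorem gaussPdf_neg (z : ℝ) : gaussPdf (-z) = gaussPdf z := by
  rw [gaussPdf_eq, gaussPdf_eq, neg_sq]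

theorem hasDerivAt_gaussPdf (z : ℝ) : HasDerivAt gaussPdf (-z * gaussPdf z) z := by
  have hderiv : HasDerivAt (fun z : ℝ => (√(2 * π))⁻¹ * exp (-(1 / 2) * z ^ 2))
      ((√(2 * π))⁻¹ * (exp (-(1 / 2) * z ^ 2) * (-(1 / 2) * (2 * z)))) z := by
    refine HasDerivAt.const_mul _ (HasDerivAt.exp (HasDerivAt.const_mul _ ?_))
    simpa using hasDerivAt_pow 2 z
  rw [funext gaussPdf_eq]
  convert hderiv using 1
  ring

theorem continuous_gaussPdf : Continuous gaussPdf :=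
  continuous_iff_continuousAt.2 fun z => (hasDerivAt_gaussPdf z).continuousAt

theorem integrable_gaussPdf : Integrable gaussPdf := integrable_gaussianPDFReal 0 1

theorem gaussCdf_eq_integral (z : ℝ) : gaussCdf z = ∫ x in Set.Iic z, gaussPdf x := by
  rw [gaussCdf, cdf_eq_real, measureReal_def, gaussianReal_apply_eq_integral 0 one_ne_zero,
    ENNReal.toReal_ofReal]
  · rfl
  · exact integral_nonneg fun x => gaussianPDFReal_nonneg 0 1 x

theorem hasDerivAt_gaussCdf (z : ℝ) : HasDerivAt gaussCdf (gaussPdf z) z := by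
  have hcdf : gaussCdf = fun z => gaussCdf 0 + ∫ x in (0 : ℝ)..z, gaussPdf x := by
    funext z
    rw [gaussCdf_eq_integral, gaussCdf_eq_integral, ← intervalIntegral.integral_Iic_sub_Iic
      integrable_gaussPdf.integrableOn integrable_gaussPdf.integrableOn]
    ring
  rw [hcdf]
  exact (continuous_gaussPdf.integral_hasStrictDerivAt 0 z).hasDerivAt.const_add _

theorem gaussCdf_nonneg (z : ℝ) : 0 ≤ gaussCdf z := cdf_nonneg _ z

theorem gaussCdf_le_one (z : ℝ) : gaussCdf z ≤ 1 := cdf_le_one _ z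

theorem gaussCdf_add_neg (z : ℝ) : gaussCdf z + gaussCdf (-z) = 1 := by
  have hneg : gaussCdf (-z) = (gaussianReal 0 1).real (Set.Ici z) := by
    rw [gaussCdf, cdf_eq_real, measureReal_def]
    nth_rewrite 1 [← neg_zero (G := ℝ), ← gaussianReal_map_neg]
    rw [Measure.map_apply measurable_neg measurableSet_Iic]
    simp [measureReal_def]
  have : NullSingletonClass (gaussianReal 0 1) :=
    nullSingletonClass_gaussianReal one_ne_zero
  rw [hneg, gaussCdf, cdf_eq_real,
    ← measureReal_congr (Ioi_ae_eq_Ici (μ := gaussianReal 0 1) (a := z)), ← Set.compl_Iic]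
  exact probReal_add_probReal_compl measurableSet_Iic

open Filter Topology in
theorem tendsto_gaussPdf_atBot : Tendsto gaussPdf atBot (𝓝 0) := by
  have hsq : Tendsto (fun z : ℝ => (1 / 2) * z ^ 2) atBot atTop :=
    (tendsto_pow_atTop (two_ne_zero)).comp tendsto_abs_atBot_atTop |>.congr
      (fun x => by simp) |>.const_mul_atTop (by norm_num)
  have hexp := (tendsto_exp_neg_atTop_nhds_zero.comp hsq).const_mul (√(2 * π))⁻¹
  rw [mul_zero] at hexp
  refine hexp.congr fun z => ?_
  rw [gaussPdf_eq, Function.comp_apply, neg_mul]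

theorem integrable_neg_mul_gaussPdf : Integrable fun x => -x * gaussPdf x := by
  refine ((integrable_mul_exp_neg_mul_sq (b := 1 / 2) (by norm_num)).const_mul
    (-(√(2 * π))⁻¹)).congr (Filter.Eventually.of_forall fun x => ?_)
  simp only [gaussPdf_eq]
  ring

theorem neg_mul_gaussCdf_le (z : ℝ) : -z * gaussCdf z ≤ gaussPdf z := by
  have hpdf := integral_Iic_of_hasDerivAt_of_tendsto' (a := z)
    (fun x _ => hasDerivAt_gaussPdf x) integrable_neg_mul_gaussPdf.integrableOn
    tendsto_gaussPdf_atBot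
  rw [sub_zero] at hpdf
  rw [← hpdf, gaussCdf_eq_integral, ← integral_const_mul]
  exact setIntegral_mono_on (integrable_gaussPdf.const_mul _).integrableOn
    integrable_neg_mul_gaussPdf.integrableOn measurableSet_Iic fun x hx =>
      mul_le_mul_of_nonneg_right (neg_le_neg hx) (gaussPdf_pos x).le

/-- The Mills ratio of the lower tail of the standard normal law. -/
def mills (z : ℝ) : ℝ := gaussCdf z / gaussPdf z

theorem mills_nonneg (z : ℝ) : 0 ≤ mills z := div_nonneg (gaussCdf_nonneg z) (gaussPdf_pos z).le

theorem neg_mul_mills_le (z : ℝ) : -z * mills z ≤ 1 := by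
  rw [mills, ← mul_div_assoc, div_le_one (gaussPdf_pos z)]
  exact neg_mul_gaussCdf_le z

theorem hasDerivAt_mills (z : ℝ) : HasDerivAt mills (1 + z * mills z) z := by
  have hpdf := (gaussPdf_pos z).ne'
  refine ((hasDerivAt_gaussCdf z).div (hasDerivAt_gaussPdf z) hpdf).congr_deriv ?_
  rw [mills]
  field_simp
  ring

theorem monotone_mills : Monotone mills :=
  monotone_of_deriv_nonneg (fun z => (hasDerivAt_mills z).differentiableAt) fun z => by
    rw [(hasDerivAt_mills z).deriv]
    linarith [neg_mul_mills_le z]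

theorem gaussCdf_neg_mul_mills (z : ℝ) :
    gaussCdf (-z) * mills z = gaussCdf z * mills (-z) := by
  rw [mills, mills, gaussPdf_neg]
  ring

theorem gaussCdf_neg_mul_mills_le (z : ℝ) : gaussCdf (-z) * mills z ≤ mills 0 := by
  wlog hz : z ≤ 0 generalizing z
  · rw [gaussCdf_neg_mul_mills]
    simpa using this (-z) (by linarith)
  · exact (mul_le_of_le_one_left (mills_nonneg z) (gaussCdf_le_one _)).trans (monotone_mills hz)

theorem gaussCdf_neg_mul_mul_mills_le (z : ℝ) : gaussCdf (-z) * (z * mills z) ≤ 1 := by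
  have hflip : gaussCdf (-z) * (z * mills z) = gaussCdf z * (-(-z) * mills (-z)) := by
    rw [neg_neg, mul_left_comm, gaussCdf_neg_mul_mills, mul_left_comm]
  rw [hflip]
  exact (mul_le_of_le_one_right (gaussCdf_nonneg z) (neg_mul_mills_le _)).trans (gaussCdf_le_one z)

/-- The bounded solution `f` of Stein's equation `f'(w) - w f(w) = 1(w ≤ z) - Φ(z)`. -/
def steinSol (z w : ℝ) : ℝ :=
  if w ≤ z then gaussCdf (-z) * mills w else gaussCdf z * mills (-w)

theorem steinSol_of_le {z w : ℝ} (h : w ≤ z) : steinSol z w = gaussCdf (-z) * mills w := if_pos h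

theorem steinSol_neg (z w : ℝ) : steinSol (-z) (-w) = steinSol z w := by
  rcases lt_trichotomy w z with h | rfl | h
  · rw [steinSol, steinSol, if_neg (by linarith), if_pos h.le, neg_neg]
  · rw [steinSol_of_le le_rfl, steinSol_of_le le_rfl, gaussCdf_neg_mul_mills, neg_neg]
  · rw [steinSol, steinSol, if_pos (by linarith), if_neg (by linarith), neg_neg]

theorem steinSol_nonneg (z w : ℝ) : 0 ≤ steinSol z w := by
  rw [steinSol]
  split_ifs
  · exact mul_nonneg (gaussCdf_nonneg _) (mills_nonneg _)
  · exact mul_nonneg (gaussCdf_nonneg _) (mills_nonneg _)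

theorem steinSol_le (z w : ℝ) : steinSol z w ≤ mills 0 := by
  wlog h : w ≤ z generalizing z w
  · rw [← steinSol_neg]
    exact this (-z) (-w) (by linarith)
  · rw [steinSol_of_le h]
    exact (mul_le_mul_of_nonneg_left (monotone_mills h) (gaussCdf_nonneg _)).trans
      (gaussCdf_neg_mul_mills_le z)

/-- The derivative of `steinSol z` prescribed by Stein's equation, with the left derivative chosen
at the kink `w = z`. -/
def steinSlope (z w : ℝ) : ℝ := w * steinSol z w + (if w ≤ z then 1 else 0) - gaussCdf z

theorem steinSlope_of_le {z w : ℝ} (h : w ≤ z) :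
    steinSlope z w = gaussCdf (-z) * (1 + w * mills w) := by
  rw [steinSlope, steinSol_of_le h, if_pos h]
  linarith [gaussCdf_add_neg z]

theorem steinSlope_neg {z w : ℝ} (h : w ≠ z) : steinSlope (-z) (-w) = -steinSlope z w := by
  have hadd := gaussCdf_add_neg z
  rw [steinSlope, steinSlope, steinSol_neg]
  rcases lt_or_gt_of_ne h with h | h
  · rw [if_neg (by linarith), if_pos h.le]
    linarith
  · rw [if_pos (by linarith), if_neg (by linarith)]
    linarith

theorem abs_steinSlope_le (z w : ℝ) : |steinSlope z w| ≤ 2 := by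
  wlog h : w ≤ z generalizing z w
  · rw [← abs_neg, ← steinSlope_neg (by rintro rfl; exact h le_rfl)]
    exact this (-z) (-w) (by linarith)
  · have hcdf := gaussCdf_nonneg (-z)
    have hcdf_le := gaussCdf_le_one (-z)
    rw [steinSlope_of_le h, abs_of_nonneg (mul_nonneg hcdf (by linarith [neg_mul_mills_le w]))]
    rcases le_total w 0 with hw | hw
    · nlinarith [mul_nonneg (neg_nonneg.2 hw) (mills_nonneg w)]
    · have hmills : w * mills w ≤ z * mills z :=
        mul_le_mul h (monotone_mills h) (mills_nonneg w) (hw.trans h)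
      linarith [mul_le_mul_of_nonneg_left hmills hcdf, gaussCdf_neg_mul_mul_mills_le z]

theorem exists_steinSol_sub_eq {z a b : ℝ} (hab : a < b) (hb : b ≤ z) :
    ∃ c ∈ Set.Ioo a b, steinSol z b - steinSol z a = (b - a) * steinSlope z c := by
  have hderiv : ∀ x, HasDerivAt (fun w => gaussCdf (-z) * mills w)
      (gaussCdf (-z) * (1 + x * mills x)) x := fun x => (hasDerivAt_mills x).const_mul _
  obtain ⟨c, hc, hslope⟩ := exists_hasDerivAt_eq_slope _ _ hab
    (fun x _ => (hderiv x).continuousAt.continuousWithinAt) fun x _ => hderiv x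
  refine ⟨c, hc, ?_⟩
  rw [steinSlope_of_le (hc.2.le.trans hb), hslope, steinSol_of_le hb,
    steinSol_of_le (hab.le.trans hb), mul_div_cancel₀ _ (sub_pos.2 hab).ne']

theorem abs_steinSol_sub_le_of_le {z a b : ℝ} (hab : a ≤ b) (hb : b ≤ z) :
    |steinSol z b - steinSol z a| ≤ 2 * (b - a) := by
  rcases hab.eq_or_lt with rfl | hab
  · simp
  · obtain ⟨c, -, hslope⟩ := exists_steinSol_sub_eq hab hb
    rw [hslope, abs_mul, abs_of_pos (sub_pos.2 hab), mul_comm]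
    exact mul_le_mul_of_nonneg_right (abs_steinSlope_le z c) (sub_pos.2 hab).le

theorem abs_steinSol_sub_le_of_ge {z a b : ℝ} (hab : a ≤ b) (ha : z ≤ a) :
    |steinSol z b - steinSol z a| ≤ 2 * (b - a) := by
  have hflip := abs_steinSol_sub_le_of_le (neg_le_neg hab) (neg_le_neg ha)
  rw [steinSol_neg, steinSol_neg, abs_sub_comm] at hflip
  linarith

theorem abs_steinSol_sub_le (z a b : ℝ) : |steinSol z b - steinSol z a| ≤ 2 * |b - a| := by
  wlog hab : a ≤ b generalizing a b
  · rw [abs_sub_comm, abs_sub_comm b]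
    exact this b a (le_of_not_ge hab)
  rw [abs_of_nonneg (sub_nonneg.2 hab)]
  rcases le_total b z with hb | hb
  · exact abs_steinSol_sub_le_of_le hab hb
  rcases le_total z a with ha | ha
  · exact abs_steinSol_sub_le_of_ge hab ha
  · linarith [abs_steinSol_sub_le_of_le ha le_rfl, abs_steinSol_sub_le_of_ge hb le_rfl,
      abs_sub_le (steinSol z b) (steinSol z z) (steinSol z a)]

theorem abs_steinSlope_sub_le_of_le {z a w : ℝ} (ha : a ≤ z) (hw : w ≤ z) :
    |steinSlope z a - steinSlope z w| ≤ |a - w| * (mills 0 + 2 * |w|) := by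
  have hsplit : steinSlope z a - steinSlope z w =
      (a - w) * steinSol z a + w * (steinSol z a - steinSol z w) := by
    rw [steinSlope, steinSlope, if_pos ha, if_pos hw]
    ring
  calc |steinSlope z a - steinSlope z w|
      ≤ |a - w| * steinSol z a + |w| * |steinSol z a - steinSol z w| := by
        rw [hsplit, ← abs_mul w]
        refine (abs_add_le _ _).trans_eq ?_
        rw [abs_mul (a - w), abs_of_nonneg (steinSol_nonneg z a)]
    _ ≤ |a - w| * mills 0 + |w| * (2 * |a - w|) := by
        gcongr
        exacts [steinSol_le z a, abs_steinSol_sub_le z w a]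
    _ = |a - w| * (mills 0 + 2 * |w|) := by ring

theorem abs_steinSol_add_sub_sub_le_of_le {z y w d : ℝ} (hy : y ≤ w) (hw : w ≤ y + d)
    (hz : y + d ≤ z) :
    |steinSol z (y + d) - steinSol z y - d * steinSlope z w| ≤
      d * (d * (mills 0 + 2 * |w|)) := by
  have hd : 0 ≤ d := by linarith
  rcases hd.eq_or_lt with rfl | hd'
  · simp
  obtain ⟨c, ⟨hyc, hcd⟩, hslope⟩ := exists_steinSol_sub_eq (by linarith : y < y + d) hz
  rw [hslope, add_sub_cancel_left, ← mul_sub, abs_mul, abs_of_nonneg hd]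
  have hcw : |c - w| ≤ d := by
    rw [abs_le]
    constructor <;> linarith
  have hmills := mills_nonneg 0
  exact mul_le_mul_of_nonneg_left ((abs_steinSlope_sub_le_of_le (hcd.le.trans hz)
    (hw.trans hz)).trans (mul_le_mul_of_nonneg_right hcw (by positivity))) hd

theorem abs_steinSol_add_sub_sub_le_of_lt {z y w d : ℝ} (hy : y ≤ w) (hw : w ≤ y + d)
    (hz : z < y) :
    |steinSol z (y + d) - steinSol z y - d * steinSlope z w| ≤
      d * (d * (mills 0 + 2 * |w|)) := by
  have hflip := abs_steinSol_add_sub_sub_le_of_le (z := -z) (y := -(y + d)) (w := -w) (d := d)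
    (by linarith) (by linarith) (by linarith)
  rw [steinSlope_neg (hz.trans_le hy).ne', abs_neg, steinSol_neg,
    show -(y + d) + d = -y by ring, steinSol_neg] at hflip
  rw [← abs_neg]
  convert hflip using 2
  ring

/-- The first-order expansion fails only on intervals around the kink `z`, which accounts for the
indicator. -/
theorem abs_steinSol_add_sub_sub_le (z : ℝ) {y w d : ℝ} (hy : y ≤ w) (hw : w ≤ y + d) :
    |steinSol z (y + d) - steinSol z y - d * steinSlope z w| ≤
      d * (d * (mills 0 + 2 * |w|) + 4 * if |w - z| ≤ d then 1 else 0) := by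
  have hmills := mills_nonneg 0
  have hd : 0 ≤ d := by linarith
  have hindicator : 0 ≤ d * (4 * if |w - z| ≤ d then (1 : ℝ) else 0) := by positivity
  rcases lt_or_ge z y with hzy | hyz
  · linarith [abs_steinSol_add_sub_sub_le_of_lt hy hw hzy]
  rcases le_or_gt (y + d) z with hdz | hzd
  · linarith [abs_steinSol_add_sub_sub_le_of_le hy hw hdz]
  have hsol := abs_steinSol_sub_le z y (y + d)
  rw [add_sub_cancel_left, abs_of_nonneg hd] at hsol
  have hslope := mul_le_mul_of_nonneg_left (abs_steinSlope_le z w) hd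
  have hmills_term : 0 ≤ d * (d * (mills 0 + 2 * |w|)) := by positivity
  rw [if_pos (by rw [abs_le]; constructor <;> linarith)]
  refine (abs_sub _ _).trans ?_
  rw [abs_mul d, abs_of_nonneg hd]
  linarith
/-! # The Kolmogorov distance of the size to the normal law -/

namespace FiniteProb

variable {Ω : Type*} [Fintype Ω] {μ : Ω → ℝ}

theorem mass_setOf (μ : Ω → ℝ) (S : Ω → Prop) [DecidablePred S] :
    mass μ {x | S x} = mean μ fun x => if S x then 1 else 0 :=
  congrArg (mean μ) (funext fun x => by simp [Set.indicator_apply])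

theorem mass_setOf_le_sub_gaussCdf (hμ : ∑ x, μ x = 1) (W : Ω → ℝ) (z : ℝ) :
    mass μ {x | W x ≤ z} - gaussCdf z =
      mean μ (fun x => steinSlope z (W x)) - mean μ (fun x => W x * steinSol z (W x)) := by
  simp only [steinSlope]
  rw [mass_setOf, mean_sub, mean_add, mean_const hμ]
  ring

end FiniteProb

/-- The identity centred at `z` and truncated at distance `2 * d`. -/
def ramp (z d y : ℝ) : ℝ := max (-(2 * d)) (min (2 * d) (y - z))

theorem monotone_ramp (z d : ℝ) : Monotone (ramp z d) := fun _ _ hab =>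
  max_le_max le_rfl (min_le_min le_rfl (sub_le_sub_right hab z))

theorem abs_ramp_le (z y : ℝ) {d : ℝ} (hd : 0 ≤ d) : |ramp z d y| ≤ 2 * d :=
  abs_le.2 ⟨le_max_left _ _, max_le (by linarith) (min_le_left _ _)⟩

theorem ramp_of_abs_sub_le {z d y : ℝ} (h : |y - z| ≤ 2 * d) : ramp z d y = y - z := by
  rw [ramp, min_eq_right (abs_le.1 h).2, max_eq_right (abs_le.1 h).1]

theorem ite_le_ramp_add_sub {z y w d : ℝ} (hy : y ≤ w) (hw : w ≤ y + d) :
    (if |w - z| ≤ d then d else 0) ≤ ramp z d (y + d) - ramp z d y := by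
  split_ifs with hz
  · rw [abs_le] at hz
    rw [ramp_of_abs_sub_le (by rw [abs_le]; constructor <;> linarith),
      ramp_of_abs_sub_le (by rw [abs_le]; constructor <;> linarith)]
    linarith
  · exact sub_nonneg.2 (monotone_ramp z d (by linarith))

namespace BoolCube.PolyHam

open FiniteProb Function

section StdSize

variable {ι A : Type*} [Fintype ι] [DecidableEq ι] [Fintype A] (P : PolyHam ι A)

/-- The size, centred at its mean and rescaled by `σ`. -/
def stdSize (σ : ℝ) (x : ι → Bool) : ℝ := (size x - mean P.gibbs size) / σ

theorem stdSize_update_true (σ : ℝ) (s : ι) (x : ι → Bool) :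
    P.stdSize σ (update x s true) = P.stdSize σ (update x s false) + 1 / σ := by
  have hsize : size (update x s true) = 1 + size (update x s false) :=
    sub_eq_iff_eq_add.1 (discDeriv_size s x)
  rw [stdSize, stdSize, hsize]
  ring

theorem exists_discDeriv_comp_stdSize {σ : ℝ} (hσ : 0 < σ) (s : ι) (x : ι → Bool) :
    ∃ y, y ≤ P.stdSize σ x ∧ P.stdSize σ x ≤ y + 1 / σ ∧
      ∀ f : ℝ → ℝ, discDeriv (fun x => f (P.stdSize σ x)) s x = f (y + 1 / σ) - f y := by
  have hjump := P.stdSize_update_true σ s x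
  have hσ' : 0 < 1 / σ := one_div_pos.2 hσ
  have hvalue : P.stdSize σ x = P.stdSize σ (update x s false) + 1 / σ ∨
      P.stdSize σ x = P.stdSize σ (update x s false) := by
    rcases update_true_eq_or_update_false_eq x s with ⟨h, -⟩ | ⟨h, -⟩
    · exact .inl (by rw [← hjump, h])
    · exact .inr (by rw [h])
  refine ⟨P.stdSize σ (update x s false), ?_, ?_, fun f => by rw [discDeriv, hjump]⟩ <;>
    rcases hvalue with hvalue | hvalue <;> linarith

theorem mean_centred_mul_eq {σ : ℝ} (hσ : σ ≠ 0) (θ : ℝ) (F : (ι → Bool) → ℝ) :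
    mean P.gibbs (fun x => P.centred x * F x) =
      σ * (1 - θ) * mean P.gibbs (fun x => P.stdSize σ x * F x) +
        mean P.gibbs fun x => (P.remainder θ x - mean P.gibbs (P.remainder θ)) * F x := by
  rw [← mean_const_mul, ← mean_add]
  refine congrArg (mean P.gibbs) (funext fun x => ?_)
  rw [P.centred_eq_sub_mean θ, stdSize]
  field_simp

theorem abs_condVar_mul_discDeriv_steinSol_sub_le {σ : ℝ} (hσ : 0 < σ) (v z : ℝ) (s : ι)
    (x : ι → Bool) :
    |P.condVar s x * discDeriv (fun x => steinSol z (P.stdSize σ x)) s x -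
        1 / σ * v * steinSlope z (P.stdSize σ x)| ≤
      1 / σ * (1 / σ * (mills 0 + 2 * |P.stdSize σ x|) +
        4 * (if |P.stdSize σ x - z| ≤ 1 / σ then 1 else 0) + 2 * |P.condVar s x - v|) := by
  obtain ⟨y, hy, hyd, hdisc⟩ := P.exists_discDeriv_comp_stdSize hσ s x
  have hd0 : 0 < 1 / σ := one_div_pos.2 hσ
  have hexpand := abs_steinSol_add_sub_sub_le z hy hyd
  rw [hdisc (steinSol z)]
  set d := 1 / σ
  set W := P.stdSize σ x
  set c := P.condVar s x
  calc |c * (steinSol z (y + d) - steinSol z y) - d * v * steinSlope z W|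
      = |c * (steinSol z (y + d) - steinSol z y - d * steinSlope z W) +
          d * (steinSlope z W * (c - v))| := by ring_nf
    _ ≤ c * |steinSol z (y + d) - steinSol z y - d * steinSlope z W| +
          d * (|steinSlope z W| * |c - v|) := by
        refine (abs_add_le _ _).trans_eq ?_
        rw [abs_mul, abs_mul, abs_mul, abs_of_pos hd0, abs_of_nonneg (P.condVar_nonneg s x)]
    _ ≤ 1 * |steinSol z (y + d) - steinSol z y - d * steinSlope z W| +
          d * (2 * |c - v|) := by
        gcongr
        exacts [P.condVar_le_one s x, abs_steinSlope_le z W]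
    _ ≤ _ := by linarith

theorem abs_mean_condVar_mul_discDeriv_steinSol_sub_le {σ : ℝ} (hσ : 0 < σ) (v z : ℝ) (s : ι) :
    |mean P.gibbs (fun x => P.condVar s x *
          discDeriv (fun x => steinSol z (P.stdSize σ x)) s x) -
        1 / σ * v * mean P.gibbs (fun x => steinSlope z (P.stdSize σ x))| ≤
      1 / σ * (1 / σ * (mills 0 + 2 * mean P.gibbs (fun x => |P.stdSize σ x|)) +
        4 * mass P.gibbs {x | |P.stdSize σ x - z| ≤ 1 / σ} +
        2 * mean P.gibbs fun x => |P.condVar s x - v|) := by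
  have hμ := P.gibbs_mem_stdSimplex
  rw [← mean_const_mul, ← mean_sub]
  refine ((abs_mean_le hμ.1 _).trans (mean_mono hμ.1
    (P.abs_condVar_mul_discDeriv_steinSol_sub_le hσ v z s))).trans_eq ?_
  rw [mean_const_mul, mean_add, mean_add, mean_const_mul, mean_const_mul, mean_const_mul,
    mean_add, mean_const_mul, mean_const hμ.2, mass_setOf]

theorem abs_mean_mul_steinSol_le (z : ℝ) (W F : (ι → Bool) → ℝ) :
    |mean P.gibbs (fun x => F x * steinSol z (W x))| ≤ mills 0 * mean P.gibbs fun x => |F x| := by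
  have hμ : ∀ x, 0 ≤ P.gibbs x := P.gibbs_mem_stdSimplex.1
  rw [← mean_const_mul]
  refine (abs_mean_le hμ _).trans (mean_mono hμ fun x => ?_)
  rw [abs_mul, abs_of_nonneg (steinSol_nonneg z _), mul_comm]
  exact mul_le_mul_of_nonneg_right (steinSol_le z _) (abs_nonneg _)

theorem mean_abs_stdSize_le {σ c V r : ℝ} (hc : 0 < c) (hr : 0 < r) (hσ : c * r ≤ σ)
    (hV : var P.gibbs size ≤ V * r ^ 2) :
    mean P.gibbs (fun x => |P.stdSize σ x|) ≤ √(V / c ^ 2) := by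
  have hμ := P.gibbs_mem_stdSimplex
  refine (mean_abs_le_sqrt hμ _).trans (Real.sqrt_le_sqrt ?_)
  have hcr : 0 < c * r := mul_pos hc hr
  calc mean P.gibbs (fun x => P.stdSize σ x ^ 2) = var P.gibbs size / σ ^ 2 := by
        rw [var, div_eq_inv_mul, ← mean_const_mul]
        refine congrArg (mean P.gibbs) (funext fun x => ?_)
        rw [stdSize, div_pow, div_eq_inv_mul]
    _ ≤ V * r ^ 2 / (c * r) ^ 2 := div_le_div₀ ((var_nonneg hμ.1 _).trans hV) hV (by positivity)
        (pow_le_pow_left₀ hcr.le hσ 2)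
    _ = V / c ^ 2 := by field_simp

end StdSize

namespace IsNear

variable {ι A : Type*} [Fintype ι] [DecidableEq ι] [Fintype A] {P : PolyHam ι A}
variable {Ψ Ψ' : ℝ → ℝ} {p ρ K ε σ : ℝ} {n : ℕ} {U D : Set (ι → Bool)}
variable (h : P.IsNear Ψ Ψ' K n)
include h

theorem mean_centred_mul_le {F : (ι → Bool) → ℝ} {b : ℝ} (hF : ∀ x, |F x| ≤ b) :
    mean P.gibbs (fun x => P.centred x * F x) ≤ b * n := by
  have hμ := P.gibbs_mem_stdSimplex
  have hb : 0 ≤ b := (abs_nonneg _).trans (hF fun _ => false)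
  calc mean P.gibbs (fun x => P.centred x * F x)
      ≤ mean P.gibbs (fun x => b * |P.centred x|) := mean_mono hμ.1 fun x => by
        refine (le_abs_self _).trans ?_
        rw [abs_mul, mul_comm]
        exact mul_le_mul_of_nonneg_right (hF x) (abs_nonneg _)
    _ = b * mean P.gibbs (fun x => |P.centred x|) := mean_const_mul _ _
    _ ≤ b * √((n : ℝ) ^ 2) := mul_le_mul_of_nonneg_left ((mean_abs_le_sqrt hμ _).trans
        (Real.sqrt_le_sqrt h.mean_centred_sq_le)) hb
    _ = b * n := by rw [Real.sqrt_sq (Nat.cast_nonneg n)]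

theorem mul_mass_stdSize_near_le_mean (hm : IsMeanField Ψ Ψ' p ρ K) (hσ : 0 < σ) (z : ℝ) (s : ι) :
    Real.sigmoid (-(2 * K)) ^ 2 * (1 / σ) * mass P.gibbs {x | |P.stdSize σ x - z| ≤ 1 / σ} ≤
      mean P.gibbs fun x =>
        P.condVar s x * discDeriv (fun x => ramp z (1 / σ) (P.stdSize σ x)) s x := by
  rw [mass_setOf, ← mean_const_mul]
  refine mean_mono P.gibbs_mem_stdSimplex.1 fun x => ?_
  obtain ⟨y, hy, hyd, hdisc⟩ := P.exists_discDeriv_comp_stdSize hσ s x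
  rw [hdisc, mul_assoc, mul_ite, mul_one, mul_zero]
  exact mul_le_mul (h.le_condVar hm s x) (ite_le_ramp_add_sub hy hyd)
    (by positivity) (P.condVar_nonneg s x)

theorem mass_stdSize_near_le (hm : IsMeanField Ψ Ψ' p ρ K) (hσ : 0 < σ) (z : ℝ) :
    mass P.gibbs {x | |P.stdSize σ x - z| ≤ 1 / σ} ≤
      8 / (Real.sigmoid (-(2 * K)) ^ 2 * n) := by
  have hn := h.n_pos
  have hd : 0 < 1 / σ := one_div_pos.2 hσ
  have hw : 0 < Real.sigmoid (-(2 * K)) ^ 2 := pow_pos (Real.sigmoid_pos _) 2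
  have hupper := h.mean_centred_mul_le
    (F := fun x => ramp z (1 / σ) (P.stdSize σ x)) fun x => abs_ramp_le z _ hd.le
  rw [mean_centred_mul] at hupper
  have hsum := (Finset.card_nsmul_le_sum Finset.univ _ _ fun s _ =>
    h.mul_mass_stdSize_near_le_mean hm hσ z s).trans hupper
  rw [nsmul_eq_mul, Finset.card_univ] at hsum
  set Q := mass P.gibbs {x | |P.stdSize σ x - z| ≤ 1 / σ}
  set w := Real.sigmoid (-(2 * K)) ^ 2
  set d := 1 / σ
  have hQ : 0 ≤ Q := mass_nonneg P.gibbs_mem_stdSimplex.1 _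
  have hcard := mul_le_mul_of_nonneg_right h.le_card (by positivity : 0 ≤ w * d * Q)
  rw [le_div_iff₀ (by positivity)]
  refine le_of_mul_le_mul_right ?_ (by positivity : 0 < d * n)
  calc Q * (w * n) * (d * n) = n ^ 2 * (w * d * Q) := by ring
    _ ≤ 8 * (d * n) := by linarith

theorem abs_mean_centred_mul_steinSol_sub_le (hm : IsMeanField Ψ Ψ' p ρ K)
    (hUD : P.ExceptionalSets Ψ Ψ' p ε n U D) (hσ : 0 < σ) (z : ℝ) :
    |mean P.gibbs (fun x => P.centred x * steinSol z (P.stdSize σ x)) - Fintype.card ι *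
        (1 / σ * (p * (1 - p)) * mean P.gibbs (fun x => steinSlope z (P.stdSize σ x)))| ≤
      Fintype.card ι * (1 / σ *
        (1 / σ * (mills 0 + 2 * mean P.gibbs (fun x => |P.stdSize σ x|)) +
          4 * mass P.gibbs {x | |P.stdSize σ x - z| ≤ 1 / σ} + 2 * (ε + 1 / n))) := by
  have hsite : ∀ s, _ := fun s =>
    (P.abs_mean_condVar_mul_discDeriv_steinSol_sub_le hσ (p * (1 - p)) z s).trans
      (mul_le_mul_of_nonneg_left (add_le_add_right (mul_le_mul_of_nonneg_left
        (h.mean_abs_condVar_sub_le hm hUD s) zero_le_two) _) (one_div_nonneg.2 hσ.le))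
  have hsum := (Finset.abs_sum_le_sum_abs _ _).trans
    (Finset.sum_le_card_nsmul Finset.univ _ _ fun s _ => hsite s)
  rwa [Finset.sum_sub_distrib, ← mean_centred_mul, Finset.sum_const, nsmul_eq_mul, nsmul_eq_mul,
    Finset.card_univ] at hsum

theorem abs_mass_stdSize_sub_le (hm : IsMeanField Ψ Ψ' p ρ K)
    (hUD : P.ExceptionalSets Ψ Ψ' p ε n U D) (hσ : 0 < σ)
    (hσ2 : σ ^ 2 * (1 - p * (1 - p) * Ψ' p) = Fintype.card ι * (p * (1 - p))) (z : ℝ) :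
    |mass P.gibbs {x | P.stdSize σ x ≤ z} - gaussCdf z| ≤
      (1 / σ * (mills 0 + 2 * mean P.gibbs (fun x => |P.stdSize σ x|)) +
          4 * mass P.gibbs {x | |P.stdSize σ x - z| ≤ 1 / σ} + 2 * (ε + 1 / n)) / (p * (1 - p)) +
        mills 0 * mean P.gibbs (fun x => |P.remainder (p * (1 - p) * Ψ' p) x -
          mean P.gibbs (P.remainder (p * (1 - p) * Ψ' p))|) /
          (σ * (1 - p * (1 - p) * Ψ' p)) := by
  rw [mass_setOf_le_sub_gaussCdf P.gibbs_mem_stdSimplex.2]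
  have hsum := h.abs_mean_centred_mul_steinSol_sub_le hm hUD hσ z
  have hrem := P.abs_mean_mul_steinSol_le z (P.stdSize σ) fun x =>
    P.remainder (p * (1 - p) * Ψ' p) x - mean P.gibbs (P.remainder (p * (1 - p) * Ψ' p))
  rw [P.mean_centred_mul_eq hσ.ne' (p * (1 - p) * Ψ' p)] at hsum
  have hτ : 0 < 1 - p * (1 - p) * Ψ' p := sub_pos.2 hm.subcritical
  have hw : 0 < p * (1 - p) := mul_pos hm.mem_Ioo.1 (sub_pos.2 hm.mem_Ioo.2)
  have hcard : Fintype.card ι = σ ^ 2 * (1 - p * (1 - p) * Ψ' p) / (p * (1 - p)) :=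
    eq_div_of_mul_eq hw.ne' hσ2.symm
  set τ := 1 - p * (1 - p) * Ψ' p
  set w := p * (1 - p)
  set G := mean P.gibbs fun x => steinSlope z (P.stdSize σ x)
  set X := 1 / σ * (mills 0 + 2 * mean P.gibbs (fun x => |P.stdSize σ x|)) +
    4 * mass P.gibbs {x | |P.stdSize σ x - z| ≤ 1 / σ} + 2 * (ε + 1 / n)
  have hστ : 0 < σ * τ := mul_pos hσ hτ
  rw [hcard, show σ ^ 2 * τ / w * (1 / σ * w * G) = σ * τ * G by field_simp,
    show σ ^ 2 * τ / w * (1 / σ * X) = σ * τ * (X / w) by field_simp] at hsum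
  refine le_of_mul_le_mul_left ?_ hστ
  rw [mul_add, mul_div_cancel₀ _ hστ.ne', ← abs_of_pos hστ, ← abs_mul, abs_of_pos hστ]
  rw [abs_le] at hsum hrem ⊢
  constructor <;> linarith [hsum.1, hsum.2, hrem.1, hrem.2]

theorem mean_abs_remainder_le (hm : IsMeanField Ψ Ψ' p ρ K) {c d V : ℝ}
    (hUD : P.ExceptionalSets Ψ Ψ' p (c * d) n U D) (hV : var P.gibbs size ≤ V * n ^ 2)
    (hd : 1 / n ≤ d) :
    mean P.gibbs (fun x => |P.remainder (p * (1 - p) * Ψ' p) x -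
        mean P.gibbs (P.remainder (p * (1 - p) * Ψ' p))|) ≤
      √(2 * ((2 * K + 1) * c) ^ 2 * V + 18 * K ^ 2) * (d * n) := by
  have hdn : 1 ≤ d * n := (div_le_iff₀ h.n_pos).1 hd
  have hV0 : 0 ≤ V := nonneg_of_mul_nonneg_left
    ((var_nonneg P.gibbs_mem_stdSimplex.1 _).trans hV) (pow_pos h.n_pos 2)
  refine (mean_abs_le_sqrt P.gibbs_mem_stdSimplex _).trans ?_
  rw [← Real.sqrt_sq (by linarith : 0 ≤ d * n), ← Real.sqrt_mul (by positivity)]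
  refine Real.sqrt_le_sqrt ((h.var_remainder_le hm hUD).trans ?_)
  calc 2 * ((2 * K + 1) * (c * d)) ^ 2 * var P.gibbs size + 18 * K ^ 2
      ≤ 2 * ((2 * K + 1) * (c * d)) ^ 2 * (V * n ^ 2) + 18 * K ^ 2 * (d * n) ^ 2 := by
        gcongr ?_ + ?_
        · gcongr
        · exact le_mul_of_one_le_right (by positivity) (one_le_pow₀ hdn)
    _ = (2 * ((2 * K + 1) * c) ^ 2 * V + 18 * K ^ 2) * (d * n) ^ 2 := by ring

theorem mass_stdSize_near_le_of_one_div_le (hm : IsMeanField Ψ Ψ' p ρ K) (hσ : 0 < σ) {d : ℝ}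
    (hd : 1 / n ≤ d) (z : ℝ) :
    mass P.gibbs {x | |P.stdSize σ x - z| ≤ 1 / σ} ≤ 8 / Real.sigmoid (-(2 * K)) ^ 2 * d := by
  refine (h.mass_stdSize_near_le hm hσ z).trans ?_
  rw [← div_div, div_eq_mul_one_div]
  exact mul_le_mul_of_nonneg_left hd (by positivity)

theorem sqrt_div_two_mul_le (hm : IsMeanField Ψ Ψ' p ρ K) (hσ : 0 < σ)
    (hσ2 : σ ^ 2 * (1 - p * (1 - p) * Ψ' p) = Fintype.card ι * (p * (1 - p))) :
    √(p * (1 - p)) / 2 * n ≤ σ := by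
  have hw : 0 < p * (1 - p) := mul_pos hm.mem_Ioo.1 (sub_pos.2 hm.mem_Ioo.2)
  have hθ : 0 ≤ p * (1 - p) * Ψ' p := mul_nonneg hw.le hm.slope_nonneg
  rw [← sq_le_sq₀ (by positivity) hσ.le, mul_pow, div_pow, Real.sq_sqrt hw.le]
  linarith [mul_le_mul_of_nonneg_right h.le_card hw.le, mul_nonneg (sq_nonneg σ) hθ]

theorem var_size_le_mul_sq (hm : IsMeanField Ψ Ψ' p ρ K) (hUD : P.ExceptionalSets Ψ Ψ' p ε n U D)
    (hε : 8 * ((2 * K + 1) * ε) ^ 2 ≤ (1 - p * (1 - p) * Ψ' p) ^ 2) :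
    var P.gibbs size ≤ 2 / (1 - p * (1 - p) * Ψ' p) *
      (1 + 18 * K ^ 2 / (1 - p * (1 - p) * Ψ' p)) * n ^ 2 := by
  have hτ := sub_pos.2 hm.subcritical
  have hn : 1 ≤ (n : ℝ) ^ 2 := one_le_pow₀ (mod_cast one_le_two.trans h.two_le)
  refine (h.var_size_le hm hUD hε).trans ?_
  rw [mul_assoc (2 / _), add_mul, one_mul]
  gcongr
  exact le_mul_of_one_le_right (by positivity) hn

theorem abs_mass_stdSize_sub_le_mul (hm : IsMeanField Ψ Ψ' p ρ K) {b c d V : ℝ}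
    (hUD : P.ExceptionalSets Ψ Ψ' p (b * d) n U D) (hσ : 0 < σ)
    (hσ2 : σ ^ 2 * (1 - p * (1 - p) * Ψ' p) = Fintype.card ι * (p * (1 - p)))
    (hc : 0 < c) (hcσ : c * n ≤ σ) (hV : var P.gibbs size ≤ V * n ^ 2) (hd : 1 / n ≤ d) (z : ℝ) :
    |mass P.gibbs {x | P.stdSize σ x ≤ z} - gaussCdf z| ≤
      ((1 / c * (mills 0 + 2 * √(V / c ^ 2)) + 4 * (8 / Real.sigmoid (-(2 * K)) ^ 2) +
          2 * (b + 1)) / (p * (1 - p)) +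
        mills 0 * √(2 * ((2 * K + 1) * b) ^ 2 * V + 18 * K ^ 2) /
          (c * (1 - p * (1 - p) * Ψ' p))) * d := by
  have hn := h.n_pos
  have hw : 0 < p * (1 - p) := mul_pos hm.mem_Ioo.1 (sub_pos.2 hm.mem_Ioo.2)
  have hτ := sub_pos.2 hm.subcritical
  have hmills := mills_nonneg 0
  have hd_nonneg : 0 ≤ d := (one_div_nonneg.2 hn.le).trans hd
  have hsize := P.mean_abs_stdSize_le hc hn hcσ hV
  have hsize_nonneg := mean_nonneg P.gibbs_mem_stdSimplex.1 fun x => abs_nonneg (P.stdSize σ x)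
  have hrem := h.mean_abs_remainder_le hm hUD hV hd
  have hnear := h.mass_stdSize_near_le_of_one_div_le hm hσ hd z
  have hσd : 1 / σ ≤ 1 / c * d := by
    calc 1 / σ ≤ 1 / (c * n) := one_div_le_one_div_of_le (by positivity) hcσ
      _ = 1 / c * (1 / n) := by rw [one_div_mul_one_div]
      _ ≤ 1 / c * d := mul_le_mul_of_nonneg_left hd (by positivity)
  refine (h.abs_mass_stdSize_sub_le hm hUD hσ hσ2 z).trans ?_
  rw [add_mul, div_mul_eq_mul_div (_ + _ + _) _ d]
  refine add_le_add (div_le_div_of_nonneg_right ?_ hw.le) ?_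
  · linarith [mul_le_mul hσd (add_le_add_right (mul_le_mul_of_nonneg_left hsize zero_le_two)
      (mills 0)) (by positivity) (by positivity)]
  · calc _ ≤ mills 0 * (√(2 * ((2 * K + 1) * b) ^ 2 * V + 18 * K ^ 2) * (d * n)) /
          (c * n * (1 - p * (1 - p) * Ψ' p)) := by gcongr
      _ = _ := by field_simp

end IsNear

end BoolCube.PolyHam

open BoolCube FiniteProb in
theorem IsMeanField.exists_kolmogorov_bound {Ψ Ψ' : ℝ → ℝ} {p ρ K : ℝ}
    (hm : IsMeanField Ψ Ψ' p ρ K) :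
    ∃ C : ℝ, ∃ n₀ : ℕ, 0 < C ∧ ∀ n : ℕ, n₀ ≤ n →
      ∀ {ι A : Type} [Fintype ι] [DecidableEq ι] [Fintype A] (P : PolyHam ι A),
        P.IsNear Ψ Ψ' K n → ∀ σ : ℝ, 0 < σ →
        σ ^ 2 * (1 - p * (1 - p) * Ψ' p) = Fintype.card ι * (p * (1 - p)) → ∀ z : ℝ,
        |mass P.gibbs {x | P.stdSize σ x ≤ z} - gaussCdf z| ≤ C * (n : ℝ) ^ (-(1 / 4) : ℝ) := by
  obtain ⟨b, n₀, hb, hsets⟩ := hm.exists_exceptionalSets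
  have hw : 0 < p * (1 - p) := mul_pos hm.mem_Ioo.1 (sub_pos.2 hm.mem_Ioo.2)
  have hτ := sub_pos.2 hm.subcritical
  have hc : 0 < √(p * (1 - p)) / 2 := half_pos (Real.sqrt_pos.2 hw)
  have hsigmoid := Real.sigmoid_pos (-(2 * K))
  have hmills := mills_nonneg 0
  set c := √(p * (1 - p)) / 2
  set V := 2 / (1 - p * (1 - p) * Ψ' p) * (1 + 18 * K ^ 2 / (1 - p * (1 - p) * Ψ' p))
  refine ⟨(1 / c * (mills 0 + 2 * √(V / c ^ 2)) + 4 * (8 / Real.sigmoid (-(2 * K)) ^ 2) +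
    2 * (b + 1)) / (p * (1 - p)) + mills 0 * √(2 * ((2 * K + 1) * b) ^ 2 * V + 18 * K ^ 2) /
      (c * (1 - p * (1 - p) * Ψ' p)), n₀, by positivity, fun n hn ι A _ _ _ P h σ hσ hσ2 z => ?_⟩
  obtain ⟨hε, hsets⟩ := hsets n hn
  obtain ⟨U, D, hUD⟩ := hsets P h
  exact h.abs_mass_stdSize_sub_le_mul hm hUD hσ hσ2 hc (h.sqrt_div_two_mul_le hm hσ hσ2)
    (h.var_size_le_mul_sq hm hUD hε) (one_div_le_rpow_neg_quarter (one_le_two.trans h.two_le)) z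
/-! # Contraction towards a unique fixed point -/

section Contraction

variable {φ : ℝ → ℝ} {a b p : ℝ}

theorem apply_lt_self_of_fixedPoint_lt (hφ : ContinuousOn φ (Set.Icc a b)) (hb : φ b < b)
    (huniq : ∀ q ∈ Set.Icc a b, φ q = q → q = p) {q : ℝ} (hq : q ∈ Set.Icc a b) (hpq : p < q) :
    φ q < q := by
  by_contra! hle
  have hsub : Set.Icc q b ⊆ Set.Icc a b := Set.Icc_subset_Icc_left hq.1
  obtain ⟨r, hr, hzero⟩ := intermediate_value_Icc' hq.2 ((hφ.mono hsub).sub continuousOn_id)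
    ⟨sub_nonpos.2 hb.le, sub_nonneg.2 hle⟩
  exact (hpq.trans_le hr.1).ne' (huniq r (hsub hr) (sub_eq_zero.1 hzero))

theorem self_lt_apply_of_lt_fixedPoint (hφ : ContinuousOn φ (Set.Icc a b)) (ha : a < φ a)
    (huniq : ∀ q ∈ Set.Icc a b, φ q = q → q = p) {q : ℝ} (hq : q ∈ Set.Icc a b) (hqp : q < p) :
    q < φ q := by
  by_contra! hle
  have hsub : Set.Icc a q ⊆ Set.Icc a b := Set.Icc_subset_Icc_right hq.2
  obtain ⟨r, hr, hzero⟩ := intermediate_value_Icc' hq.1 ((hφ.mono hsub).sub continuousOn_id)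
    ⟨sub_nonpos.2 hle, sub_nonneg.2 ha.le⟩
  exact (hr.2.trans_lt hqp).ne (huniq r (hsub hr) (sub_eq_zero.1 hzero))

theorem dslope_fixedPoint_lt_one (hφ : ContinuousOn φ (Set.Icc a b)) (ha : a < φ a) (hb : φ b < b)
    (hfix : φ p = p) (huniq : ∀ q ∈ Set.Icc a b, φ q = q → q = p) (hderiv : deriv φ p < 1) {q : ℝ}
    (hq : q ∈ Set.Icc a b) : dslope φ p q < 1 := by
  rcases lt_trichotomy q p with hlt | rfl | hgt
  · rw [dslope_of_ne _ hlt.ne, slope_def_field, hfix, div_lt_one_of_neg (sub_neg.2 hlt)]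
    exact sub_lt_sub_right (self_lt_apply_of_lt_fixedPoint hφ ha huniq hq hlt) p
  · rwa [dslope_same]
  · rw [dslope_of_ne _ hgt.ne', slope_def_field, hfix, div_lt_one (sub_pos.2 hgt)]
    exact sub_lt_sub_right (apply_lt_self_of_fixedPoint_lt hφ hb huniq hq hgt) p

theorem abs_sub_le_dslope_mul_abs_sub {s : Set ℝ} (hmono : MonotoneOn φ s) (hp : p ∈ s) {q : ℝ}
    (hq : q ∈ s) : |φ q - φ p| ≤ dslope φ p q * |q - p| := by
  rcases eq_or_ne q p with rfl | hne
  · simp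
  rw [← sub_smul_dslope, smul_eq_mul, abs_mul, mul_comm, abs_of_nonneg]
  rw [dslope_of_ne _ hne]
  exact hmono.slope_nonneg hp hq

theorem exists_contraction_rate (hφ : ContinuousOn φ (Set.Icc a b))
    (hmono : MonotoneOn φ (Set.Icc a b)) (ha : a < φ a) (hb : φ b < b) (hp : p ∈ Set.Ioo a b)
    (hfix : φ p = p) (huniq : ∀ q ∈ Set.Icc a b, φ q = q → q = p)
    (hdiff : DifferentiableAt ℝ φ p) (hderiv : deriv φ p < 1) :
    ∃ ρ, 0 ≤ ρ ∧ ρ < 1 ∧ ∀ q ∈ Set.Icc a b, |φ q - p| ≤ ρ * |q - p| := by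
  have hpI := Set.Ioo_subset_Icc_self hp
  obtain ⟨m, hm, hmax⟩ := isCompact_Icc.exists_isMaxOn ⟨p, hpI⟩
    ((continuousOn_dslope (Icc_mem_nhds hp.1 hp.2)).2 ⟨hφ, hdiff⟩)
  refine ⟨max 0 (dslope φ p m), le_max_left _ _,
    max_lt one_pos (dslope_fixedPoint_lt_one hφ ha hb hfix huniq hderiv hm), fun q hq => ?_⟩
  nth_rw 1 [← hfix]
  exact (abs_sub_le_dslope_mul_abs_sub hmono hpI hq).trans
    (mul_le_mul_of_nonneg_right ((hmax hq).trans (le_max_right _ _)) (abs_nonneg _))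

end Contraction

theorem IsMeanField.mono {Ψ Ψ' : ℝ → ℝ} {p ρ K K' : ℝ} (hm : IsMeanField Ψ Ψ' p ρ K)
    (hK : K ≤ K') : IsMeanField Ψ Ψ' p ρ K' where
  one_le := hm.one_le.trans hK
  mem_Ioo := hm.mem_Ioo
  rate_nonneg := hm.rate_nonneg
  rate_lt_one := hm.rate_lt_one
  fixed := hm.fixed
  contract := hm.contract
  abs_field_le q hq := (hm.abs_field_le q hq).trans hK
  lipschitz q hq r hr := (hm.lipschitz q hq r hr).trans
    (mul_le_mul_of_nonneg_right hK (abs_nonneg _))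
  slope_nonneg := hm.slope_nonneg
  abs_slope_le q hq := (hm.abs_slope_le q hq).trans hK
  slope_lipschitz q hq r hr := (hm.slope_lipschitz q hq r hr).trans
    (mul_le_mul_of_nonneg_right hK (abs_nonneg _))
  subcritical := hm.subcritical

/-! # The mean field of an exponential random graph -/

theorem abs_pow_sub_pow_le_mul {q r : ℝ} (hq : |q| ≤ 1) (hr : |r| ≤ 1) (m : ℕ) :
    |q ^ m - r ^ m| ≤ m * |q - r| := by
  have hmax : max |q| |r| ^ (m - 1) ≤ 1 :=
    pow_le_one₀ (le_max_of_le_left (abs_nonneg _)) (max_le hq hr)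
  calc |q ^ m - r ^ m| ≤ |q - r| * m * max |q| |r| ^ (m - 1) := abs_pow_sub_pow_le q r m
    _ ≤ |q - r| * m := mul_le_of_le_one_right (by positivity) hmax
    _ = m * |q - r| := mul_comm _ _

section MeanField

variable {k : ℕ} (β : Fin (k + 1) → ℝ) (v : Fin (k + 1) → ℕ)
  (H : ∀ j : Fin (k + 1), SimpleGraph (Fin (v j)))

/-- The derivative `2 Φ_β'`, which is the slope of the mean field `2 Φ_β`. -/
def ergmSlope (a : ℝ) : ℝ :=
  2 * ∑ j, β j * (eCount (H j) : ℝ) * ((eCount (H j) - 1 : ℕ) * a ^ (eCount (H j) - 2))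

/-- A bound on `[0, 1]` for `2 Φ_β`, for its derivative, and for their Lipschitz constants. -/
def ergmBound : ℝ := 1 + 2 * ∑ j, |β j| * ((eCount (H j) : ℝ) + 1) ^ 3

theorem hasDerivAt_two_mul_PhiFn (a : ℝ) :
    HasDerivAt (fun a => 2 * PhiFn β v H a) (ergmSlope β v H a) a :=
  (HasDerivAt.fun_sum fun _ _ => (hasDerivAt_pow _ a).const_mul _).const_mul 2

theorem two_mul_deriv_PhiFn (a : ℝ) : 2 * deriv (PhiFn β v H) a = ergmSlope β v H a := by
  rw [← (hasDerivAt_two_mul_PhiFn β v H a).deriv, deriv_const_mul_field]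

theorem phiFn_eq_sigmoid : phiFn β v H = fun a => Real.sigmoid (2 * PhiFn β v H a) := by
  funext a
  rw [phiFn, Real.sigmoid_def, Real.exp_neg]
  field_simp

theorem phiFn_mem_Ioo (a : ℝ) : phiFn β v H a ∈ Set.Ioo (0 : ℝ) 1 := by
  rw [phiFn_eq_sigmoid]
  exact ⟨Real.sigmoid_pos _, Real.sigmoid_lt_one _⟩

theorem hasDerivAt_phiFn (a : ℝ) :
    HasDerivAt (phiFn β v H) (phiFn β v H a * (1 - phiFn β v H a) * ergmSlope β v H a) a := by
  rw [phiFn_eq_sigmoid]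
  exact (Real.hasDerivAt_sigmoid _).comp a (hasDerivAt_two_mul_PhiFn β v H a)

theorem continuous_phiFn : Continuous (phiFn β v H) :=
  continuous_iff_continuousAt.2 fun a => (hasDerivAt_phiFn β v H a).continuousAt

section Bounds

variable {β v H}

theorem abs_two_mul_sum_mul_eCount_mul_le {c : Fin (k + 1) → ℝ} {t : ℝ} (ht : 0 ≤ t)
    (hc : ∀ j, |c j| ≤ ((eCount (H j) : ℝ) + 1) ^ 2 * t) :
    |2 * ∑ j, β j * (eCount (H j) : ℝ) * c j| ≤ ergmBound β v H * t := by
  have hterm : ∀ j, |β j * eCount (H j) * c j| ≤ |β j| * ((eCount (H j) : ℝ) + 1) ^ 3 * t := by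
    intro j
    rw [abs_mul, abs_mul, Nat.abs_cast]
    calc |β j| * eCount (H j) * |c j|
        ≤ |β j| * (eCount (H j) + 1) * (((eCount (H j) : ℝ) + 1) ^ 2 * t) := by
          gcongr
          exacts [le_add_of_nonneg_right zero_le_one, hc j]
      _ = _ := by ring
  have hsum := (Finset.abs_sum_le_sum_abs _ _).trans
    (Finset.sum_le_sum fun j (_ : j ∈ univ) => hterm j)
  rw [← Finset.sum_mul] at hsum
  rw [abs_mul, abs_two, ergmBound]
  linarith

theorem natCast_sub_le_add_one_sq (m i : ℕ) : ((m - i : ℕ) : ℝ) ≤ ((m : ℝ) + 1) ^ 2 := by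
  have hle : ((m - i : ℕ) : ℝ) ≤ m := mod_cast Nat.sub_le m i
  nlinarith [sq_nonneg (m : ℝ), m.cast_nonneg (α := ℝ)]

theorem abs_two_mul_PhiFn_le {q : ℝ} (hq : |q| ≤ 1) :
    |2 * PhiFn β v H q| ≤ ergmBound β v H := by
  rw [← mul_one (ergmBound β v H)]
  refine abs_two_mul_sum_mul_eCount_mul_le zero_le_one fun j => ?_
  rw [abs_pow, mul_one]
  exact (pow_le_one₀ (abs_nonneg q) hq).trans
    (one_le_pow₀ (le_add_of_nonneg_left (Nat.cast_nonneg _)))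

theorem abs_two_mul_PhiFn_sub_le {q r : ℝ} (hq : |q| ≤ 1) (hr : |r| ≤ 1) :
    |2 * PhiFn β v H q - 2 * PhiFn β v H r| ≤ ergmBound β v H * |q - r| := by
  rw [PhiFn, PhiFn, ← mul_sub, ← Finset.sum_sub_distrib]
  simp only [← mul_sub]
  exact abs_two_mul_sum_mul_eCount_mul_le (abs_nonneg _) fun j =>
    (abs_pow_sub_pow_le_mul hq hr _).trans
      (mul_le_mul_of_nonneg_right (natCast_sub_le_add_one_sq _ _) (abs_nonneg _))

theorem abs_ergmSlope_le {q : ℝ} (hq : |q| ≤ 1) : |ergmSlope β v H q| ≤ ergmBound β v H := by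
  rw [← mul_one (ergmBound β v H)]
  refine abs_two_mul_sum_mul_eCount_mul_le zero_le_one fun j => ?_
  rw [abs_mul, Nat.abs_cast, abs_pow, mul_one]
  exact (mul_le_of_le_one_right (Nat.cast_nonneg _) (pow_le_one₀ (abs_nonneg q) hq)).trans
    (natCast_sub_le_add_one_sq _ _)

theorem abs_ergmSlope_sub_le {q r : ℝ} (hq : |q| ≤ 1) (hr : |r| ≤ 1) :
    |ergmSlope β v H q - ergmSlope β v H r| ≤ ergmBound β v H * |q - r| := by
  rw [ergmSlope, ergmSlope, ← mul_sub, ← Finset.sum_sub_distrib]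
  simp only [← mul_sub]
  refine abs_two_mul_sum_mul_eCount_mul_le (abs_nonneg _) fun j => ?_
  have hle : ∀ i, ((eCount (H j) - i : ℕ) : ℝ) ≤ eCount (H j) + 1 := fun i =>
    mod_cast (Nat.sub_le _ i).trans (Nat.le_succ _)
  rw [abs_mul, Nat.abs_cast, sq, mul_assoc]
  exact mul_le_mul (hle 1) ((abs_pow_sub_pow_le_mul hq hr _).trans
    (mul_le_mul_of_nonneg_right (hle 2) (abs_nonneg _))) (abs_nonneg _) (by positivity)

end Bounds

section Ferromagnetic

variable {β v H}
variable (hβ : ∀ j, 2 ≤ eCount (H j) → 0 ≤ β j)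
include hβ

theorem ergmSlope_nonneg {q : ℝ} (hq : 0 ≤ q) : 0 ≤ ergmSlope β v H q := by
  refine mul_nonneg zero_le_two (Finset.sum_nonneg fun j _ => ?_)
  rcases le_or_gt 2 (eCount (H j)) with h | h
  · have := hβ j h
    positivity
  · simp [Nat.sub_eq_zero_of_le (Nat.le_of_lt_succ h)]

theorem monotoneOn_phiFn : MonotoneOn (phiFn β v H) (Set.Icc 0 1) := by
  refine monotoneOn_of_deriv_nonneg (convex_Icc 0 1) (continuous_phiFn β v H).continuousOn
    (fun a _ => (hasDerivAt_phiFn β v H a).differentiableAt.differentiableWithinAt) fun a ha => ?_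
  rw [interior_Icc] at ha
  have hφ := phiFn_mem_Ioo β v H a
  rw [(hasDerivAt_phiFn β v H a).deriv]
  exact mul_nonneg (mul_nonneg hφ.1.le (sub_nonneg.2 hφ.2.le)) (ergmSlope_nonneg hβ ha.1.le)

theorem exists_isMeanField {p : ℝ} (hp : p ∈ Set.Ioo (0 : ℝ) 1) (hfix : phiFn β v H p = p)
    (huniq : ∀ q ∈ Set.Ioo (0 : ℝ) 1, phiFn β v H q = q → q = p)
    (hsub : deriv (phiFn β v H) p < 1) :
    ∃ ρ, IsMeanField (fun a => 2 * PhiFn β v H a) (ergmSlope β v H) p ρ (ergmBound β v H) := by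
  have hφ := phiFn_eq_sigmoid β v H
  have hrange := phiFn_mem_Ioo β v H
  have hd := hasDerivAt_phiFn β v H p
  obtain ⟨ρ, hρ0, hρ1, hρ⟩ := exists_contraction_rate (continuous_phiFn β v H).continuousOn
    (monotoneOn_phiFn hβ) (hrange 0).1 (hrange 1).2 hp hfix
    (fun q _ hq => huniq q (hq ▸ hrange q) hq) hd.differentiableAt hsub
  rw [hd.deriv, hfix] at hsub
  have habs : ∀ q ∈ Set.Icc (0 : ℝ) 1, |q| ≤ 1 := fun q hq => (abs_of_nonneg hq.1).trans_le hq.2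
  exact ⟨ρ, {
    one_le := le_add_of_nonneg_right (by positivity)
    mem_Ioo := hp
    rate_nonneg := hρ0
    rate_lt_one := hρ1
    fixed := (congrFun hφ p).symm.trans hfix
    contract := by simpa only [hφ] using hρ
    abs_field_le := fun q hq => abs_two_mul_PhiFn_le (habs q hq)
    lipschitz := fun q hq r hr => abs_two_mul_PhiFn_sub_le (habs q hq) (habs r hr)
    slope_nonneg := ergmSlope_nonneg hβ hp.1.le
    abs_slope_le := fun q hq => abs_ergmSlope_le (habs q hq)
    slope_lipschitz := fun q hq r hr => abs_ergmSlope_sub_le (habs q hq) (habs r hr)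
    subcritical := hsub }⟩

end Ferromagnetic

end MeanField
/-! # Counting embeddings -/

section Embeddings

variable {V W : Type*} [Fintype V] [Fintype W] [DecidableEq W]

theorem card_embedding_pair_eq {a b : V} {i k i' k' : W} (hik : i ≠ k) (hik' : i' ≠ k') :
    #{φ : V ↪ W | φ a = i ∧ φ b = k} = #{φ : V ↪ W | φ a = i' ∧ φ b = k'} := by
  obtain ⟨τ, rfl, rfl⟩ :=
    MulAction.is_two_pretransitive_iff.1 (Equiv.Perm.isMultiplyPretransitive W 2) hik hik'
  exact Finset.card_bijective (fun φ : V ↪ W => φ.trans τ.toEmbedding)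
    (Equiv.embeddingCongr (Equiv.refl V) τ).bijective fun φ => by simp

theorem card_embedding_pair {a b : V} (hab : a ≠ b) {i k : W} (hik : i ≠ k) :
    #{φ : V ↪ W | φ a = i ∧ φ b = k} =
      (Fintype.card W - 2).descFactorial (Fintype.card V - 2) := by
  obtain ⟨u, hu⟩ := Nat.exists_eq_add_of_le' (Fintype.one_lt_card_iff.2 ⟨a, b, hab⟩)
  obtain ⟨m, hm⟩ := Nat.exists_eq_add_of_le' (Fintype.one_lt_card_iff.2 ⟨i, k, hik⟩)
  have hfibers : Fintype.card (V ↪ W) =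
      ∑ x ∈ (univ : Finset W).offDiag, #{φ : V ↪ W | φ a = x.1 ∧ φ b = x.2} := by
    rw [← Finset.card_univ, Finset.card_eq_sum_card_fiberwise (f := fun φ => (φ a, φ b))
      (t := (univ : Finset W).offDiag) fun φ _ => by simpa using hab]
    simp only [Prod.ext_iff]
  have hpairs : (m + 1 + 1) * (m + 1 + 1) - (m + 1 + 1) = (m + 1 + 1) * (m + 1) := by
    rw [← Nat.mul_sub_one, Nat.add_sub_cancel]
  rw [Finset.sum_congr rfl fun x hx =>
      card_embedding_pair_eq (by simpa using hx : x.1 ≠ x.2) hik,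
    Finset.sum_const, smul_eq_mul, Finset.offDiag_card, Fintype.card_embedding_eq, hu, hm,
    Finset.card_univ, hm, Nat.succ_descFactorial_succ, Nat.succ_descFactorial_succ, hpairs,
    ← mul_assoc] at hfibers
  rw [hu, hm]
  exact (Nat.eq_of_mul_eq_mul_left (by positivity) hfibers).symm

theorem card_embedding_triple_le {a b c : V} (hab : a ≠ b) (hac : a ≠ c) (hbc : b ≠ c)
    (i k l : W) :
    #{φ : V ↪ W | φ a = i ∧ φ b = k ∧ φ c = l} ≤ Fintype.card W ^ (Fintype.card V - 3) := by
  classical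
  set T : Finset V := {a, b, c} with hT_def
  have hT : #T = 3 := Finset.card_eq_three.2 ⟨a, b, c, hab, hac, hbc, rfl⟩
  have hcard : Fintype.card ({x // x ∉ T} → W) = Fintype.card W ^ (Fintype.card V - 3) := by
    rw [Fintype.card_fun, Fintype.card_subtype_compl, Fintype.card_coe, hT]
  rw [← hcard, ← Finset.card_univ]
  refine Finset.card_le_card_of_injOn (fun φ x => φ x) (fun _ _ => by simp) ?_
  intro φ hφ ψ hψ hrestrict
  simp only [Finset.coe_filter, Finset.mem_univ, true_and, Set.mem_ofPred_eq] at hφ hψ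
  ext x
  by_cases hx : x ∈ T
  · simp only [hT_def, Finset.mem_insert, Finset.mem_singleton] at hx
    rcases hx with rfl | rfl | rfl
    · rw [hφ.1, hψ.1]
    · rw [hφ.2.1, hψ.2.1]
    · rw [hφ.2.2, hψ.2.2]
  · exact congrFun hrestrict ⟨x, hx⟩

end Embeddings

/-! # Copies of a graph -/

namespace EdgeIdx

variable {n : ℕ}

/-- A potential edge as an unordered pair of vertices. -/
def toSym2 (s : EdgeIdx n) : Sym2 (Fin n) := s(s.1.1, s.1.2)

theorem two_le (s : EdgeIdx n) : 2 ≤ n := by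
  have hlt : (s.1.1 : ℕ) < s.1.2 := s.2
  omega

theorem toSym2_injective : Function.Injective (toSym2 : EdgeIdx n → Sym2 (Fin n)) := by
  rintro ⟨⟨a, b⟩, hab⟩ ⟨⟨c, d⟩, hcd⟩ h
  rcases Sym2.eq_iff.1 h with ⟨rfl, rfl⟩ | ⟨rfl, rfl⟩
  · rfl
  · exact absurd hab (lt_asymm hcd)

theorem exists_endpoint_ne {s t : EdgeIdx n} (hst : s ≠ t) :
    ∃ w, (w = t.1.1 ∨ w = t.1.2) ∧ w ≠ s.1.1 ∧ w ≠ s.1.2 := by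
  by_contra! h
  have hmem : ∀ w, w = t.1.1 ∨ w = t.1.2 → w ∈ s.toSym2 := fun w hw =>
    Sym2.mem_iff.2 (or_iff_not_imp_left.2 (h w hw))
  exact hst (toSym2_injective (Sym2.eq_of_ne_mem t.2.ne (hmem _ (.inl rfl)) (hmem _ (.inr rfl))
    (Sym2.mem_mk_left _ _) (Sym2.mem_mk_right _ _)))

theorem card_eq_choose_two (n : ℕ) : Fintype.card (EdgeIdx n) = n.choose 2 := by
  have e : EdgeIdx n ≃ Σ j : Fin n, {i : Fin n // i < j} :=
    { toFun := fun s => ⟨s.1.2, s.1.1, s.2⟩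
      invFun := fun x => ⟨(x.2.1, x.1), x.2.2⟩
      left_inv := fun _ => rfl
      right_inv := fun _ => rfl }
  have hfiber : ∀ j : Fin n, Fintype.card {i : Fin n // i < j} = j := fun j => by
    rw [Fintype.card_subtype, ← Fin.card_Iio j]
    congr 1
    ext i
    simp
  rw [Fintype.card_congr e, Fintype.card_sigma, Finset.sum_congr rfl fun j _ => hfiber j,
    Fin.sum_univ_eq_sum_range (fun i => i), Finset.sum_range_id, Nat.choose_two_right]

theorem cast_card (n : ℕ) : (Fintype.card (EdgeIdx n) : ℝ) = n * ((n : ℝ) - 1) / 2 := by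
  rw [card_eq_choose_two, Nat.cast_choose_two]

end EdgeIdx

section EdgeSupport

variable {V : Type} [Fintype V] {n : ℕ}

open scoped Classical in
/-- The potential edges onto which `φ` maps the edges of `G`. -/
def edgeSupport (G : SimpleGraph V) (φ : V ↪ Fin n) : Finset (EdgeIdx n) :=
  {s | ∃ a b, G.Adj a b ∧ φ a = s.1.1 ∧ φ b = s.1.2}

variable {G : SimpleGraph V}

@[simp] theorem mem_edgeSupport {φ : V ↪ Fin n} {s : EdgeIdx n} :
    s ∈ edgeSupport G φ ↔ ∃ a b, G.Adj a b ∧ φ a = s.1.1 ∧ φ b = s.1.2 := by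
  simp [edgeSupport]

theorem forall_mem_edgeSupport_iff {φ : V ↪ Fin n} {y : EdgeIdx n → Bool} :
    (∀ s ∈ edgeSupport G φ, y s = true) ↔ ∀ a b, G.Adj a b → yAdj y (φ a) (φ b) = true := by
  constructor
  · intro h a b hab
    rcases lt_or_gt_of_ne (φ.injective.ne hab.ne) with hlt | hgt
    · rw [yAdj, dif_pos hlt]
      exact h _ (mem_edgeSupport.2 ⟨a, b, hab, rfl, rfl⟩)
    · rw [yAdj, dif_neg (lt_asymm hgt), dif_pos hgt]
      exact h _ (mem_edgeSupport.2 ⟨b, a, hab.symm, rfl, rfl⟩)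
  · intro h s hs
    obtain ⟨a, b, hab, ha, hb⟩ := mem_edgeSupport.1 hs
    have hadj := h a b hab
    rwa [ha, hb, yAdj, dif_pos (show s.1.1 < s.1.2 from s.2)] at hadj

variable (G)

theorem homCount_eq_sum_monomial (y : EdgeIdx n → Bool) :
    (homCount G y : ℝ) = ∑ φ : V ↪ Fin n, BoolCube.monomial (edgeSupport G φ) y := by
  classical
  have e : {φ : V → Fin n //
      Function.Injective φ ∧ ∀ a b, G.Adj a b → yAdj y (φ a) (φ b) = true} ≃
      {φ : V ↪ Fin n // ∀ s ∈ edgeSupport G φ, y s = true} :=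
    { toFun := fun φ => ⟨⟨φ.1, φ.2.1⟩, forall_mem_edgeSupport_iff.2 φ.2.2⟩
      invFun := fun φ => ⟨φ.1, φ.1.injective, forall_mem_edgeSupport_iff.1 φ.2⟩
      left_inv := fun _ => rfl
      right_inv := fun _ => rfl }
  rw [homCount, Nat.card_congr e, Nat.card_eq_fintype_card, Fintype.card_subtype,
    Finset.card_filter, Nat.cast_sum]
  refine Finset.sum_congr rfl fun φ _ => ?_
  rw [BoolCube.monomial_eq_ite]
  split_ifs <;> simp

theorem card_edgeSupport (φ : V ↪ Fin n) : #(edgeSupport G φ) = eCount G := by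
  classical
  have himage : (edgeSupport G φ).image EdgeIdx.toSym2 = G.edgeFinset.map φ.sym2Map := by
    ext e
    simp only [Finset.mem_image, mem_edgeSupport, Finset.mem_map, SimpleGraph.mem_edgeFinset]
    constructor
    · rintro ⟨s, ⟨a, b, hab, ha, hb⟩, rfl⟩
      exact ⟨s(a, b), hab, by simp [EdgeIdx.toSym2, ha, hb]⟩
    · rintro ⟨e, he, rfl⟩
      induction e using Sym2.ind with
      | _ a b =>
        have hab : G.Adj a b := he
        rcases lt_or_gt_of_ne (φ.injective.ne hab.ne) with h | h
        · exact ⟨⟨(φ a, φ b), h⟩, ⟨a, b, hab, rfl, rfl⟩, rfl⟩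
        · exact ⟨⟨(φ b, φ a), h⟩, ⟨b, a, hab.symm, rfl, rfl⟩, Sym2.eq_swap⟩
  rw [← Finset.card_image_of_injective _ EdgeIdx.toSym2_injective, himage, Finset.card_map,
    eCount, Nat.card_eq_fintype_card, SimpleGraph.edgeFinset_card]

theorem card_filter_mem_edgeSupport (s : EdgeIdx n) :
    #{φ : V ↪ Fin n | s ∈ edgeSupport G φ} =
      2 * eCount G * (n - 2).descFactorial (Fintype.card V - 2) := by
  classical
  have hdarts : ({φ : V ↪ Fin n | s ∈ edgeSupport G φ} : Finset _) =
      (univ : Finset G.Dart).biUnion fun d => {φ | φ d.fst = s.1.1 ∧ φ d.snd = s.1.2} := by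
    ext φ
    simp only [Finset.mem_filter, Finset.mem_univ, true_and, mem_edgeSupport, Finset.mem_biUnion]
    exact ⟨fun ⟨a, b, hab, h⟩ => ⟨⟨(a, b), hab⟩, h⟩, fun ⟨d, h⟩ => ⟨d.fst, d.snd, d.adj, h⟩⟩
  rw [hdarts, Finset.card_biUnion]
  · rw [Finset.sum_congr rfl fun d _ => card_embedding_pair d.adj.ne (ne_of_lt s.2),
      Finset.sum_const, Finset.card_univ, SimpleGraph.dart_card_eq_twice_card_edges, smul_eq_mul,
      eCount, Nat.card_eq_fintype_card, SimpleGraph.edgeFinset_card, Fintype.card_fin]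
  · intro d _ d' _ hne
    refine Finset.disjoint_left.2 fun φ h h' => hne ?_
    simp only [Finset.mem_filter, Finset.mem_univ, true_and] at h h'
    ext
    · exact φ.injective (h.1.trans h'.1.symm)
    · exact φ.injective (h.2.trans h'.2.symm)

theorem card_filter_mem_edgeSupport_pair_le {s t : EdgeIdx n} (hst : s ≠ t) :
    #{φ : V ↪ Fin n | s ∈ edgeSupport G φ ∧ t ∈ edgeSupport G φ} ≤
      Fintype.card V ^ 3 * n ^ (Fintype.card V - 3) := by
  classical
  obtain ⟨w, hw, hw1, hw2⟩ := EdgeIdx.exists_endpoint_ne hst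
  set T : Finset (V × V × V) := {x | x.1 ≠ x.2.1 ∧ x.1 ≠ x.2.2 ∧ x.2.1 ≠ x.2.2} with hT
  have hsub : ({φ : V ↪ Fin n | s ∈ edgeSupport G φ ∧ t ∈ edgeSupport G φ} : Finset _) ⊆
      T.biUnion fun x => {φ | φ x.1 = s.1.1 ∧ φ x.2.1 = s.1.2 ∧ φ x.2.2 = w} := by
    intro φ hφ
    simp only [Finset.mem_filter, Finset.mem_univ, true_and, mem_edgeSupport] at hφ
    obtain ⟨⟨a, b, hab, ha, hb⟩, c, d, -, hc, hd⟩ := hφ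
    obtain ⟨e, he⟩ : ∃ e, φ e = w := hw.elim (fun h => ⟨c, hc.trans h.symm⟩)
      fun h => ⟨d, hd.trans h.symm⟩
    simp only [hT, Finset.mem_biUnion, Finset.mem_filter, Finset.mem_univ, true_and, Prod.exists]
    refine ⟨a, b, e, ⟨hab.ne, ?_, ?_⟩, ha, hb, he⟩
    · rintro rfl
      exact hw1 (he.symm.trans ha)
    · rintro rfl
      exact hw2 (he.symm.trans hb)
  have hcard : #T ≤ Fintype.card V ^ 3 := by
    simpa only [Fintype.card_prod, pow_three] using Finset.card_le_univ T
  refine (Finset.card_le_card hsub).trans ((Finset.card_biUnion_le_card_mul _ _ _ ?_).trans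
    (Nat.mul_le_mul_right _ hcard))
  intro x hx
  simp only [hT, Finset.mem_filter, Finset.mem_univ, true_and] at hx
  simpa only [Fintype.card_fin] using card_embedding_triple_le hx.1 hx.2.1 hx.2.2 s.1.1 s.1.2 w

end EdgeSupport
theorem eCount_le_choose_two {V : Type} [Fintype V] (G : SimpleGraph V) :
    eCount G ≤ (Fintype.card V).choose 2 := by
  classical
  rw [eCount, Nat.card_eq_fintype_card, ← SimpleGraph.edgeFinset_card]
  exact SimpleGraph.card_edgeFinset_le_card_choose_two

theorem two_le_card_of_one_le_eCount {V : Type} [Fintype V] {G : SimpleGraph V}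
    (hG : 1 ≤ eCount G) : 2 ≤ Fintype.card V := by
  by_contra! hV
  have hle := eCount_le_choose_two G
  rw [Nat.choose_eq_zero_of_lt hV] at hle
  omega

theorem three_le_card_of_two_le_eCount {V : Type} [Fintype V] {G : SimpleGraph V}
    (hG : 2 ≤ eCount G) : 3 ≤ Fintype.card V := by
  by_contra! hV
  have hle := (eCount_le_choose_two G).trans (Nat.choose_le_choose 2 (Nat.le_of_lt_succ hV))
  rw [Nat.choose_self] at hle
  omega

section Scaling

variable {n : ℕ}

theorem zpow_two_sub (n w : ℕ) : (n : ℝ) ^ ((2 : ℤ) - (w + 2 : ℕ)) = ((n : ℝ) ^ w)⁻¹ := by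
  rw [Nat.cast_add, Nat.cast_ofNat, sub_add_cancel_right, zpow_neg, zpow_natCast]

theorem descFactorial_div_pow_le_one (n w : ℕ) :
    ((n - 2).descFactorial w : ℝ) / (n : ℝ) ^ w ≤ 1 :=
  div_le_one_of_le₀
    (mod_cast (Nat.descFactorial_le_pow _ _).trans (Nat.pow_le_pow_left (Nat.sub_le n 2) w))
    (by positivity)

theorem one_sub_descFactorial_div_pow_le {w : ℕ} (hn : 2 ≤ n) (hwn : w + 1 ≤ n) :
    1 - ((n - 2).descFactorial w : ℝ) / (n : ℝ) ^ w ≤ w * ((w + 1) / n) := by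
  have hn0 : (0 : ℝ) < n := mod_cast zero_lt_two.trans_le hn
  have hlow : ((n : ℝ) - (w + 1)) ^ w ≤ ((n - 2).descFactorial w : ℝ) := by
    have hnat := Nat.pow_sub_le_descFactorial (n - 2) w
    rw [show n - 2 + 1 - w = n - (w + 1) by omega] at hnat
    rw [← Nat.cast_succ, ← Nat.cast_sub hwn]
    exact_mod_cast hnat
  have hratio : ((w : ℝ) + 1) / n ≤ 1 := div_le_one_of_le₀ (mod_cast hwn) hn0.le
  have hbernoulli : 1 + w * -((w + 1 : ℝ) / n) ≤ ((n - 2).descFactorial w : ℝ) / (n : ℝ) ^ w := by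
    calc 1 + w * -((w + 1 : ℝ) / n) ≤ (1 + -((w + 1) / n)) ^ w :=
          one_add_mul_le_pow (by linarith) w
      _ = ((n : ℝ) - (w + 1)) ^ w / (n : ℝ) ^ w := by
          rw [← div_pow, sub_div, div_self hn0.ne', sub_eq_add_neg]
      _ ≤ _ := div_le_div_of_nonneg_right hlow (by positivity)
  linarith

theorem abs_zpow_mul_descFactorial_sub_one_le {u : ℕ} (hn : 2 ≤ n) (hu : 2 ≤ u) :
    |(n : ℝ) ^ ((2 : ℤ) - u) * ((n - 2).descFactorial (u - 2) : ℝ) - 1| ≤ (u : ℝ) ^ 2 / n := by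
  obtain ⟨w, rfl⟩ := Nat.exists_eq_add_of_le' hu
  have hn0 : (0 : ℝ) < n := mod_cast zero_lt_two.trans_le hn
  rw [zpow_two_sub, Nat.add_sub_cancel, inv_mul_eq_div, abs_sub_comm,
    abs_of_nonneg (sub_nonneg.2 (descFactorial_div_pow_le_one n w))]
  rcases le_or_gt (w + 1) n with hwn | hwn
  · refine (one_sub_descFactorial_div_pow_le hn hwn).trans ?_
    rw [← mul_div_assoc]
    gcongr
    push_cast
    nlinarith [w.cast_nonneg (α := ℝ)]
  · have hone : (1 : ℝ) ≤ ((w + 2 : ℕ) : ℝ) ^ 2 / n := by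
      rw [one_le_div hn0]
      exact_mod_cast (show n ≤ (w + 2) ^ 2 by nlinarith)
    have : 0 ≤ ((n - 2).descFactorial w : ℝ) / (n : ℝ) ^ w := by positivity
    linarith

theorem card_filter_mem_edgeSupport_pair_mul_zpow_le {V : Type} [Fintype V] (G : SimpleGraph V)
    {s t : EdgeIdx n} (hst : s ≠ t) :
    (#{φ : V ↪ Fin n | s ∈ edgeSupport G φ ∧ t ∈ edgeSupport G φ} : ℝ) *
      (n : ℝ) ^ ((2 : ℤ) - Fintype.card V) ≤ (Fintype.card V : ℝ) ^ 3 / n := by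
  have hn : (0 : ℝ) < n := mod_cast s.1.1.pos
  rcases le_or_gt 2 (eCount G) with hG | hG
  · have hV := three_le_card_of_two_le_eCount hG
    have hcard : (#{φ : V ↪ Fin n | s ∈ edgeSupport G φ ∧ t ∈ edgeSupport G φ} : ℝ) ≤
        (Fintype.card V : ℝ) ^ 3 * (n : ℝ) ^ ((Fintype.card V : ℤ) - 3) := by
      rw [show (Fintype.card V : ℤ) - 3 = (Fintype.card V - 3 : ℕ) by omega, zpow_natCast]
      exact_mod_cast card_filter_mem_edgeSupport_pair_le G hst
    calc _ ≤ (Fintype.card V : ℝ) ^ 3 * (n : ℝ) ^ ((Fintype.card V : ℤ) - 3) *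
          (n : ℝ) ^ ((2 : ℤ) - Fintype.card V) := by gcongr
      _ = (Fintype.card V : ℝ) ^ 3 / n := by
          rw [mul_assoc, ← zpow_add₀ hn.ne', sub_add_sub_cancel',
            show (2 : ℤ) - 3 = -1 from rfl, zpow_neg_one, div_eq_mul_inv]
  · rw [Finset.filter_false_of_mem fun φ _ hφ => ?_]
    · simp only [Finset.card_empty, Nat.cast_zero, zero_mul]
      positivity
    · rw [← card_edgeSupport G φ] at hG
      exact hG.not_ge (Finset.one_lt_card.2 ⟨s, hφ.1, t, hφ.2, hst⟩)

end Scaling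

/-! # The exponential random graph model as a Gibbs measure -/

section ERGM

variable {k : ℕ} (β : Fin (k + 1) → ℝ) (v : Fin (k + 1) → ℕ)
  (H : ∀ j : Fin (k + 1), SimpleGraph (Fin (v j)))

/-- The exponent of the ERGM weight, with one monomial for each injective map of the vertices of
some `H j` into `Fin n`. -/
def ergmHam (n : ℕ) : BoolCube.PolyHam (EdgeIdx n) (Σ j, Fin (v j) ↪ Fin n) where
  coef a := β a.1 * (n : ℝ) ^ ((2 : ℤ) - (v a.1 : ℤ))
  supp a := edgeSupport (H a.1) a.2

theorem gibbs_ergmHam (n : ℕ) : (ergmHam β v H n).gibbs = ergmProb β v H n := by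
  have hham : ∀ y, Real.exp ((ergmHam β v H n).ham y) = ergmWeight β v H n y := by
    intro y
    simp only [ergmWeight, BoolCube.PolyHam.ham, ergmHam, Fintype.sum_sigma,
      homCount_eq_sum_monomial, Finset.mul_sum]
  funext y
  simp only [BoolCube.PolyHam.gibbs, hham, ergmProb, ergmZ]

variable {β v H} {n : ℕ}

theorem card_supp_ergmHam (a : Σ j, Fin (v j) ↪ Fin n) :
    #((ergmHam β v H n).supp a) = eCount (H a.1) :=
  card_edgeSupport _ _

theorem sum_filter_supp_ergmHam (q : Finset (EdgeIdx n) → Prop) [DecidablePred q]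
    (g : Fin (k + 1) → ℝ) :
    ∑ a with q ((ergmHam β v H n).supp a), (ergmHam β v H n).coef a * g a.1 =
      ∑ j, #{φ : Fin (v j) ↪ Fin n | q (edgeSupport (H j) φ)} *
        (β j * (n : ℝ) ^ ((2 : ℤ) - v j) * g j) := by
  rw [Finset.sum_filter, Fintype.sum_sigma]
  refine Finset.sum_congr rfl fun j _ => ?_
  change ∑ φ, (if q (edgeSupport (H j) φ) then β j * (n : ℝ) ^ ((2 : ℤ) - v j) * g j else 0) = _
  rw [← Finset.sum_filter, Finset.sum_const, nsmul_eq_mul]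

theorem sum_terms_ergmHam (s : EdgeIdx n) (g : Fin (k + 1) → ℝ) :
    ∑ a ∈ (ergmHam β v H n).terms s, (ergmHam β v H n).coef a * g a.1 =
      2 * ∑ j, β j * eCount (H j) * g j *
        ((n : ℝ) ^ ((2 : ℤ) - v j) * ((n - 2).descFactorial (v j - 2) : ℝ)) := by
  refine (sum_filter_supp_ergmHam (s ∈ ·) g).trans ?_
  rw [Finset.mul_sum]
  refine Finset.sum_congr rfl fun j _ => ?_
  rw [card_filter_mem_edgeSupport, Fintype.card_fin]
  push_cast
  ring

theorem abs_sum_terms_ergmHam_sub_le (s : EdgeIdx n) {g : Fin (k + 1) → ℝ}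
    (hg : ∀ j, |g j| ≤ eCount (H j) + 1) :
    |∑ a ∈ (ergmHam β v H n).terms s, (ergmHam β v H n).coef a * g a.1 -
        2 * ∑ j, β j * eCount (H j) * g j| ≤
      (2 * ∑ j, |β j| * ((eCount (H j) : ℝ) + 1) ^ 2 * (v j : ℝ) ^ 2) / n := by
  rw [sum_terms_ergmHam, ← mul_sub, ← Finset.sum_sub_distrib, mul_div_assoc, abs_mul, abs_two,
    Finset.sum_div]
  refine mul_le_mul_of_nonneg_left ((Finset.abs_sum_le_sum_abs _ _).trans
    (Finset.sum_le_sum fun j _ => ?_)) zero_le_two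
  rcases Nat.eq_zero_or_pos (eCount (H j)) with he | he
  · rw [he, Nat.cast_zero, mul_zero, zero_mul, zero_mul, sub_zero, abs_zero]
    positivity
  · have hv : 2 ≤ v j := by simpa only [Fintype.card_fin] using two_le_card_of_one_le_eCount he
    have hratio := abs_zpow_mul_descFactorial_sub_one_le s.two_le hv
    rw [← mul_sub_one, abs_mul, abs_mul, abs_mul, Nat.abs_cast]
    calc |β j| * eCount (H j) * |g j| *
          |(n : ℝ) ^ ((2 : ℤ) - v j) * ((n - 2).descFactorial (v j - 2) : ℝ) - 1|
        ≤ |β j| * (eCount (H j) + 1) * (eCount (H j) + 1) * ((v j : ℝ) ^ 2 / n) := by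
          gcongr
          exacts [le_add_of_nonneg_right zero_le_one, hg j]
      _ = _ := by ring

theorem abs_mean_locField_ergmHam_sub_le (s : EdgeIdx n) {q : ℝ} (hq : |q| ≤ 1) :
    |FiniteProb.mean (BoolCube.prodBernoulli q) ((ergmHam β v H n).locField s) -
        2 * PhiFn β v H q| ≤
      (2 * ∑ j, |β j| * ((eCount (H j) : ℝ) + 1) ^ 2 * (v j : ℝ) ^ 2) / n := by
  simp only [BoolCube.PolyHam.mean_prodBernoulli_locField, card_supp_ergmHam]
  refine abs_sum_terms_ergmHam_sub_le s (g := fun j => q ^ (eCount (H j) - 1)) fun j => ?_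
  rw [abs_pow]
  exact (pow_le_one₀ (abs_nonneg q) hq).trans (le_add_of_nonneg_left (Nat.cast_nonneg _))

theorem abs_mean_locSlope_ergmHam_sub_le (s : EdgeIdx n) {q : ℝ} (hq : |q| ≤ 1) :
    |FiniteProb.mean (BoolCube.prodBernoulli q) ((ergmHam β v H n).locSlope s) -
        ergmSlope β v H q| ≤
      (2 * ∑ j, |β j| * ((eCount (H j) : ℝ) + 1) ^ 2 * (v j : ℝ) ^ 2) / n := by
  simp only [BoolCube.PolyHam.mean_prodBernoulli_locSlope, card_supp_ergmHam]
  refine abs_sum_terms_ergmHam_sub_le s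
    (g := fun j => (eCount (H j) - 1 : ℕ) * q ^ (eCount (H j) - 2)) fun j => ?_
  rw [abs_mul, Nat.abs_cast, abs_pow]
  exact (mul_le_of_le_one_right (Nat.cast_nonneg _) (pow_le_one₀ (abs_nonneg q) hq)).trans
    (mod_cast (Nat.sub_le _ 1).trans (Nat.le_succ _))

theorem sum_terms_ergmHam_pair_le {s t : EdgeIdx n} (hst : s ≠ t) :
    ∑ a ∈ (ergmHam β v H n).terms s with t ∈ (ergmHam β v H n).supp a,
      (ergmHam β v H n).coef a ≤ (∑ j, |β j| * (v j : ℝ) ^ 3) / n := by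
  have hsum := sum_filter_supp_ergmHam (β := β) (v := v) (H := H)
    (fun T => s ∈ T ∧ t ∈ T) fun _ => 1
  simp only [mul_one] at hsum
  rw [BoolCube.PolyHam.terms, Finset.filter_filter, hsum, Finset.sum_div]
  refine Finset.sum_le_sum fun j _ => ?_
  have hpair := card_filter_mem_edgeSupport_pair_mul_zpow_le (H j) hst
  rw [Fintype.card_fin] at hpair
  rw [mul_left_comm, mul_div_assoc]
  exact mul_le_mul (le_abs_self _) hpair (by positivity) (abs_nonneg _)

theorem exists_isNear_ergmHam (hβ : ∀ j, 2 ≤ eCount (H j) → 0 ≤ β j) (K₀ : ℝ) :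
    ∃ K, K₀ ≤ K ∧ ∀ n, 2 ≤ n →
      (ergmHam β v H n).IsNear (fun a => 2 * PhiFn β v H a) (ergmSlope β v H) K n := by
  set K₁ : ℝ := 2 * ∑ j, |β j| * ((eCount (H j) : ℝ) + 1) ^ 2 * (v j : ℝ) ^ 2
  set K₂ : ℝ := ∑ j, |β j| * (v j : ℝ) ^ 3
  set K₃ : ℝ := ∑ j, (eCount (H j) : ℝ)
  have hK₁_le : K₁ ≤ |K₀| + K₁ + K₂ + K₃ := by
    linarith [abs_nonneg K₀, show 0 ≤ K₂ by positivity, show 0 ≤ K₃ by positivity]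
  have hK₂_le : K₂ ≤ |K₀| + K₁ + K₂ + K₃ := by
    linarith [abs_nonneg K₀, show 0 ≤ K₁ by positivity, show 0 ≤ K₃ by positivity]
  have hK₃_le : K₃ ≤ |K₀| + K₁ + K₂ + K₃ := by
    linarith [abs_nonneg K₀, show 0 ≤ K₁ by positivity, show 0 ≤ K₂ by positivity]
  have habs : ∀ q ∈ Set.Icc (0 : ℝ) 1, |q| ≤ 1 := fun q hq => (abs_of_nonneg hq.1).trans_le hq.2
  refine ⟨|K₀| + K₁ + K₂ + K₃, ?_, fun n hn => ?_⟩
  · linarith [le_abs_self K₀, show 0 ≤ K₁ by positivity, show 0 ≤ K₂ by positivity,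
      show 0 ≤ K₃ by positivity]
  have hn2 : (2 : ℝ) ≤ n := mod_cast hn
  exact {
    two_le := hn
    isFerromagnetic := fun a ha => mul_nonneg (hβ a.1 (card_supp_ergmHam a ▸ ha)) (by positivity)
    field_near := fun s q hq => (abs_mean_locField_ergmHam_sub_le s (habs q hq)).trans (by gcongr)
    slope_near := fun s q hq => (abs_mean_locSlope_ergmHam_sub_le s (habs q hq)).trans (by gcongr)
    pair_le := fun s t hst => (sum_terms_ergmHam_pair_le hst).trans (by gcongr)
    card_supp_le := fun a => by
      rw [card_supp_ergmHam]
      exact (Finset.single_le_sum (f := fun j => (eCount (H j) : ℝ))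
        (fun j _ => Nat.cast_nonneg _) (Finset.mem_univ a.1)).trans hK₃_le
    card_le := by rw [EdgeIdx.cast_card]; nlinarith
    le_card := by rw [EdgeIdx.cast_card]; nlinarith }

theorem sigmaSq_mul {p : ℝ} (hsub : p * (1 - p) * ergmSlope β v H p ≠ 1) (n : ℕ) :
    sigmaSq β v H p n * (1 - p * (1 - p) * ergmSlope β v H p) =
      Fintype.card (EdgeIdx n) * (p * (1 - p)) := by
  have hdenom : 2 * p * (1 - p) * deriv (PhiFn β v H) p = p * (1 - p) * ergmSlope β v H p := by
    rw [← two_mul_deriv_PhiFn]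
    ring
  rw [sigmaSq, hdenom, div_mul_cancel₀ _ (sub_ne_zero.2 hsub.symm), EdgeIdx.cast_card, mul_assoc]

theorem Wn_eq_stdSize (p : ℝ) : Wn β v H p n = (ergmHam β v H n).stdSize √(sigmaSq β v H p n) := by
  funext y
  rw [BoolCube.PolyHam.stdSize, gibbs_ergmHam]
  rfl

end ERGM

theorem abs_mass_sub_gaussCdf_le_one {Ω : Type*} [Fintype Ω] {μ : Ω → ℝ}
    (hμ : μ ∈ stdSimplex ℝ Ω) (B : Set Ω) (x : ℝ) : |FiniteProb.mass μ B - gaussCdf x| ≤ 1 := by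
  have hmass := FiniteProb.mass_le_one hμ B
  have hmass' := FiniteProb.mass_nonneg hμ.1 B
  have hcdf := gaussCdf_nonneg x
  have hcdf' := gaussCdf_le_one x
  exact abs_sub_le_iff.2 ⟨by linarith, by linarith⟩

theorem one_le_rpow_mul_rpow_neg {x y r : ℝ} (hx : 0 < x) (hxy : x ≤ y) (hr : 0 ≤ r) :
    1 ≤ y ^ r * x ^ (-r) := by
  rw [Real.rpow_neg hx.le, ← div_eq_mul_inv, one_le_div (Real.rpow_pos_of_pos hx r)]
  exact Real.rpow_le_rpow hx.le hxy hr

theorem gaussCdf_eq_toReal (x : ℝ) : gaussCdf x = (gaussianReal 0 1 (Set.Iic x)).toReal := by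
  rw [gaussCdf, cdf_eq_real, measureReal_def]

theorem sigmaSq_pos {k : ℕ} {β : Fin (k + 1) → ℝ} {v : Fin (k + 1) → ℕ}
    {H : ∀ j, SimpleGraph (Fin (v j))} {p : ℝ} (hp : p ∈ Set.Ioo 0 1)
    (hsub : p * (1 - p) * ergmSlope β v H p < 1) {n : ℕ} (hn : 2 ≤ n) :
    0 < sigmaSq β v H p n := by
  have hn2 : (2 : ℝ) ≤ n := mod_cast hn
  refine pos_of_mul_pos_left ?_ (sub_pos.2 hsub).le
  rw [sigmaSq_mul hsub.ne, EdgeIdx.cast_card]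
  exact mul_pos (by nlinarith) (mul_pos hp.1 (sub_pos.2 hp.2))

theorem ergm_kolmogorov_clt_general {k : ℕ} (β : Fin (k + 1) → ℝ) (v : Fin (k + 1) → ℕ)
    (H : ∀ j : Fin (k + 1), SimpleGraph (Fin (v j)))
    (hβ : ∀ j, 2 ≤ eCount (H j) → 0 ≤ β j)
    (p : ℝ) (hp : p ∈ Set.Ioo (0 : ℝ) 1) (hfix : phiFn β v H p = p)
    (huniq : ∀ q ∈ Set.Ioo (0 : ℝ) 1, phiFn β v H q = q → q = p)
    (hsub : deriv (phiFn β v H) p < 1) :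
    ∃ C : ℝ, 0 < C ∧ ∀ n : ℕ, 2 ≤ n → ∀ x : ℝ,
      |(∑ y : EdgeIdx n → Bool,
            Set.indicator {y' : EdgeIdx n → Bool | Wn β v H p n y' ≤ x} (ergmProb β v H n) y) -
          ((gaussianReal 0 1) (Set.Iic x)).toReal| ≤ C * (n : ℝ) ^ (-(1 / 4 : ℝ)) := by
  obtain ⟨ρ, hmean⟩ := exists_isMeanField hβ hp hfix huniq hsub
  obtain ⟨K, hK, hnear⟩ := exists_isNear_ergmHam hβ (ergmBound β v H)
  obtain ⟨C, n₀, hC, hlarge⟩ := (hmean.mono hK).exists_kolmogorov_bound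
  refine ⟨max C ((n₀ : ℝ) ^ (1 / 4 : ℝ)), lt_max_of_lt_left hC, fun n hn x => ?_⟩
  have hn_pos : (0 : ℝ) < n := mod_cast zero_lt_two.trans_le hn
  have hvar := sigmaSq_pos hp hmean.subcritical hn
  rw [FiniteProb.sum_indicator_eq_mass, Wn_eq_stdSize, ← gibbs_ergmHam, ← gaussCdf_eq_toReal]
  rcases le_total n₀ n with h | h
  · refine (hlarge n h _ (hnear n hn) _ (Real.sqrt_pos.2 hvar) ?_ x).trans
      (mul_le_mul_of_nonneg_right (le_max_left _ _) (by positivity))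
    rw [Real.sq_sqrt hvar.le, sigmaSq_mul hmean.subcritical.ne]
  · exact (abs_mass_sub_gaussCdf_le_one (BoolCube.PolyHam.gibbs_mem_stdSimplex _) _ x).trans
      ((one_le_rpow_mul_rpow_neg hn_pos (mod_cast h) (by norm_num)).trans
        (mul_le_mul_of_nonneg_right (le_max_right _ _) (by positivity)))

/-- **Theorem 3.2 (Kolmogorov bound)**: CLT with rate `n^{-1/4}`, in the Kolmogorov
distance, for the standardized number of edges of an ERGM in the subcritical region. -/
theorem ergm_kolmogorov_clt {k : ℕ} (β : Fin (k + 1) → ℝ) (v : Fin (k + 1) → ℕ)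
    (H : ∀ j : Fin (k + 1), SimpleGraph (Fin (v j)))
    -- `β₂, …, β_k > 0`
    (hβ : ∀ j : Fin (k + 1), j ≠ 0 → 0 < β j)
    -- `H₁` is a single edge
    (hv0 : v 0 = 2) (he0 : eCount (H 0) = 1)
    -- the graphs have no isolated vertices
    (hnoiso : ∀ (j : Fin (k + 1)) (a : Fin (v j)), ∃ b, (H j).Adj a b)
    -- `H₂, …, H_k` have at least two edges
    (hedges : ∀ j : Fin (k + 1), j ≠ 0 → 2 ≤ eCount (H j))
    -- the subcritical region: unique fixed point `p ∈ (0,1)` with `φ_β'(p) < 1`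
    (p : ℝ) (hp : p ∈ Set.Ioo (0 : ℝ) 1)
    (hfix : phiFn β v H p = p)
    (huniq : ∀ q ∈ Set.Ioo (0 : ℝ) 1, phiFn β v H q = q → q = p)
    (hsub : deriv (phiFn β v H) p < 1) :
    ∃ C : ℝ, 0 < C ∧ ∀ n : ℕ, 2 ≤ n → ∀ x : ℝ,
      |(∑ y : EdgeIdx n → Bool,
            Set.indicator {y' : EdgeIdx n → Bool | Wn β v H p n y' ≤ x}
              (ergmProb β v H n) y) -
          ((gaussianReal 0 1) (Set.Iic x)).toReal| ≤ C * (n : ℝ) ^ (-(1 / 4 : ℝ)) := by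
  refine ergm_kolmogorov_clt_general β v H (fun j hj => (hβ j ?_).le) p hp hfix huniq hsub
  rintro rfl
  omega
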